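/- Let N ≥ 3, let K ⊂ ℝ^N be a nonempty finite set of points, let p > 0, let γ ∈ (0,1), and let φ : (0,∞) → (0,∞) be locally γ-Hölder continuous, monotone on [r₁,∞) for some r₁ > 0, and satisfying ∫₁^∞ r·φ(r) dr < ∞ and ∫₀¹ r^{(1+p)(N−2)+1} φ(r) dr < ∞. Then there exists a twice continuously differentiable function ũ : ℝ^N \ K → ℝ with ũ > 0, satisfying −Δũ(x) = φ(dist(x,K)) ũ(x)^{−p} for all x ∈ ℝ^N \ K and ũ(x) → 0 as |x| → ∞, which is minimal: for every C² positive solution u of the inequality −Δu ≥ φ(dist(x,K)) u^{−p} on ℝ^N \ K one has ũ ≤ u on ℝ^N \ K. Moreover, ũ extends to a continuous positive function on all of ℝ^N if and only if ∫₀¹ r·φ(r) dr < ∞. -/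

import Mathlib

open Metric Set MeasureTheory Filter

noncomputable def laplacian {N : ℕ} (u : EuclideanSpace ℝ (Fin N) → ℝ)
    (x : EuclideanSpace ℝ (Fin N)) : ℝ :=
  ∑ i, iteratedFDeriv ℝ 2 u x ![EuclideanSpace.single i 1, EuclideanSpace.single i 1]

/-!
The minimal solution is the increasing limit of solutions `w n` of regularized problems, in which
`φ` is cut off near `0` and `∞` and `u ^ (-p)` is replaced by `(u⁺ + 1 / (n + 1)) ^ (-p)`. The
right-hand side decreases in `u`, so by the comparison principle the `w n` increase and stay below
every positive supersolution off `K`; the finite set `K` is invisible to the maximum principle for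
functions bounded above, because the barriers `‖x - k‖ ^ (-1 / 2)` penalize it. The sum over
`k ∈ K` of the radial profiles `r ^ (2 - N) + U + ((1 + p) U) ^ (1 / (1 + p))`, where `U` is the
radial Newtonian potential of `φ` damped near `0`, is a supersolution that tends to `0` at infinity;
it keeps the limit finite and forces its decay.

Poisson's equation `-Δw = f` is used in the mean value form `w = 𝓜[r] w + 𝓠[r] f`, with a smooth
solid mean `𝓜[r]` and a truncated Green potential `𝓠[r]`. This identity passes to pointwise
monotone limits; it makes the limit locally Lipschitz, hence the source Hölder continuous, hence
the limit `C²`.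

If the solution extends continuously to `k ∈ K`, then `-Δw ≥ c φ (‖x - k‖)` near `k`, and comparison
with the radial potentials of truncations of `φ` bounds `∫ r φ` near `0`. Conversely, if
`∫₀¹ r φ < ∞`, there is a bounded supersolution and the Green terms `𝓠[r]` tend to `0` with `r`
uniformly in `n`, so the `w n` are equicontinuous at the points of `K`.
-/

section

open scoped Topology ContDiff Laplacian Manifold NNReal

section UnitBallKernel

variable {E F : Type*} [NormedAddCommGroup E] [NormedAddCommGroup F]

/-- A continuous kernel on `E` that vanishes outside the open unit ball. -/
structure IsUnitBallKernel (κ : E → F) : Prop where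
  continuous : Continuous κ
  eq_zero : ∀ z, 1 ≤ ‖z‖ → κ z = 0

namespace IsUnitBallKernel

variable {κ : E → F}

theorem eq_zero_of_notMem_closedBall (hκ : IsUnitBallKernel κ) {z : E}
    (hz : z ∉ closedBall (0 : E) 1) : κ z = 0 :=
  hκ.eq_zero z (not_le.1 (mt mem_closedBall_zero_iff.2 hz)).le

theorem mul {κ f : E → ℝ} (hκ : IsUnitBallKernel κ) (hf : Continuous f) :
    IsUnitBallKernel fun z => κ z * f z :=
  ⟨hκ.continuous.mul hf, fun z hz => by simp [hκ.eq_zero z hz]⟩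

theorem smul [NormedSpace ℝ F] {f : E → ℝ} (hκ : IsUnitBallKernel κ) (hf : Continuous f) :
    IsUnitBallKernel fun z => f z • κ z :=
  ⟨hf.smul hκ.continuous, fun z hz => by simp [hκ.eq_zero z hz]⟩

theorem hasCompactSupport [ProperSpace E] (hκ : IsUnitBallKernel κ) : HasCompactSupport κ :=
  HasCompactSupport.intro (isCompact_closedBall 0 1) fun _ => hκ.eq_zero_of_notMem_closedBall

theorem integrable [NormedSpace ℝ E] [FiniteDimensional ℝ E] [MeasurableSpace E] [BorelSpace E]
    {μ : Measure E} [IsFiniteMeasureOnCompacts μ] (hκ : IsUnitBallKernel κ) : Integrable κ μ :=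
  have := FiniteDimensional.proper_real E
  hκ.continuous.integrable_of_hasCompactSupport hκ.hasCompactSupport

end IsUnitBallKernel

theorem continuous_integral_of_isUnitBallKernel [ProperSpace E] [MeasurableSpace E] [BorelSpace E]
    {μ : Measure E} [IsFiniteMeasureOnCompacts μ] [NormedSpace ℝ F] {X : Type*}
    [TopologicalSpace X] {k : X → E → F} (hk : Continuous (Function.uncurry k))
    (h0 : ∀ x, IsUnitBallKernel (k x)) : Continuous fun x => ∫ z, k x z ∂μ := by
  rw [← continuousOn_univ]
  exact continuousOn_integral_of_compact_support (isCompact_closedBall (0 : E) 1) hk.continuousOn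
    fun x _ _ => (h0 x).eq_zero_of_notMem_closedBall

end UnitBallKernel

/-! ### The mean kernel and the Green kernel -/

section Kernels

variable {E : Type*} [NormedAddCommGroup E]

/-- The smooth bump `2 t⁻² exp(-t⁻¹)`, `t = 1 - ‖z‖²`, which is `-2` times the derivative of
`exp(-1 / (1 - s))` at `s = ‖z‖²`. It becomes `meanKernel` after normalization. -/
noncomputable def rawMeanKernel (z : E) : ℝ :=
  2 * (((1 - ‖z‖ ^ 2)⁻¹) ^ 2 * expNegInvGlue (1 - ‖z‖ ^ 2))

theorem rawMeanKernel_nonneg (z : E) : 0 ≤ rawMeanKernel z := by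
  have := expNegInvGlue.nonneg (1 - ‖z‖ ^ 2)
  unfold rawMeanKernel
  positivity

theorem rawMeanKernel_pos {z : E} (hz : ‖z‖ < 1) : 0 < rawMeanKernel z := by
  have h1 : 0 < 1 - ‖z‖ ^ 2 := by nlinarith [norm_nonneg z]
  have := expNegInvGlue.pos_of_pos h1
  unfold rawMeanKernel
  positivity

variable [InnerProductSpace ℝ E]

theorem contDiff_rawMeanKernel {n : ℕ∞} : ContDiff ℝ n (rawMeanKernel : E → ℝ) := by
  have h := (expNegInvGlue.contDiff_polynomial_eval_inv_mul (n := n) (Polynomial.X ^ 2)).comp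
    (contDiff_const.sub (contDiff_norm_sq ℝ) : ContDiff ℝ n fun z : E => 1 - ‖z‖ ^ 2)
  have heq : (rawMeanKernel : E → ℝ) = fun z => 2 * ((Polynomial.X ^ 2 : Polynomial ℝ).eval
      (1 - ‖z‖ ^ 2)⁻¹ * expNegInvGlue (1 - ‖z‖ ^ 2)) := by
    ext z
    simp only [rawMeanKernel, Polynomial.eval_pow, Polynomial.eval_X]
  rw [heq]
  exact contDiff_const.mul h

theorem isUnitBallKernel_rawMeanKernel : IsUnitBallKernel (rawMeanKernel : E → ℝ) where
  continuous := (contDiff_rawMeanKernel (n := 0)).continuous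
  eq_zero z hz := by
    rw [rawMeanKernel, expNegInvGlue.zero_of_nonpos (by nlinarith), mul_zero, mul_zero]

variable [FiniteDimensional ℝ E] [MeasurableSpace E] [BorelSpace E]

theorem integral_rawMeanKernel_pos : 0 < ∫ z : E, rawMeanKernel z :=
  isUnitBallKernel_rawMeanKernel.continuous.integral_pos_of_hasCompactSupport_nonneg_nonzero
    isUnitBallKernel_rawMeanKernel.hasCompactSupport rawMeanKernel_nonneg
    (rawMeanKernel_pos (z := (0 : E)) (by simp)).ne'

/-- A smooth radial probability density supported in the closed unit ball; its dilates are the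
weights of the solid means `𝓜[r]`. -/
noncomputable def meanKernel (z : E) : ℝ := (∫ y : E, rawMeanKernel y)⁻¹ * rawMeanKernel z

/-- The radial primitive of `-meanKernel z • z`; its dilates are the weights of the truncated
potential `𝓠[r]`, the remainder in the mean value formula for `𝓜[r]`. -/
noncomputable def greenKernel (z : E) : ℝ :=
  (∫ y : E, rawMeanKernel y)⁻¹ * expNegInvGlue (1 - ‖z‖ ^ 2)

theorem contDiff_meanKernel {n : ℕ∞} : ContDiff ℝ n (meanKernel : E → ℝ) :=
  contDiff_const.mul contDiff_rawMeanKernel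

theorem contDiff_greenKernel {n : ℕ∞} : ContDiff ℝ n (greenKernel : E → ℝ) :=
  contDiff_const.mul (expNegInvGlue.contDiff.comp (contDiff_const.sub (contDiff_norm_sq ℝ)))

theorem isUnitBallKernel_meanKernel : IsUnitBallKernel (meanKernel : E → ℝ) where
  continuous := (contDiff_meanKernel (n := 0)).continuous
  eq_zero z hz := by rw [meanKernel, isUnitBallKernel_rawMeanKernel.eq_zero z hz, mul_zero]

theorem isUnitBallKernel_greenKernel : IsUnitBallKernel (greenKernel : E → ℝ) where
  continuous := (contDiff_greenKernel (n := 0)).continuous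
  eq_zero z hz := by rw [greenKernel, expNegInvGlue.zero_of_nonpos (by nlinarith), mul_zero]

theorem continuous_meanKernel : Continuous (meanKernel : E → ℝ) :=
  isUnitBallKernel_meanKernel.continuous

theorem continuous_greenKernel : Continuous (greenKernel : E → ℝ) :=
  isUnitBallKernel_greenKernel.continuous

theorem meanKernel_nonneg (z : E) : 0 ≤ meanKernel z :=
  mul_nonneg (inv_nonneg.2 integral_rawMeanKernel_pos.le) (rawMeanKernel_nonneg z)

theorem greenKernel_nonneg (z : E) : 0 ≤ greenKernel z :=
  mul_nonneg (inv_nonneg.2 integral_rawMeanKernel_pos.le) (expNegInvGlue.nonneg _)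

theorem meanKernel_pos {z : E} (hz : ‖z‖ < 1) : 0 < meanKernel z :=
  mul_pos (inv_pos.2 integral_rawMeanKernel_pos) (rawMeanKernel_pos hz)

theorem greenKernel_pos {z : E} (hz : ‖z‖ < 1) : 0 < greenKernel z :=
  mul_pos (inv_pos.2 integral_rawMeanKernel_pos)
    (expNegInvGlue.pos_of_pos (by nlinarith [norm_nonneg z]))

theorem integral_meanKernel : ∫ z : E, meanKernel z = 1 := by
  simp only [meanKernel]
  rw [integral_const_mul, inv_mul_cancel₀ integral_rawMeanKernel_pos.ne']

theorem integral_greenKernel_pos : 0 < ∫ z : E, greenKernel z :=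
  continuous_greenKernel.integral_pos_of_hasCompactSupport_nonneg_nonzero
    isUnitBallKernel_greenKernel.hasCompactSupport greenKernel_nonneg
    (greenKernel_pos (z := (0 : E)) (by simp)).ne'

theorem hasFDerivAt_greenKernel (z : E) :
    HasFDerivAt greenKernel (-(meanKernel z) • innerSL ℝ z) z := by
  have hglue : HasDerivAt expNegInvGlue
      (((1 - ‖z‖ ^ 2)⁻¹) ^ 2 * expNegInvGlue (1 - ‖z‖ ^ 2)) (1 - ‖z‖ ^ 2) := by
    simpa using expNegInvGlue.hasDerivAt_polynomial_eval_inv_mul 1 (1 - ‖z‖ ^ 2)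
  have hsq : HasFDerivAt (fun y : E => 1 - ‖y‖ ^ 2) (-(2 • innerSL ℝ z)) z :=
    (hasStrictFDerivAt_norm_sq z).hasFDerivAt.const_sub 1
  refine ((hglue.comp_hasFDerivAt z hsq).const_mul (∫ y : E, rawMeanKernel y)⁻¹).congr_fderiv ?_
  ext v
  simp only [meanKernel, rawMeanKernel, smul_apply, smul_eq_mul,
    neg_apply, nsmul_eq_mul, Nat.cast_ofNat]
  ring

end Kernels

/-! ### Integration against measures carried by a ball -/

section BallMeasure

variable {E : Type*} [NormedAddCommGroup E] [MeasurableSpace E]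

/-- The translate-and-integrate operator `x ↦ ∫ f (x + y) dν(y)`. -/
noncomputable def shiftIntegral (ν : Measure E) (f : E → ℝ) (x : E) : ℝ := ∫ y, f (x + y) ∂ν

/-- A finite measure carried by the closed ball of radius `r` about the origin, so that
`shiftIntegral ν f x` only sees `f` on `closedBall x r`. -/
structure IsBallMeasure (ν : Measure E) (r : ℝ) : Prop where
  isFiniteMeasure : IsFiniteMeasure ν
  ae_mem : ∀ᵐ y ∂ν, y ∈ closedBall (0 : E) r

theorem shiftIntegral_const (ν : Measure E) (c : ℝ) (x : E) :
    shiftIntegral ν (fun _ => c) x = ν.real univ * c := by simp [shiftIntegral]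

theorem shiftIntegral_const_mul (ν : Measure E) (c : ℝ) (f : E → ℝ) (x : E) :
    shiftIntegral ν (fun y => c * f y) x = c * shiftIntegral ν f x := integral_const_mul c _

namespace IsBallMeasure

variable {ν : Measure E} {r : ℝ} {x : E} {f g : E → ℝ}

theorem ae_add_mem (hν : IsBallMeasure ν r) (x : E) : ∀ᵐ y ∂ν, x + y ∈ closedBall x r := by
  filter_upwards [hν.ae_mem] with y hy
  simpa using hy

theorem shiftIntegral_congr (hν : IsBallMeasure ν r) (hfg : EqOn f g (closedBall x r)) :
    shiftIntegral ν f x = shiftIntegral ν g x := by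
  refine integral_congr_ae ?_
  filter_upwards [hν.ae_add_mem x] with y hy using hfg hy

variable [ProperSpace E] [BorelSpace E]

theorem integrable (hν : IsBallMeasure ν r) (hf : ContinuousOn f (closedBall x r)) :
    Integrable (fun y => f (x + y)) ν := by
  have := hν.isFiniteMeasure
  rw [← Measure.restrict_eq_self_of_ae_mem hν.ae_mem]
  refine ContinuousOn.integrableOn_compact (isCompact_closedBall 0 r)
    (hf.comp (by fun_prop) fun y hy => ?_)
  simpa using hy

theorem shiftIntegral_mono (hν : IsBallMeasure ν r) (hf : ContinuousOn f (closedBall x r))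
    (hg : ContinuousOn g (closedBall x r)) (hfg : ∀ y ∈ closedBall x r, f y ≤ g y) :
    shiftIntegral ν f x ≤ shiftIntegral ν g x := by
  refine integral_mono_ae (hν.integrable hf) (hν.integrable hg) ?_
  filter_upwards [hν.ae_add_mem x] with y hy using hfg _ hy

theorem shiftIntegral_sub (hν : IsBallMeasure ν r) (hf : ContinuousOn f (closedBall x r))
    (hg : ContinuousOn g (closedBall x r)) :
    shiftIntegral ν (fun y => f y - g y) x = shiftIntegral ν f x - shiftIntegral ν g x :=
  integral_sub (hν.integrable hf) (hν.integrable hg)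

theorem tendsto_shiftIntegral (hν : IsBallMeasure ν r) {F : ℕ → E → ℝ} {B : ℝ}
    (hF : ∀ n, ContinuousOn (F n) (closedBall x r)) (hB : ∀ n, ∀ y ∈ closedBall x r, |F n y| ≤ B)
    (hlim : ∀ y ∈ closedBall x r, Tendsto (fun n => F n y) atTop (𝓝 (f y))) :
    Tendsto (fun n => shiftIntegral ν (F n) x) atTop (𝓝 (shiftIntegral ν f x)) := by
  have := hν.isFiniteMeasure
  refine tendsto_integral_of_dominated_convergence (fun _ => B)
    (fun n => (hν.integrable (hF n)).1) (integrable_const B) (fun n => ?_) ?_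
  · filter_upwards [hν.ae_add_mem x] with y hy using hB n _ hy
  · filter_upwards [hν.ae_add_mem x] with y hy using hlim _ hy

end IsBallMeasure

end BallMeasure

/-! ### Solid means and truncated potentials -/

section MeanMeasures

variable {E : Type*} [NormedAddCommGroup E] [InnerProductSpace ℝ E] [FiniteDimensional ℝ E]
  [MeasurableSpace E] [BorelSpace E]

/-- The probability measure with density `r ^ (-d) * meanKernel (z / r)`, defined as a
push-forward. -/
noncomputable def meanMeasure (r : ℝ) : Measure E :=
  (volume.withDensity fun z => ENNReal.ofReal (meanKernel z)).map (r • ·)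

/-- The measure `∫₀ʳ s (s • ·)_* (greenKernel dz) ds`, so that
`f = 𝓜[r] f + 𝓠[r] (-Δ f)` for `f` of class `C²`. -/
noncomputable def greenMeasure (r : ℝ) : Measure E :=
  (((volume.restrict (Ioc 0 r)).prod volume).withDensity fun p : ℝ × E =>
    ENNReal.ofReal (p.1 * greenKernel p.2)).map fun p => p.1 • p.2

end MeanMeasures

local notation "𝓜[" r "]" => shiftIntegral (meanMeasure r)
local notation "𝓠[" r "]" => shiftIntegral (greenMeasure r)

section MeanOperators

variable {E : Type*} [NormedAddCommGroup E] [InnerProductSpace ℝ E] [FiniteDimensional ℝ E]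
  [MeasurableSpace E] [BorelSpace E] {r : ℝ} {x : E} {f : E → ℝ}

theorem measurable_mul_greenKernel : Measurable fun p : ℝ × E => p.1 * greenKernel p.2 :=
  (continuous_fst.mul (continuous_greenKernel.comp continuous_snd)).measurable

theorem isBallMeasure_meanMeasure (hr : 0 < r) : IsBallMeasure (meanMeasure r : Measure E) r where
  isFiniteMeasure :=
    have := isFiniteMeasure_withDensity_ofReal
      ((isUnitBallKernel_meanKernel (E := E)).integrable (μ := volume)).2
    Measure.isFiniteMeasure_map _ _
  ae_mem := by
    refine (ae_map_iff (by fun_prop) isClosed_closedBall.measurableSet).2 ?_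
    rw [ae_withDensity_iff continuous_meanKernel.measurable.ennreal_ofReal]
    refine ae_of_all _ fun z hz => ?_
    have : ‖z‖ < 1 := by
      by_contra! h
      simp [isUnitBallKernel_meanKernel.eq_zero z h] at hz
    rw [dist_zero_right, norm_smul, Real.norm_of_nonneg hr.le]
    nlinarith

theorem isBallMeasure_greenMeasure (r : ℝ) : IsBallMeasure (greenMeasure r : Measure E) r where
  isFiniteMeasure := by
    have hs : Integrable (fun s : ℝ => s) (volume.restrict (Ioc 0 r)) :=
      (continuous_id.integrableOn_Icc (a := 0) (b := r)).mono_set Ioc_subset_Icc_self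
    have := isFiniteMeasure_withDensity_ofReal
      (hs.mul_prod ((isUnitBallKernel_greenKernel (E := E)).integrable (μ := volume))).2
    exact Measure.isFiniteMeasure_map _ _
  ae_mem := by
    refine (ae_map_iff (by fun_prop) isClosed_closedBall.measurableSet).2 ?_
    rw [ae_withDensity_iff measurable_mul_greenKernel.ennreal_ofReal]
    have hfst : ∀ᵐ p : ℝ × E ∂((volume.restrict (Ioc 0 r)).prod volume), p.1 ∈ Ioc 0 r :=
      Measure.quasiMeasurePreserving_fst.ae (ae_restrict_mem measurableSet_Ioc)
    filter_upwards [hfst] with p hp hp0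
    have : ‖p.2‖ < 1 := by
      by_contra! h
      simp [isUnitBallKernel_greenKernel.eq_zero _ h] at hp0
    rw [dist_zero_right, norm_smul, Real.norm_of_nonneg hp.1.le]
    nlinarith [hp.1, hp.2, norm_nonneg p.2]

theorem mean_eq_integral (hr : 0 < r) (f : E → ℝ) (x : E) :
    𝓜[r] f x = ∫ z, meanKernel z * f (x + r • z) := by
  have he : MeasurableEmbedding fun z : E => r • z :=
    (Homeomorph.smulOfNeZero r hr.ne').measurableEmbedding
  rw [shiftIntegral, meanMeasure, he.integral_map, integral_withDensity_eq_integral_toReal_smul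
    continuous_meanKernel.measurable.ennreal_ofReal (by simp)]
  simp [ENNReal.toReal_ofReal (meanKernel_nonneg _)]

theorem green_eq_integral (hr : 0 < r) (hf : Continuous f) (x : E) :
    𝓠[r] f x = ∫ s in (0)..r, s * ∫ z, greenKernel z * f (x + s • z) := by
  have hm : Measurable fun p : ℝ × E => p.1 • p.2 := by fun_prop
  have hi : Integrable (fun y => f (x + y)) (greenMeasure r) :=
    (isBallMeasure_greenMeasure r).integrable hf.continuousOn
  rw [greenMeasure, integrable_map_measure (by fun_prop) hm.aemeasurable,
    integrable_withDensity_iff_integrable_smul' measurable_mul_greenKernel.ennreal_ofReal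
      (by simp)] at hi
  simp only [Function.comp_def] at hi
  rw [shiftIntegral, greenMeasure, integral_map hm.aemeasurable (by fun_prop),
    integral_withDensity_eq_integral_toReal_smul measurable_mul_greenKernel.ennreal_ofReal
      (by simp), integral_prod _ hi, intervalIntegral.integral_of_le hr.le]
  refine setIntegral_congr_fun measurableSet_Ioc fun s hs => ?_
  rw [← integral_const_mul]
  refine integral_congr_ae (ae_of_all _ fun z => ?_)
  simp only [smul_eq_mul]
  rw [ENNReal.toReal_ofReal (mul_nonneg hs.1.le (greenKernel_nonneg _)), mul_assoc]

theorem mean_const (hr : 0 < r) (c : ℝ) (x : E) : 𝓜[r] (fun _ => c) x = c := by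
  rw [mean_eq_integral hr, integral_mul_const, integral_meanKernel, one_mul]

theorem greenMeasure_real_univ (hr : 0 < r) :
    (greenMeasure r : Measure E).real univ = r ^ 2 / 2 * ∫ z : E, greenKernel z := by
  have h := green_eq_integral hr (f := fun _ => (1 : ℝ)) continuous_const (0 : E)
  simpa [shiftIntegral] using h

theorem greenMeasure_real_univ_pos (hr : 0 < r) : 0 < (greenMeasure r : Measure E).real univ := by
  have := integral_greenKernel_pos (E := E)
  rw [greenMeasure_real_univ hr]
  positivity

theorem mean_pos (hr : 0 < r) (hf : Continuous f) (h0 : ∀ y, 0 ≤ f y) {y : E} (hy : 0 < f y)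
    (hyx : ‖y - x‖ < r) : 0 < 𝓜[r] f x := by
  rw [mean_eq_integral hr]
  have hnorm : ‖r⁻¹ • (y - x)‖ < 1 := by
    rwa [norm_smul, norm_inv, Real.norm_of_nonneg hr.le, inv_mul_lt_iff₀ hr, mul_one]
  refine Continuous.integral_pos_of_hasCompactSupport_nonneg_nonzero (x := r⁻¹ • (y - x))
    (continuous_meanKernel.mul (by fun_prop))
    (isUnitBallKernel_meanKernel.hasCompactSupport.mul_right)
    (fun z => mul_nonneg (meanKernel_nonneg z) (h0 _)) ?_
  rw [smul_inv_smul₀ hr.ne', add_sub_cancel]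
  exact (mul_pos (meanKernel_pos hnorm) hy).ne'

end MeanOperators

/-! ### The mean value formula -/

section MeanValue

variable {E : Type*} [NormedAddCommGroup E] [InnerProductSpace ℝ E] [FiniteDimensional ℝ E]

theorem laplacian_eq_sum_fderiv {ι : Type*} [Fintype ι] (b : OrthonormalBasis ι ℝ E) {w : E → ℝ}
    {x : E} (hw : ContDiffAt ℝ 2 w x) :
    Δ w x = ∑ i, fderiv ℝ (fun y => fderiv ℝ w y (b i)) x (b i) := by
  have hw1 : DifferentiableAt ℝ (fderiv ℝ w) x :=
    (hw.fderiv_right (m := 1) (by norm_num)).differentiableAt (by norm_num)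
  simp [InnerProductSpace.laplacian_eq_iteratedFDeriv_orthonormalBasis w b,
    iteratedFDeriv_two_apply, fderiv_clm_apply hw1]

theorem continuousOn_laplacian {w : E → ℝ} {Ω : Set E} (hΩ : IsOpen Ω)
    (hw : ContDiffOn ℝ 2 w Ω) : ContinuousOn (Δ w) Ω := by
  intro x hx
  have := (hw.contDiffAt (hΩ.mem_nhds hx)).continuousAt_iteratedFDeriv (k := 2) le_rfl
  rw [InnerProductSpace.laplacian_eq_iteratedFDeriv_stdOrthonormalBasis]
  exact ContinuousAt.continuousWithinAt (tendsto_finsetSum _ fun i _ =>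
    (continuous_eval_const _).continuousAt.comp this)

theorem exists_contDiff_eventuallyEq_nhdsSet {w : E → ℝ} {Ω s : Set E} {n : ℕ∞} (hΩ : IsOpen Ω)
    (hw : ContDiffOn ℝ n w Ω) (hs : IsClosed s) (hsΩ : s ⊆ Ω) :
    ∃ v : E → ℝ, ContDiff ℝ n v ∧ v =ᶠ[𝓝ˢ s] w := by
  obtain ⟨t, ht, hst, htΩ⟩ := normal_exists_closure_subset hs hΩ hsΩ
  obtain ⟨χ, hχ1, hχ0, -⟩ := exists_contMDiffMap_one_nhds_of_subset_interior 𝓘(ℝ, E) (n := n) hs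
    (hst.trans (ht.subset_interior_iff.2 Subset.rfl))
  refine ⟨fun y => χ y * w y, contDiff_iff_contDiffAt.2 fun y => ?_, ?_⟩
  · by_cases hy : y ∈ closure t
    · exact χ.contMDiff.contDiff.contDiffAt.mul (hw.contDiffAt (hΩ.mem_nhds (htΩ hy)))
    · refine (contDiffAt_const (c := (0 : ℝ))).congr_of_eventuallyEq ?_
      filter_upwards [isClosed_closure.isOpen_compl.mem_nhds hy] with z hz
      rw [hχ0 z fun hzt => hz (subset_closure hzt), zero_mul]
  · filter_upwards [hχ1] with y hy
    rw [hy, one_mul]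

variable [MeasurableSpace E] [BorelSpace E]

theorem integral_meanKernel_mul_inner {g : E → ℝ} (hg : ContDiff ℝ 1 g) (x v : E) (s : ℝ) :
    ∫ z, meanKernel z * (inner ℝ z v * g (x + s • z)) =
      s * ∫ z, greenKernel z * fderiv ℝ g (x + s • z) v := by
  have hg' : ∀ z, HasFDerivAt (fun z => g (x + s • z)) (s • fderiv ℝ g (x + s • z)) z := fun z => by
    have hline : HasFDerivAt (fun z : E => x + s • z) (s • ContinuousLinearMap.id ℝ E) z :=
      ((hasFDerivAt_id z).const_smul s).const_add x
    refine (((hg.differentiable (by norm_num)) _).hasFDerivAt.comp z hline).congr_fderiv ?_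
    ext v
    simp
  have : Continuous (fderiv ℝ g) := hg.continuous_fderiv (by norm_num)
  have hparts := integral_mul_fderiv_eq_neg_fderiv_mul_of_integrable (μ := (volume : Measure E))
    (f := greenKernel) (g := fun z => g (x + s • z)) (v := v) ?_ ?_ ?_
    (fun z _ => (hasFDerivAt_greenKernel z).differentiableAt)
    (fun z _ => (hg' z).differentiableAt)
  · simp only [(hg' _).fderiv, (hasFDerivAt_greenKernel _).fderiv,
      smul_apply, innerSL_apply_apply, smul_eq_mul, neg_mul, integral_neg,
      neg_neg] at hparts
    rw [← integral_const_mul]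
    simpa only [mul_assoc, mul_left_comm] using hparts.symm
  · simp only [(hasFDerivAt_greenKernel _).fderiv, smul_apply, smul_eq_mul,
      innerSL_apply_apply, neg_mul, mul_assoc]
    exact (isUnitBallKernel_meanKernel.mul (by fun_prop)).integrable.neg
  · simp only [(hg' _).fderiv, smul_apply]
    exact (isUnitBallKernel_greenKernel.mul (by fun_prop)).integrable
  · exact (isUnitBallKernel_greenKernel.mul (by fun_prop)).integrable

theorem integral_meanKernel_mul_fderiv {w : E → ℝ} (hw : ContDiff ℝ 2 w) (x : E) (s : ℝ) :
    ∫ z, meanKernel z * fderiv ℝ w (x + s • z) z =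
      s * ∫ z, greenKernel z * Δ w (x + s • z) := by
  let b := stdOrthonormalBasis ℝ E
  have hw1 : ∀ i, ContDiff ℝ 1 fun y => fderiv ℝ w y (b i) := fun i =>
    (hw.fderiv_right (m := 1) (by norm_num)).clm_apply contDiff_const
  have hw2 : ∀ i, Continuous (fderiv ℝ fun y => fderiv ℝ w y (b i)) := fun i =>
    (hw1 i).continuous_fderiv (by norm_num)
  have hcoord : ∀ z, meanKernel z * fderiv ℝ w (x + s • z) z =
      ∑ i, meanKernel z * (inner ℝ z (b i) * fderiv ℝ w (x + s • z) (b i)) := fun z => by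
    conv_lhs => rw [← b.sum_repr' z, map_sum, Finset.mul_sum, b.sum_repr' z]
    exact Finset.sum_congr rfl fun i _ => by rw [map_smul, smul_eq_mul, real_inner_comm]
  simp only [hcoord, laplacian_eq_sum_fderiv b hw.contDiffAt, Finset.mul_sum]
  rw [integral_finsetSum _ fun i _ => ?_, integral_finsetSum _ fun i _ => ?_, Finset.mul_sum]
  · exact Finset.sum_congr rfl fun i _ => integral_meanKernel_mul_inner (hw1 i) x (b i) s
  · have := hw2 i
    exact (isUnitBallKernel_greenKernel.mul (by fun_prop)).integrable
  · have := (hw1 i).continuous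
    exact (isUnitBallKernel_meanKernel.mul (by fun_prop)).integrable

theorem hasDerivAt_integral_meanKernel_mul {w : E → ℝ} (hw : ContDiff ℝ 1 w) (x : E) (s : ℝ) :
    HasDerivAt (fun s => ∫ z, meanKernel z * w (x + s • z))
      (∫ z, meanKernel z * fderiv ℝ w (x + s • z) z) s := by
  have hwc := hw.continuous
  have hw1 : Continuous (fderiv ℝ w) := hw.continuous_fderiv (by norm_num)
  have hkc := continuous_meanKernel (E := E)
  obtain ⟨C, hC⟩ :=
    (isCompact_closedBall x (|s| + 1)).exists_bound_of_continuousOn hw1.continuousOn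
  refine (hasDerivAt_integral_of_dominated_loc_of_deriv_le (bound := fun z => meanKernel z * C)
    (F' := fun s z => meanKernel z * fderiv ℝ w (x + s • z) z) (ball_mem_nhds s one_pos)
    (Eventually.of_forall fun s => (by fun_prop : Continuous _).aestronglyMeasurable)
    (isUnitBallKernel_meanKernel.mul (by fun_prop)).integrable
    (by fun_prop : Continuous _).aestronglyMeasurable (ae_of_all _ fun z t ht => ?_)
    (isUnitBallKernel_meanKernel.integrable.mul_const C) (ae_of_all _ fun z t _ => ?_)).2
  · rw [norm_mul, Real.norm_of_nonneg (meanKernel_nonneg z)]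
    rcases le_or_gt 1 ‖z‖ with hz | hz
    · simp [isUnitBallKernel_meanKernel.eq_zero z hz]
    refine mul_le_mul_of_nonneg_left ?_ (meanKernel_nonneg z)
    have ht' : |t| ≤ |s| + 1 := by
      have : |t - s| < 1 := by simpa [Real.dist_eq] using ht
      linarith [abs_sub_abs_le_abs_sub t s]
    have hmem : x + t • z ∈ closedBall x (|s| + 1) := by
      rw [mem_closedBall, dist_self_add_left, norm_smul, Real.norm_eq_abs]
      nlinarith [norm_nonneg z, abs_nonneg t]
    calc ‖fderiv ℝ w (x + t • z) z‖ ≤ ‖fderiv ℝ w (x + t • z)‖ * ‖z‖ :=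
          ContinuousLinearMap.le_opNorm _ _
      _ ≤ C * 1 :=
          mul_le_mul (hC _ hmem) hz.le (norm_nonneg _) ((norm_nonneg _).trans (hC _ hmem))
      _ = C := mul_one C
  · have hline : HasDerivAt (fun s : ℝ => x + s • z) z t := by
      simpa using ((hasDerivAt_id t).smul_const z).const_add x
    exact (((hw.differentiable (by norm_num)) _).hasFDerivAt.comp_hasDerivAt t hline).const_mul _

theorem eq_mean_add_green_of_contDiff {w : E → ℝ} (hw : ContDiff ℝ 2 w) {r : ℝ} (hr : 0 < r)
    (x : E) : w x = 𝓜[r] w x + 𝓠[r] (fun y => -Δ w y) x := by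
  have hΔ : Continuous (Δ w) :=
    continuousOn_univ.1 (continuousOn_laplacian isOpen_univ hw.contDiffOn)
  have hderiv : ∀ s : ℝ, HasDerivAt (fun s => ∫ z, meanKernel z * w (x + s • z))
      (s * ∫ z, greenKernel z * Δ w (x + s • z)) s := fun s => by
    rw [← integral_meanKernel_mul_fderiv hw]
    exact hasDerivAt_integral_meanKernel_mul (hw.of_le (by norm_num)) x s
  have hcont : Continuous fun s : ℝ => s * ∫ z, greenKernel z * Δ w (x + s • z) := by
    have := continuous_greenKernel (E := E)
    refine continuous_id.mul (continuous_integral_of_isUnitBallKernel ?_ fun s =>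
      isUnitBallKernel_greenKernel.mul (by fun_prop))
    simp only [Function.uncurry_def]
    fun_prop
  have hftc := intervalIntegral.integral_eq_sub_of_hasDerivAt (a := 0) (b := r)
    (fun s _ => hderiv s) (hcont.intervalIntegrable _ _)
  rw [mean_eq_integral hr, green_eq_integral hr (f := fun y => -Δ w y) hΔ.neg]
  simp only [mul_neg, integral_neg, intervalIntegral.integral_neg]
  simp [hftc, integral_mul_const, integral_meanKernel]

theorem eq_mean_add_green {w : E → ℝ} {Ω : Set E} (hΩ : IsOpen Ω) (hw : ContDiffOn ℝ 2 w Ω) {r : ℝ}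
    (hr : 0 < r) {x : E} (hx : closedBall x r ⊆ Ω) :
    w x = 𝓜[r] w x + 𝓠[r] (fun y => -Δ w y) x := by
  obtain ⟨v, hv, hvw⟩ :=
    exists_contDiff_eventuallyEq_nhdsSet (n := 2) hΩ hw isClosed_closedBall hx
  have heq := hvw.self_of_nhdsSet
  rw [← heq (mem_closedBall_self hr.le), eq_mean_add_green_of_contDiff hv hr,
    (isBallMeasure_meanMeasure hr).shiftIntegral_congr heq]
  refine congrArg (_ + ·) ((isBallMeasure_greenMeasure r).shiftIntegral_congr fun y hy => ?_)
  exact congrArg Neg.neg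
    (InnerProductSpace.laplacian_congr_nhds (eventually_nhdsSet_iff_forall.1 hvw y hy)).self_of_nhds

end MeanValue

/-! ### Radial functions -/

section Radial

/-- `g` is a `C²` function on `(0, ∞)` with first and second derivatives `g'` and `g''`; it serves
as the profile of the radial functions `y ↦ g ‖y - k‖`. -/
structure IsRadialProfile (g g' g'' : ℝ → ℝ) : Prop where
  hasDerivAt : ∀ r, 0 < r → HasDerivAt g (g' r) r
  hasDerivAt' : ∀ r, 0 < r → HasDerivAt g' (g'' r) r
  continuousOn : ContinuousOn g'' (Ioi 0)

namespace IsRadialProfile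

variable {g g' g'' h h' h'' : ℝ → ℝ}

theorem contDiffOn (hg : IsRadialProfile g g' g'') : ContDiffOn ℝ 2 g (Ioi 0) := by
  have h1 : ContDiffOn ℝ (0 + 1) g' (Ioi 0) :=
    (contDiffOn_succ_iff_deriv_of_isOpen isOpen_Ioi).2
      ⟨fun r hr => (hg.hasDerivAt' r hr).differentiableAt.differentiableWithinAt, by simp,
        contDiffOn_zero.2 (hg.continuousOn.congr fun r hr => (hg.hasDerivAt' r hr).deriv)⟩
  refine (contDiffOn_succ_iff_deriv_of_isOpen (n := 0 + 1) isOpen_Ioi).2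
    ⟨fun r hr => (hg.hasDerivAt r hr).differentiableAt.differentiableWithinAt, by simp,
      h1.congr fun r hr => (hg.hasDerivAt r hr).deriv⟩

theorem add (hg : IsRadialProfile g g' g'') (hh : IsRadialProfile h h' h'') :
    IsRadialProfile (fun r => g r + h r) (fun r => g' r + h' r) (fun r => g'' r + h'' r) where
  hasDerivAt r hr := (hg.hasDerivAt r hr).add (hh.hasDerivAt r hr)
  hasDerivAt' r hr := (hg.hasDerivAt' r hr).add (hh.hasDerivAt' r hr)
  continuousOn := hg.continuousOn.add hh.continuousOn

theorem const_mul (hg : IsRadialProfile g g' g'') (c : ℝ) :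
    IsRadialProfile (fun r => c * g r) (fun r => c * g' r) (fun r => c * g'' r) where
  hasDerivAt r hr := (hg.hasDerivAt r hr).const_mul c
  hasDerivAt' r hr := (hg.hasDerivAt' r hr).const_mul c
  continuousOn := continuousOn_const.mul hg.continuousOn

theorem rpow_const (hg : IsRadialProfile g g' g'') (hpos : ∀ r, 0 < r → 0 < g r) (a : ℝ) :
    IsRadialProfile (fun r => g r ^ a) (fun r => a * g r ^ (a - 1) * g' r)
      (fun r => a * (a - 1) * g r ^ (a - 2) * g' r ^ 2 + a * g r ^ (a - 1) * g'' r) where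
  hasDerivAt r hr := by
    refine ((hg.hasDerivAt r hr).rpow_const (p := a) (Or.inl (hpos r hr).ne')).congr_deriv ?_
    ring
  hasDerivAt' r hr := by
    have hpow := (hg.hasDerivAt r hr).rpow_const (p := a - 1) (Or.inl (hpos r hr).ne')
    refine ((hpow.const_mul a).mul (hg.hasDerivAt' r hr)).congr_deriv ?_
    rw [show a - 1 - 1 = a - 2 by ring]
    ring
  continuousOn := by
    have hg0 : ContinuousOn g (Ioi 0) := HasDerivAt.continuousOn hg.hasDerivAt
    have hg1 : ContinuousOn g' (Ioi 0) := HasDerivAt.continuousOn hg.hasDerivAt'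
    have hpow : ∀ b : ℝ, ContinuousOn (fun r => g r ^ b) (Ioi 0) := fun b =>
      hg0.rpow_const fun r hr => Or.inl (hpos r hr).ne'
    exact ((continuousOn_const.mul (hpow _)).mul (hg1.pow 2)).add
      ((continuousOn_const.mul (hpow _)).mul hg.continuousOn)

end IsRadialProfile

theorem isRadialProfile_id : IsRadialProfile (fun r => r) (fun _ => 1) (fun _ => 0) where
  hasDerivAt r _ := hasDerivAt_id r
  hasDerivAt' r _ := hasDerivAt_const r 1
  continuousOn := continuousOn_const

variable {E : Type*} [NormedAddCommGroup E] [InnerProductSpace ℝ E] {k x : E}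
  {g g' g'' : ℝ → ℝ}

theorem hasFDerivAt_norm_sub (hx : x ≠ k) :
    HasFDerivAt (fun y => ‖y - k‖) (‖x - k‖⁻¹ • innerSL ℝ (x - k)) x := by
  have hpos : 0 < ‖x - k‖ := norm_pos_iff.2 (sub_ne_zero.2 hx)
  have hsqrt := (((hasFDerivAt_id x).sub_const k).norm_sq).sqrt (pow_pos hpos 2).ne'
  simp only [Real.sqrt_sq (norm_nonneg _)] at hsqrt
  refine hsqrt.congr_fderiv ?_
  ext v
  simp
  field_simp

theorem IsRadialProfile.contDiffAt_norm_sub (hg : IsRadialProfile g g' g'') (hx : x ≠ k) :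
    ContDiffAt ℝ 2 (fun y => g ‖y - k‖) x :=
  (hg.contDiffOn.contDiffAt (Ioi_mem_nhds (norm_pos_iff.2 (sub_ne_zero.2 hx)))).comp x
    ((contDiffAt_norm ℝ (sub_ne_zero.2 hx)).comp x (contDiffAt_id.sub contDiffAt_const))

theorem IsRadialProfile.laplacian_norm_sub [FiniteDimensional ℝ E]
    (hg : IsRadialProfile g g' g'') (hx : x ≠ k) :
    Δ (fun y => g ‖y - k‖) x =
      g'' ‖x - k‖ + ((Module.finrank ℝ E : ℝ) - 1) / ‖x - k‖ * g' ‖x - k‖ := by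
  have hpos : 0 < ‖x - k‖ := norm_pos_iff.2 (sub_ne_zero.2 hx)
  have hgrad : ∀ v, ∀ y ≠ k, fderiv ℝ (fun y => g ‖y - k‖) y v =
      g' ‖y - k‖ / ‖y - k‖ * inner ℝ (y - k) v := fun v y hy => by
    have := (hg.hasDerivAt _ (norm_pos_iff.2 (sub_ne_zero.2 hy))).comp_hasFDerivAt y
      (hasFDerivAt_norm_sub hy)
    rw [HasFDerivAt.fderiv (f := fun y => g ‖y - k‖) this]
    simp only [smul_apply, innerSL_apply_apply, smul_eq_mul, div_eq_mul_inv, mul_assoc]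
  have hpartial : ∀ v, fderiv ℝ (fun y => fderiv ℝ (fun y => g ‖y - k‖) y v) x v =
      (g'' ‖x - k‖ / ‖x - k‖ ^ 2 - g' ‖x - k‖ / ‖x - k‖ ^ 3) * inner ℝ (x - k) v ^ 2 +
        g' ‖x - k‖ / ‖x - k‖ * ‖v‖ ^ 2 := fun v => by
    have hcoef := ((hg.hasDerivAt' _ hpos).div (hasDerivAt_id _) hpos.ne').comp_hasFDerivAt x
      (hasFDerivAt_norm_sub hx)
    have hinner : HasFDerivAt (fun y => inner ℝ (y - k) v) (innerSL ℝ v) x := by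
      simp only [real_inner_comm v]
      exact (innerSL ℝ v).hasFDerivAt.comp x ((hasFDerivAt_id x).sub_const k)
    have hev : (fun y => fderiv ℝ (fun y => g ‖y - k‖) y v) =ᶠ[𝓝 x]
        fun y => g' ‖y - k‖ / ‖y - k‖ * inner ℝ (y - k) v := by
      filter_upwards [isOpen_ne.mem_nhds hx] with y hy using hgrad v y hy
    have hprod : HasFDerivAt (fun y => g' ‖y - k‖ / ‖y - k‖ * inner ℝ (y - k) v) _ x :=
      hcoef.mul hinner
    rw [hev.fderiv_eq, hprod.fderiv]
    simp only [add_apply, smul_apply, innerSL_apply_apply, smul_eq_mul, id_eq,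
      Function.comp_apply, Pi.div_apply, real_inner_self_eq_norm_sq]
    field_simp
    ring
  let b := stdOrthonormalBasis ℝ E
  simp only [laplacian_eq_sum_fderiv b (hg.contDiffAt_norm_sub hx), hpartial,
    Finset.sum_add_distrib, ← Finset.mul_sum, b.sum_sq_inner_left, b.norm_eq_one]
  simp
  field_simp
  ring

end Radial

/-! ### The maximum principle outside a finite set -/

section MaximumPrinciple

variable {E : Type*} [NormedAddCommGroup E]

/-- The barrier `‖x - k‖ ^ (-1/2)`, strictly superharmonic away from `k` in dimension at least `3`
and infinite at `k`. -/
noncomputable def singularBarrier (k x : E) : ℝ := ‖x - k‖ ^ (-(1 / 2) : ℝ)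

theorem singularBarrier_nonneg (k x : E) : 0 ≤ singularBarrier k x :=
  Real.rpow_nonneg (norm_nonneg _) _

theorem tendsto_singularBarrier (k : E) : Tendsto (singularBarrier k) (𝓝[≠] k) atTop :=
  (tendsto_rpow_neg_nhdsGT_zero (by norm_num)).comp (tendsto_norm_sub_self_nhdsNE k)

variable [InnerProductSpace ℝ E]

theorem contDiffOn_singularBarrier (k : E) : ContDiffOn ℝ 2 (singularBarrier k) {k}ᶜ :=
  fun _ hx => ((isRadialProfile_id.rpow_const (fun _ hr => hr) _).contDiffAt_norm_sub
    hx).contDiffWithinAt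

variable [FiniteDimensional ℝ E]

theorem laplacian_singularBarrier_neg (hE : 3 ≤ Module.finrank ℝ E) {k x : E} (hx : x ≠ k) :
    Δ (singularBarrier k) x < 0 := by
  have hpos : 0 < ‖x - k‖ := norm_pos_iff.2 (sub_ne_zero.2 hx)
  have hE' : (3 : ℝ) ≤ Module.finrank ℝ E := by exact_mod_cast hE
  have hpow : ‖x - k‖ ^ (-(1 / 2) - 1 : ℝ) / ‖x - k‖ = ‖x - k‖ ^ (-(1 / 2) - 2 : ℝ) := by
    rw [div_eq_iff hpos.ne', ← Real.rpow_add_one hpos.ne']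
    norm_num
  have := Real.rpow_pos_of_pos hpos (-(1 / 2) - 2)
  calc Δ (singularBarrier k) x
      = 3 / 4 * ‖x - k‖ ^ (-(1 / 2) - 2 : ℝ) - ((Module.finrank ℝ E : ℝ) - 1) / 2 *
          (‖x - k‖ ^ (-(1 / 2) - 1 : ℝ) / ‖x - k‖) := by
        refine ((isRadialProfile_id.rpow_const (fun _ hr => hr) _).laplacian_norm_sub
          hx).trans ?_
        ring
    _ < 0 := by
        rw [hpow]
        nlinarith

variable [MeasurableSpace E] [BorelSpace E] {x : E} {r : ℝ}

theorem green_pos {f : E → ℝ} (hr : 0 < r) (hf : ContinuousOn f (closedBall x r))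
    (hpos : ∀ y ∈ closedBall x r, 0 < f y) : 0 < 𝓠[r] f x := by
  have := FiniteDimensional.proper_real E
  obtain ⟨y, hy, hmin⟩ := (isCompact_closedBall x r).exists_isMinOn ⟨x, by simp [hr.le]⟩ hf
  calc 0 < (greenMeasure r : Measure E).real univ * f y :=
        mul_pos (greenMeasure_real_univ_pos hr) (hpos y hy)
    _ = 𝓠[r] (fun _ => f y) x := (shiftIntegral_const _ _ _).symm
    _ ≤ 𝓠[r] f x := (isBallMeasure_greenMeasure r).shiftIntegral_mono continuousOn_const hf hmin

theorem mean_singularBarrier_lt (hE : 3 ≤ Module.finrank ℝ E) {k : E} (hr : 0 < r)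
    (hx : closedBall x r ⊆ {k}ᶜ) : 𝓜[r] (singularBarrier k) x < singularBarrier k x := by
  have hC := contDiffOn_singularBarrier k
  have hpos := green_pos (f := fun y => -Δ (singularBarrier k) y) hr
    ((continuousOn_laplacian isOpen_compl_singleton hC).mono hx).neg
    fun y hy => neg_pos.2 (laplacian_singularBarrier_neg hE (hx hy))
  linarith [eq_mean_add_green isOpen_compl_singleton hC hr hx]

theorem mean_sum_singularBarrier_lt (hE : 3 ≤ Module.finrank ℝ E) (hr : 0 < r) {S : Finset E}
    (hS : S.Nonempty) (hx : ∀ k ∈ S, closedBall x r ⊆ {k}ᶜ) :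
    𝓜[r] (fun y => ∑ k ∈ S, singularBarrier k y) x < ∑ k ∈ S, singularBarrier k x := by
  have hsum : 𝓜[r] (fun y => ∑ k ∈ S, singularBarrier k y) x
      = ∑ k ∈ S, 𝓜[r] (singularBarrier k) x :=
    integral_finsetSum _ fun k hk => (isBallMeasure_meanMeasure hr).integrable
      ((contDiffOn_singularBarrier k).continuousOn.mono (hx k hk))
  rw [hsum]
  exact Finset.sum_lt_sum_of_nonempty hS fun k hk => mean_singularBarrier_lt hE hr (hx k hk)

theorem nonpos_of_lt_mean {K : Set E} (hK : IsClosed K) {D : E → ℝ} (hD : ContinuousOn D Kᶜ)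
    (hbdry : ∀ k ∈ K, ∀ η > 0, ∀ᶠ x in 𝓝[Kᶜ] k, D x < η)
    (hinf : ∀ η > 0, ∀ᶠ x in cocompact E, D x < η)
    (hmean : ∀ x ∈ Kᶜ, 0 < D x → ∃ r > 0, closedBall x r ⊆ Kᶜ ∧ D x < 𝓜[r] D x) :
    ∀ x ∈ Kᶜ, D x ≤ 0 := by
  have := FiniteDimensional.proper_real E
  intro x₁ hx₁
  by_contra! hpos
  set C : Set E := {x | x ∈ Kᶜ ∧ D x₁ ≤ D x}
  have hclosed : IsClosed C := by
    rw [← isOpen_compl_iff, isOpen_iff_mem_nhds]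
    intro x hx
    by_cases hxK : x ∈ K
    · filter_upwards [eventually_nhdsWithin_iff.1 (hbdry x hxK _ hpos)] with y hy hyC
      exact (hy hyC.1).not_ge hyC.2
    · have hlt : D x < D x₁ := not_le.1 fun h => hx ⟨hxK, h⟩
      filter_upwards [(hD.continuousAt (hK.isOpen_compl.mem_nhds hxK)).eventually_lt_const hlt]
        with y hy hyC
      exact hy.not_ge hyC.2
  obtain ⟨S, hS, hSD⟩ := mem_cocompact.1 (hinf _ hpos)
  have hcompact : IsCompact C := hS.of_isClosed_subset hclosed fun x hx => by
    by_contra hxS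
    exact (hSD hxS).not_ge hx.2
  obtain ⟨x₀, hx₀, hmax⟩ := hcompact.exists_isMaxOn ⟨x₁, hx₁, le_rfl⟩ (hD.mono fun x hx => hx.1)
  have hglobal : ∀ x ∈ Kᶜ, D x ≤ D x₀ := fun x hx =>
    (le_total (D x₁) (D x)).elim (fun h => hmax ⟨hx, h⟩) fun h => h.trans hx₀.2
  obtain ⟨r, hr, hball, hlt⟩ := hmean x₀ hx₀.1 (hpos.trans_le hx₀.2)
  refine hlt.not_ge ?_
  calc 𝓜[r] D x₀ ≤ 𝓜[r] (fun _ => D x₀) x₀ :=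
        (isBallMeasure_meanMeasure hr).shiftIntegral_mono (hD.mono hball) continuousOn_const
          fun y hy => hglobal y (hball hy)
    _ = D x₀ := mean_const hr _ _

theorem nonpos_of_le_mean (hE : 3 ≤ Module.finrank ℝ E) {K : Set E} (hK : K.Finite)
    (hne : K.Nonempty) {D : E → ℝ} (hD : ContinuousOn D Kᶜ) {B : ℝ} (hB : ∀ x ∈ Kᶜ, D x ≤ B)
    (hinf : ∀ η > 0, ∀ᶠ x in cocompact E, D x < η)
    (hmean : ∀ x ∈ Kᶜ, 0 < D x → ∀ᶠ r in 𝓝[>] 0, D x ≤ 𝓜[r] D x) : ∀ x ∈ Kᶜ, D x ≤ 0 := by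
  have := FiniteDimensional.proper_real E
  have hKS : ∀ k ∈ hK.toFinset, Kᶜ ⊆ {k}ᶜ := fun k hk =>
    compl_subset_compl.2 (singleton_subset_iff.2 (hK.mem_toFinset.1 hk))
  set H : E → ℝ := fun x => ∑ k ∈ hK.toFinset, singularBarrier k x
  have hH : ContinuousOn H Kᶜ := continuousOn_finsetSum _ fun k hk =>
    (contDiffOn_singularBarrier k).continuousOn.mono (hKS k hk)
  have hH0 : ∀ x, 0 ≤ H x := fun x => Finset.sum_nonneg fun k _ => singularBarrier_nonneg k x
  have hHmean : ∀ x r, 0 < r → closedBall x r ⊆ Kᶜ → 𝓜[r] H x < H x := fun x r hr hball =>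
    mean_sum_singularBarrier_lt hE hr (hK.toFinset_nonempty.2 hne)
      fun k hk => hball.trans (hKS k hk)
  have hε : ∀ ε > 0, ∀ x ∈ Kᶜ, D x - ε * H x ≤ 0 := fun ε hε => by
    refine nonpos_of_lt_mean hK.isClosed (hD.sub (continuousOn_const.mul hH)) ?_ ?_ ?_
    · intro k hk η hη
      have hlarge := (((tendsto_singularBarrier k).mono_left (nhdsWithin_mono k
        (hKS k (hK.mem_toFinset.2 hk)))).const_mul_atTop hε).eventually_gt_atTop B
      filter_upwards [hlarge, self_mem_nhdsWithin] with x hx hxK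
      have hle : singularBarrier k x ≤ H x := Finset.single_le_sum
        (fun k _ => singularBarrier_nonneg k x) (hK.mem_toFinset.2 hk)
      nlinarith [hB x hxK]
    · intro η hη
      filter_upwards [hinf η hη] with x hx
      nlinarith [hH0 x]
    · intro x hx hpos
      have hDpos : 0 < D x := by nlinarith [hH0 x]
      obtain ⟨r, ⟨hDr, hball⟩, hr⟩ := (((hmean x hx hDpos).and (nhdsWithin_le_nhds
        (eventually_closedBall_subset (hK.isClosed.isOpen_compl.mem_nhds hx)))).and
        self_mem_nhdsWithin).exists
      refine ⟨r, hr, hball, ?_⟩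
      rw [(isBallMeasure_meanMeasure hr).shiftIntegral_sub (g := fun y => ε * H y) (hD.mono hball)
        (continuousOn_const.mul (hH.mono hball)), shiftIntegral_const_mul]
      nlinarith [hHmean x r hr hball]
  intro x hx
  refine le_of_forall_pos_lt_add fun η hη => ?_
  have hHx := hH0 x
  have hεη : η / (H x + 1) * H x < η := by
    rw [div_mul_eq_mul_div, div_lt_iff₀ (by positivity)]
    linarith
  linarith [hε (η / (H x + 1)) (by positivity) x hx]

end MaximumPrinciple

/-! ### Commutation of means and truncated potentials -/

section Commutation

variable {E : Type*} [NormedAddCommGroup E] [ProperSpace E] [MeasurableSpace E] [BorelSpace E]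

namespace IsBallMeasure

variable {ν μ : Measure E} {r R : ℝ} {f : E → ℝ}

theorem continuous_shiftIntegral (hν : IsBallMeasure ν r) (hf : Continuous f) :
    Continuous (shiftIntegral ν f) := by
  have := hν.isFiniteMeasure
  have hcont := continuous_parametric_integral_of_continuous (μ := ν)
    (f := fun x y => f (x + y)) (by fun_prop) (isCompact_closedBall (0 : E) r)
  rwa [Measure.restrict_eq_self_of_ae_mem hν.ae_mem] at hcont

theorem shiftIntegral_comm (hν : IsBallMeasure ν r) (hμ : IsBallMeasure μ R) (hf : Continuous f)
    (x : E) :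
    shiftIntegral ν (shiftIntegral μ f) x = shiftIntegral μ (shiftIntegral ν f) x := by
  have := hν.isFiniteMeasure
  have := hμ.isFiniteMeasure
  have hint : Integrable (Function.uncurry fun y z : E => f (x + y + z)) (ν.prod μ) := by
    rw [← Measure.restrict_eq_self_of_ae_mem hν.ae_mem,
      ← Measure.restrict_eq_self_of_ae_mem hμ.ae_mem, Measure.prod_restrict]
    have hcont : Continuous (Function.uncurry fun y z : E => f (x + y + z)) := by fun_prop
    exact hcont.continuousOn.integrableOn_compact
      ((isCompact_closedBall 0 r).prod (isCompact_closedBall 0 R))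
  simp only [shiftIntegral]
  rw [integral_integral_swap hint]
  simp only [add_right_comm]

theorem tendstoUniformly_shiftIntegral (hν : IsBallMeasure ν r) {F : ℕ → E → ℝ}
    (hF : ∀ n, Continuous (F n)) (hf : Continuous f) (hlim : TendstoUniformly F f atTop) :
    TendstoUniformly (fun n => shiftIntegral ν (F n)) (shiftIntegral ν f) atTop := by
  have := hν.isFiniteMeasure
  rw [Metric.tendstoUniformly_iff] at hlim ⊢
  intro ε hε
  have : 0 ≤ ν.real univ := measureReal_nonneg
  filter_upwards [hlim (ε / (ν.real univ + 1)) (by positivity)] with n hn x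
  calc dist (shiftIntegral ν f x) (shiftIntegral ν (F n) x)
      = ‖∫ y, f (x + y) - F n (x + y) ∂ν‖ := by
        rw [integral_sub (hν.integrable hf.continuousOn) (hν.integrable (hF n).continuousOn)]
        exact Real.dist_eq _ _
    _ ≤ ε / (ν.real univ + 1) * ν.real univ :=
        norm_integral_le_of_norm_le_const (ae_of_all _ fun y => (hn (x + y)).le)
    _ < ε := by
        rw [div_mul_eq_mul_div, div_lt_iff₀ (by positivity)]
        linarith

end IsBallMeasure

end Commutation

section MeanGreen

variable {E : Type*} [NormedAddCommGroup E] [InnerProductSpace ℝ E] [FiniteDimensional ℝ E]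

theorem exists_contDiff_tendstoUniformly (n : ℕ∞) {f : E → ℝ} (hf : Continuous f) :
    ∃ F : ℕ → E → ℝ, (∀ j, ContDiff ℝ n (F j)) ∧ TendstoUniformly F f atTop := by
  choose F hF hdist _ using fun j : ℕ => hf.exists_contDiff_approx n
    (ε := fun _ => ((j : ℝ) + 1)⁻¹) continuous_const fun _ => by positivity
  refine ⟨F, hF, Metric.tendstoUniformly_iff.2 fun ε hε => ?_⟩
  have hlim : Tendsto (fun j : ℕ => ((j : ℝ) + 1)⁻¹) atTop (𝓝 0) := by
    simpa using tendsto_one_div_add_atTop_nhds_zero_nat (𝕜 := ℝ)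
  filter_upwards [hlim.eventually_lt_const hε] with j hj x
  rw [dist_comm]
  exact (hdist j x).trans hj

variable [MeasurableSpace E] [BorelSpace E] {f : E → ℝ} {r R : ℝ}

theorem green_sub_mean_green_of_contDiff (hf : ContDiff ℝ 2 f) (hr : 0 < r) (hR : 0 < R) (x : E) :
    𝓠[R] f x - 𝓜[r] (𝓠[R] f) x = 𝓠[r] f x - 𝓠[r] (𝓜[R] f) x := by
  have := FiniteDimensional.proper_real E
  have hfc := hf.continuous
  have hΔ : Continuous fun y => -Δ f y :=
    (continuousOn_univ.1 (continuousOn_laplacian isOpen_univ hf.contDiffOn)).neg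
  have hgreen : ∀ {ρ : ℝ}, 0 < ρ → 𝓠[ρ] (fun y => -Δ f y) = fun y => f y - 𝓜[ρ] f y :=
    fun hρ => funext fun y => eq_sub_of_add_eq' (eq_mean_add_green_of_contDiff hf hρ y).symm
  have hcomm := (isBallMeasure_greenMeasure R).shiftIntegral_comm (isBallMeasure_greenMeasure r)
    hΔ x
  rw [hgreen hr, hgreen hR,
    (isBallMeasure_greenMeasure R).shiftIntegral_sub hfc.continuousOn
      ((isBallMeasure_meanMeasure hr).continuous_shiftIntegral hfc).continuousOn,
    (isBallMeasure_greenMeasure r).shiftIntegral_sub hfc.continuousOn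
      ((isBallMeasure_meanMeasure hR).continuous_shiftIntegral hfc).continuousOn] at hcomm
  rw [(isBallMeasure_meanMeasure hr).shiftIntegral_comm (isBallMeasure_greenMeasure R) hfc, hcomm]

theorem green_sub_mean_green (hf : Continuous f) (hr : 0 < r) (hR : 0 < R) (x : E) :
    𝓠[R] f x - 𝓜[r] (𝓠[R] f) x = 𝓠[r] f x - 𝓠[r] (𝓜[R] f) x := by
  have := FiniteDimensional.proper_real E
  obtain ⟨F, hF, hlim⟩ := exists_contDiff_tendstoUniformly 2 hf
  have hFc : ∀ n, Continuous (F n) := fun n => (hF n).continuous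
  have hmr := isBallMeasure_meanMeasure (E := E) hr
  have hmR := isBallMeasure_meanMeasure (E := E) hR
  have hqr := isBallMeasure_greenMeasure (E := E) r
  have hqR := isBallMeasure_greenMeasure (E := E) R
  have hleft := ((hqR.tendstoUniformly_shiftIntegral hFc hf hlim).tendsto_at x).sub
    ((hmr.tendstoUniformly_shiftIntegral (fun n => hqR.continuous_shiftIntegral (hFc n))
      (hqR.continuous_shiftIntegral hf)
      (hqR.tendstoUniformly_shiftIntegral hFc hf hlim)).tendsto_at x)
  have hright := ((hqr.tendstoUniformly_shiftIntegral hFc hf hlim).tendsto_at x).sub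
    ((hqr.tendstoUniformly_shiftIntegral (fun n => hmR.continuous_shiftIntegral (hFc n))
      (hmR.continuous_shiftIntegral hf)
      (hmR.tendstoUniformly_shiftIntegral hFc hf hlim)).tendsto_at x)
  exact tendsto_nhds_unique hleft
    (hright.congr fun n => (green_sub_mean_green_of_contDiff (hF n) hr hR x).symm)

end MeanGreen

/-! ### Averages against kernels supported in the unit ball -/

section KernelAverage

variable {E F : Type*} [NormedAddCommGroup E] [InnerProductSpace ℝ E] [FiniteDimensional ℝ E]
  [MeasurableSpace E] [BorelSpace E] [NormedAddCommGroup F] [NormedSpace ℝ F] {κ : E → F}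
  {f : E → ℝ}

/-- The average of `f` about `x` at scale `s` with weight `κ`. The weight may be vector-valued, so
that derivatives of averages are again averages. -/
noncomputable def kernelAverage (κ : E → F) (f : E → ℝ) (s : ℝ) (x : E) : F :=
  ∫ z, f (x + s • z) • κ z

theorem continuous_uncurry_kernelAverage (hκ : IsUnitBallKernel κ) (hf : Continuous f) :
    Continuous fun q : ℝ × E => kernelAverage κ f q.1 q.2 := by
  have := FiniteDimensional.proper_real E
  have := hκ.continuous
  refine continuous_integral_of_isUnitBallKernel
    (k := fun (q : ℝ × E) z => f (q.2 + q.1 • z) • κ z) ?_ fun q => hκ.smul (by fun_prop)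
  simp only [Function.uncurry_def]
  fun_prop

theorem norm_kernelAverage_le (hκ : IsUnitBallKernel κ) {B s : ℝ} {x : E}
    (hB : ∀ z, ‖z‖ < 1 → |f (x + s • z)| ≤ B) :
    ‖kernelAverage κ f s x‖ ≤ B * ∫ z, ‖κ z‖ := by
  rw [← integral_const_mul]
  refine norm_integral_le_of_norm_le (hκ.integrable.norm.const_mul B) (ae_of_all _ fun z => ?_)
  rw [norm_smul, Real.norm_eq_abs]
  rcases lt_or_ge ‖z‖ 1 with hz | hz
  · exact mul_le_mul_of_nonneg_right (hB z hz) (norm_nonneg _)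
  · simp [hκ.eq_zero z hz]

end KernelAverage

/-! ### The Newtonian potential of a compactly supported function -/

section NewtonPotential

theorem IsUnitBallKernel.exists_abs_le {E : Type*} [NormedAddCommGroup E] [ProperSpace E]
    {κ : E → ℝ} (hκ : IsUnitBallKernel κ) : ∃ B, ∀ z, |κ z| ≤ B :=
  hκ.hasCompactSupport.exists_bound_of_continuous hκ.continuous

variable {E : Type*} [NormedAddCommGroup E] [InnerProductSpace ℝ E] [FiniteDimensional ℝ E]
  [MeasurableSpace E] [BorelSpace E] {f g : E → ℝ} {r : ℝ}

/-- The average of `f` about `x` at scale `s` with weight `greenKernel`. -/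
noncomputable def greenAverage (f : E → ℝ) (s : ℝ) (x : E) : ℝ :=
  ∫ z, greenKernel z * f (x + s • z)

theorem greenAverage_eq_kernelAverage (f : E → ℝ) :
    greenAverage f = kernelAverage greenKernel f := by
  ext s x
  simp only [greenAverage, kernelAverage, smul_eq_mul, mul_comm]

/-- The Newtonian potential of a compactly supported `f`, with `-Δ (newtonPotential f) = f`. It is
written as the limit of `𝓠[R] f` as `R → ∞`, so that no singular kernel has to be handled. -/
noncomputable def newtonPotential (f : E → ℝ) (x : E) : ℝ :=
  ∫ s in Ioi (0 : ℝ), s * greenAverage f s x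

theorem integrable_greenKernel_mul (hf : Continuous f) (s : ℝ) (x : E) :
    Integrable fun z => greenKernel z * f (x + s • z) :=
  (isUnitBallKernel_greenKernel.mul (by fun_prop)).integrable

theorem continuous_uncurry_greenAverage (hf : Continuous f) :
    Continuous fun p : ℝ × E => greenAverage f p.1 p.2 := by
  rw [greenAverage_eq_kernelAverage]
  exact continuous_uncurry_kernelAverage isUnitBallKernel_greenKernel hf

theorem continuous_mul_greenAverage (hf : Continuous f) (x : E) :
    Continuous fun s => s * greenAverage f s x :=
  continuous_id.mul ((continuous_uncurry_greenAverage hf).comp (.prodMk_left x))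

theorem abs_greenAverage_le {B : ℝ} (hB : ∀ y, |f y| ≤ B) (s : ℝ) (x : E) :
    |greenAverage f s x| ≤ B * ∫ z : E, |greenKernel z| := by
  rw [greenAverage_eq_kernelAverage]
  exact norm_kernelAverage_le isUnitBallKernel_greenKernel fun _ _ => hB _

theorem abs_integral_mul_comp_smul_le {κ : E → ℝ} {B : ℝ} (hB : ∀ z, |κ z| ≤ B)
    (hf : Integrable f) {s : ℝ} (hs : 0 < s) (x : E) :
    |∫ z, κ z * f (x + s • z)| ≤ B * (s ^ Module.finrank ℝ E)⁻¹ * ∫ y, |f y| := by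
  have hscale : ∫ z, |f (x + s • z)| = (s ^ Module.finrank ℝ E)⁻¹ * ∫ y, |f y| := by
    rw [Measure.integral_comp_smul (volume : Measure E) (fun y => |f (x + y)|) s,
      integral_add_left_eq_self (fun y => |f y|) x, smul_eq_mul,
      abs_of_pos (inv_pos.2 (pow_pos hs _))]
  have hint : Integrable fun z => f (x + s • z) :=
    (integrable_comp_smul_iff volume _ hs.ne').2 (hf.comp_add_left x)
  calc |∫ z, κ z * f (x + s • z)| ≤ ∫ z, B * |f (x + s • z)| := by
        rw [← Real.norm_eq_abs]
        refine norm_integral_le_of_norm_le (hint.abs.const_mul B) (ae_of_all _ fun z => ?_)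
        rw [norm_mul]
        exact mul_le_mul_of_nonneg_right (hB z) (norm_nonneg _)
    _ = B * (s ^ Module.finrank ℝ E)⁻¹ * ∫ y, |f y| := by
        rw [integral_const_mul, hscale, mul_assoc]

theorem exists_abs_mul_greenAverage_le (hE : 3 ≤ Module.finrank ℝ E) (hf : Continuous f)
    (hfs : HasCompactSupport f) :
    ∃ C, ∀ s, 0 < s → ∀ x, |s * greenAverage f s x| ≤ C * (1 + s ^ 2)⁻¹ := by
  obtain ⟨B, hB⟩ := (isUnitBallKernel_greenKernel (E := E)).exists_abs_le
  obtain ⟨F, hF⟩ := hfs.exists_bound_of_continuous hf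
  set S := F * ∫ z : E, |greenKernel z|
  set T := B * ∫ y, |f y|
  have hS : 0 ≤ S :=
    mul_nonneg ((norm_nonneg _).trans (hF 0)) (integral_nonneg fun z => abs_nonneg _)
  have hT : 0 ≤ T :=
    mul_nonneg ((abs_nonneg _).trans (hB 0)) (integral_nonneg fun y => abs_nonneg _)
  refine ⟨2 * (S + T), fun s hs x => ?_⟩
  rw [abs_mul, abs_of_pos hs, ← div_eq_mul_inv, le_div_iff₀ (by positivity)]
  have := abs_nonneg (greenAverage f s x)
  rcases le_total s 1 with hs1 | hs1
  · have hAS : |greenAverage f s x| ≤ S := abs_greenAverage_le hF s x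
    calc s * |greenAverage f s x| * (1 + s ^ 2) ≤ 1 * S * (1 + 1 ^ 2) := by gcongr
      _ ≤ 2 * (S + T) := by linarith
  · have hAT : |greenAverage f s x| * s ^ 3 ≤ T := by
      rw [← le_div_iff₀ (by positivity)]
      calc |greenAverage f s x| ≤ B * (s ^ Module.finrank ℝ E)⁻¹ * ∫ y, |f y| :=
            abs_integral_mul_comp_smul_le hB (hf.integrable_of_hasCompactSupport hfs) hs x
        _ = T / s ^ Module.finrank ℝ E := by
            rw [div_eq_mul_inv, mul_right_comm]
        _ ≤ T / s ^ 3 := by gcongr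
    calc s * |greenAverage f s x| * (1 + s ^ 2)
        ≤ s * |greenAverage f s x| * (s ^ 2 + s ^ 2) := by
          gcongr
          exact one_le_pow₀ hs1
      _ = 2 * (|greenAverage f s x| * s ^ 3) := by ring
      _ ≤ 2 * (S + T) := by linarith

theorem integrableOn_const_mul_inv_one_add_sq (C : ℝ) (s : Set ℝ) :
    IntegrableOn (fun s : ℝ => C * (1 + s ^ 2)⁻¹) s :=
  (integrable_inv_one_add_sq.const_mul C).integrableOn

theorem integrableOn_mul_greenAverage (hE : 3 ≤ Module.finrank ℝ E) (hf : Continuous f)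
    (hfs : HasCompactSupport f) (x : E) :
    IntegrableOn (fun s => s * greenAverage f s x) (Ioi 0) := by
  obtain ⟨C, hC⟩ := exists_abs_mul_greenAverage_le hE hf hfs
  exact (integrableOn_const_mul_inv_one_add_sq C _).mono'
    (continuous_mul_greenAverage hf x).aestronglyMeasurable
    (ae_restrict_of_forall_mem measurableSet_Ioi fun s hs => hC s hs x)

theorem continuous_newtonPotential (hE : 3 ≤ Module.finrank ℝ E) (hf : Continuous f)
    (hfs : HasCompactSupport f) : Continuous (newtonPotential f) := by
  obtain ⟨C, hC⟩ := exists_abs_mul_greenAverage_le hE hf hfs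
  refine continuous_of_dominated (bound := fun s => C * (1 + s ^ 2)⁻¹)
    (fun x => (continuous_mul_greenAverage hf x).aestronglyMeasurable)
    (fun x => ae_restrict_of_forall_mem measurableSet_Ioi fun s hs => hC s hs x)
    (integrableOn_const_mul_inv_one_add_sq C _) (ae_of_all _ fun s => ?_)
  exact continuous_const.mul ((continuous_uncurry_greenAverage hf).comp (.prodMk_right s))

theorem tendsto_newtonPotential_cocompact (hE : 3 ≤ Module.finrank ℝ E) (hf : Continuous f)
    (hfs : HasCompactSupport f) :
    Tendsto (newtonPotential f) (cocompact E) (𝓝 0) := by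
  have := FiniteDimensional.proper_real E
  have : (cocompact E).IsCountablyGenerated := by
    rw [← Metric.cobounded_eq_cocompact, ← comap_norm_atTop]
    infer_instance
  obtain ⟨C, hC⟩ := exists_abs_mul_greenAverage_le hE hf hfs
  obtain ⟨R, hR⟩ := hfs.isCompact.isBounded.subset_closedBall (0 : E)
  have hzero : ∀ s > 0, ∀ x : E, R + s < ‖x‖ → greenAverage f s x = 0 := fun s hs x hx => by
    refine (integral_congr_ae (ae_of_all _ fun z => ?_)).trans (integral_zero E ℝ)
    by_contra! hne
    have hz : ‖z‖ < 1 := by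
      by_contra! hz
      exact hne (by simp only [isUnitBallKernel_greenKernel.eq_zero z hz, zero_mul])
    have hmem : ‖x + s • z‖ ≤ R := mem_closedBall_zero_iff.1
      (hR (subset_tsupport _ (right_ne_zero_of_mul hne)))
    have hx' : ‖x‖ ≤ ‖x + s • z‖ + ‖s • z‖ := by simpa using norm_sub_le (x + s • z) (s • z)
    rw [norm_smul, Real.norm_of_nonneg hs.le] at hx'
    nlinarith
  have hlim := tendsto_integral_filter_of_dominated_convergence (l := cocompact E)
    (μ := volume.restrict (Ioi 0)) (F := fun x s => s * greenAverage f s x) (f := fun _ => 0)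
    (fun s => C * (1 + s ^ 2)⁻¹)
    (.of_forall fun x => (continuous_mul_greenAverage hf x).aestronglyMeasurable)
    (.of_forall fun x => ae_restrict_of_forall_mem measurableSet_Ioi fun s hs => hC s hs x)
    (integrableOn_const_mul_inv_one_add_sq C _)
    (ae_restrict_of_forall_mem measurableSet_Ioi fun s hs => tendsto_const_nhds.congr' <| by
      filter_upwards [(tendsto_norm_cocompact_atTop (E := E)).eventually_gt_atTop (R + s)] with x hx
      rw [hzero s hs x hx, mul_zero])
  rwa [integral_zero] at hlim

theorem exists_abs_setIntegral_mul_greenAverage_le (hE : 3 ≤ Module.finrank ℝ E) (hf : Continuous f)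
    (hfs : HasCompactSupport f) :
    ∃ B, ∀ S ⊆ Ioi (0 : ℝ), MeasurableSet S → ∀ x, |∫ s in S, s * greenAverage f s x| ≤ B := by
  obtain ⟨C, hC⟩ := exists_abs_mul_greenAverage_le hE hf hfs
  refine ⟨∫ s in Ioi (0 : ℝ), C * (1 + s ^ 2)⁻¹, fun S hS hSm x => ?_⟩
  calc |∫ s in S, s * greenAverage f s x| ≤ ∫ s in S, C * (1 + s ^ 2)⁻¹ :=
        norm_integral_le_of_norm_le (f := fun s => s * greenAverage f s x)
          (integrableOn_const_mul_inv_one_add_sq C S)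
          (ae_restrict_of_forall_mem hSm fun s hs => hC s (hS hs) x)
    _ ≤ ∫ s in Ioi (0 : ℝ), C * (1 + s ^ 2)⁻¹ :=
        setIntegral_mono_set (integrableOn_const_mul_inv_one_add_sq C _)
          (ae_restrict_of_forall_mem measurableSet_Ioi fun s hs =>
            (abs_nonneg _).trans (hC s hs x)) hS.eventuallyLE

theorem exists_abs_newtonPotential_le (hE : 3 ≤ Module.finrank ℝ E) (hf : Continuous f)
    (hfs : HasCompactSupport f) : ∃ B, ∀ x, |newtonPotential f x| ≤ B :=
  (exists_abs_setIntegral_mul_greenAverage_le hE hf hfs).imp fun _ hB =>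
    hB _ subset_rfl measurableSet_Ioi

theorem exists_abs_green_le (hE : 3 ≤ Module.finrank ℝ E) (hf : Continuous f)
    (hfs : HasCompactSupport f) : ∃ B, ∀ r, 0 < r → ∀ x, |𝓠[r] f x| ≤ B := by
  obtain ⟨B, hB⟩ := exists_abs_setIntegral_mul_greenAverage_le hE hf hfs
  refine ⟨B, fun r hr x => ?_⟩
  rw [green_eq_integral hr hf, intervalIntegral.integral_of_le hr.le]
  exact hB _ Ioc_subset_Ioi_self measurableSet_Ioc x

theorem tendsto_green_newtonPotential (hE : 3 ≤ Module.finrank ℝ E) (hf : Continuous f)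
    (hfs : HasCompactSupport f) (x : E) :
    Tendsto (fun r => 𝓠[r] f x) atTop (𝓝 (newtonPotential f x)) := by
  refine (intervalIntegral_tendsto_integral_Ioi 0 (integrableOn_mul_greenAverage hE hf hfs x)
    tendsto_id).congr' ?_
  filter_upwards [eventually_gt_atTop 0] with r hr using (green_eq_integral hr hf x).symm

theorem newtonPotential_sub (hE : 3 ≤ Module.finrank ℝ E) (hf : Continuous f)
    (hfs : HasCompactSupport f) (hg : Continuous g) (hgs : HasCompactSupport g) (x : E) :
    newtonPotential (fun y => f y - g y) x = newtonPotential f x - newtonPotential g x := by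
  rw [newtonPotential, newtonPotential, newtonPotential,
    ← integral_sub (integrableOn_mul_greenAverage hE hf hfs x)
      (integrableOn_mul_greenAverage hE hg hgs x)]
  refine integral_congr_ae (ae_of_all _ fun s => ?_)
  simp only [greenAverage, mul_sub, integral_sub (integrable_greenKernel_mul hf s x)
    (integrable_greenKernel_mul hg s x)]

theorem newtonPotential_add (hE : 3 ≤ Module.finrank ℝ E) (hf : Continuous f)
    (hfs : HasCompactSupport f) (hg : Continuous g) (hgs : HasCompactSupport g) (x : E) :
    newtonPotential (fun y => f y + g y) x = newtonPotential f x + newtonPotential g x := by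
  have hsub := newtonPotential_sub hE (hf.add hg) (hfs.add hgs) hg hgs x
  simp only [Pi.add_apply, add_sub_cancel_right] at hsub
  rw [hsub]
  exact (sub_add_cancel _ _).symm

theorem newtonPotential_const_mul (c : ℝ) (f : E → ℝ) (x : E) :
    newtonPotential (fun y => c * f y) x = c * newtonPotential f x := by
  simp only [newtonPotential, greenAverage, mul_left_comm _ c, integral_const_mul]

theorem newtonPotential_nonneg (hf : ∀ y, 0 ≤ f y) (x : E) : 0 ≤ newtonPotential f x :=
  setIntegral_nonneg measurableSet_Ioi fun _ hs =>
    mul_nonneg (le_of_lt hs)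
      (integral_nonneg fun z => mul_nonneg (greenKernel_nonneg z) (hf _))

theorem exists_abs_mean_le (hE : 0 < Module.finrank ℝ E) (hf : Continuous f)
    (hfs : HasCompactSupport f) : ∃ C, ∀ r, 1 ≤ r → ∀ x, |𝓜[r] f x| ≤ C * r⁻¹ := by
  obtain ⟨B, hB⟩ := (isUnitBallKernel_meanKernel (E := E)).exists_abs_le
  have hB0 : 0 ≤ B := (abs_nonneg _).trans (hB 0)
  refine ⟨B * ∫ y, |f y|, fun r hr x => ?_⟩
  have hr0 : 0 < r := one_pos.trans_le hr
  rw [mean_eq_integral hr0]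
  calc |∫ z, meanKernel z * f (x + r • z)|
      ≤ B * (r ^ Module.finrank ℝ E)⁻¹ * ∫ y, |f y| :=
        abs_integral_mul_comp_smul_le hB (hf.integrable_of_hasCompactSupport hfs) hr0 x
    _ ≤ B * r⁻¹ * ∫ y, |f y| := by
        gcongr
        exact le_self_pow₀ hr hE.ne'
    _ = B * (∫ y, |f y|) * r⁻¹ := mul_right_comm _ _ _

theorem newtonPotential_eq_mean_add_green (hE : 3 ≤ Module.finrank ℝ E) (hf : Continuous f)
    (hfs : HasCompactSupport f) (hr : 0 < r) (x : E) :
    newtonPotential f x = 𝓜[r] (newtonPotential f) x + 𝓠[r] f x := by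
  have := FiniteDimensional.proper_real E
  obtain ⟨B, hB⟩ := exists_abs_green_le hE hf hfs
  obtain ⟨C, hC⟩ := exists_abs_mean_le (by lia) hf hfs
  have hn : ∀ n : ℕ, (1 : ℝ) ≤ n + 1 := fun n => by simp
  have hn0 : ∀ n : ℕ, (0 : ℝ) < n + 1 := fun n => by positivity
  have hinf : Tendsto (fun n : ℕ => (n : ℝ) + 1) atTop atTop :=
    tendsto_atTop_add_const_right atTop 1 tendsto_natCast_atTop_atTop
  have hmean : Tendsto (fun n : ℕ => 𝓜[r] (𝓠[(n : ℝ) + 1] f) x) atTop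
      (𝓝 (𝓜[r] (newtonPotential f) x)) :=
    (isBallMeasure_meanMeasure hr).tendsto_shiftIntegral
      (fun n => ((isBallMeasure_greenMeasure _).continuous_shiftIntegral hf).continuousOn)
      (fun n y _ => hB _ (hn0 n) y)
      fun y _ => (tendsto_green_newtonPotential hE hf hfs y).comp hinf
  have hgreen : Tendsto (fun n : ℕ => 𝓠[r] (𝓜[(n : ℝ) + 1] f) x) atTop (𝓝 0) := by
    have hC0 : 0 ≤ C := (abs_nonneg _).trans ((hC 1 le_rfl 0).trans_eq (by simp))
    have hlim := (isBallMeasure_greenMeasure r).tendsto_shiftIntegral (x := x) (f := fun _ => 0)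
      (B := C) (F := fun n : ℕ => 𝓜[(n : ℝ) + 1] f)
      (fun n => ((isBallMeasure_meanMeasure (hn0 n)).continuous_shiftIntegral hf).continuousOn)
      (fun n y _ => (hC _ (hn n) y).trans
        (mul_le_of_le_one_right hC0 (inv_le_one_of_one_le₀ (hn n))))
      fun y _ => squeeze_zero_norm (fun n => hC _ (hn n) y) <| by
        simpa using (tendsto_inv_atTop_zero.comp hinf).const_mul C
    simpa only [shiftIntegral_const, mul_zero] using hlim
  have hleft := ((tendsto_green_newtonPotential hE hf hfs x).comp hinf).sub hmean
  have hright := (tendsto_const_nhds (x := 𝓠[r] f x)).sub hgreen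
  have heq := tendsto_nhds_unique hleft
    (hright.congr fun n => (green_sub_mean_green hf hr (hn0 n) x).symm)
  linarith

theorem newtonPotential_nonpos (hE : 3 ≤ Module.finrank ℝ E) (hf : Continuous f)
    (hfs : HasCompactSupport f) (hle : ∀ x, 0 < newtonPotential f x → f x ≤ 0) (x : E) :
    newtonPotential f x ≤ 0 := by
  have := FiniteDimensional.proper_real E
  have : Nontrivial E := Module.nontrivial_of_finrank_pos (R := ℝ) (by lia)
  have hcont := continuous_newtonPotential hE hf hfs
  obtain ⟨y, hy⟩ := exists_ne x
  obtain ⟨B, hB⟩ := exists_abs_newtonPotential_le hE hf hfs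
  refine nonpos_of_le_mean hE (finite_singleton y) (singleton_nonempty y) hcont.continuousOn
    (fun x _ => (le_abs_self _).trans (hB x))
    (fun η hη => (tendsto_newtonPotential_cocompact hE hf hfs).eventually_lt_const hη)
    (fun x _ hx => ?_) x hy.symm
  filter_upwards [nhdsWithin_le_nhds (eventually_closedBall_subset
    (hcont.continuousAt.eventually_const_lt hx)), self_mem_nhdsWithin] with r hball hr
  have hgreen : 𝓠[r] f x ≤ 𝓠[r] (fun _ => 0) x :=
    (isBallMeasure_greenMeasure r).shiftIntegral_mono hf.continuousOn continuousOn_const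
      fun y hy => hle y (hball hy)
  rw [shiftIntegral_const, mul_zero] at hgreen
  linarith [newtonPotential_eq_mean_add_green hE hf hfs hr x]

theorem newtonPotential_le (hE : 3 ≤ Module.finrank ℝ E) (hf : Continuous f)
    (hfs : HasCompactSupport f) (hg : Continuous g) (hgs : HasCompactSupport g)
    (hle : ∀ x, newtonPotential g x < newtonPotential f x → f x ≤ g x) (x : E) :
    newtonPotential f x ≤ newtonPotential g x := by
  have hsub := newtonPotential_sub hE hf hfs hg hgs
  refine sub_nonpos.1 ((hsub x).symm.trans_le
    (newtonPotential_nonpos hE (hf.sub hg) (hfs.sub hgs) (fun y hy => ?_) x))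
  exact sub_nonpos.2 (hle y (sub_pos.1 (hy.trans_eq (hsub y))))

end NewtonPotential

/-! ### The semilinear integral equation -/

section SemilinearEquation

variable {E : Type*} [NormedAddCommGroup E] [InnerProductSpace ℝ E] [FiniteDimensional ℝ E]
  [MeasurableSpace E] [BorelSpace E] {ψ h h₁ h₂ u₁ u₂ : E → ℝ} {F : ℝ → ℝ} {L : ℝ≥0} {a δ M : ℝ}

theorem sub_le_mul_newtonPotential (hE : 3 ≤ Module.finrank ℝ E) (hψ : Continuous ψ)
    (hψs : HasCompactSupport ψ) (hψ0 : ∀ x, 0 ≤ ψ x) (hF : Continuous F) (hFa : Antitone F)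
    (ha : 0 ≤ a) (hM : 0 ≤ M) (hh₁ : Continuous h₁) (hh₁s : HasCompactSupport h₁)
    (hh₂ : Continuous h₂) (hh₂s : HasCompactSupport h₂) (hle : ∀ x, h₁ x ≤ h₂ x + M * ψ x)
    (hu₁c : Continuous u₁) (hu₂c : Continuous u₂)
    (hu₁ : ∀ x, u₁ x = newtonPotential (fun y => a * (ψ y * F (u₁ y)) + h₁ y) x)
    (hu₂ : ∀ x, u₂ x = newtonPotential (fun y => a * (ψ y * F (u₂ y)) + h₂ y) x) (x : E) :
    u₁ x - u₂ x ≤ M * newtonPotential ψ x := by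
  have hs : ∀ u : E → ℝ, HasCompactSupport fun y => a * (ψ y * F (u y)) := fun u =>
    hψs.mul_right.mul_left
  have hMs : HasCompactSupport fun y => M * ψ y := hψs.mul_left
  have hsum : ∀ y, newtonPotential (fun y => (a * (ψ y * F (u₂ y)) + h₂ y) + M * ψ y) y =
      u₂ y + M * newtonPotential ψ y := fun y => by
    rw [newtonPotential_add hE (f := fun y => a * (ψ y * F (u₂ y)) + h₂ y) (by fun_prop)
      ((hs u₂).add hh₂s) (by fun_prop) hMs,
      newtonPotential_const_mul, ← hu₂]
  have hcmp := newtonPotential_le hE (f := fun y => a * (ψ y * F (u₁ y)) + h₁ y)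
    (g := fun y => (a * (ψ y * F (u₂ y)) + h₂ y) + M * ψ y) (by fun_prop) ((hs u₁).add hh₁s)
    (by fun_prop) (((hs u₂).add hh₂s).add hMs) (fun y hy => ?_) x
  · rw [hsum, ← hu₁] at hcmp
    linarith
  · rw [hsum, ← hu₁] at hy
    have hFle : F (u₁ y) ≤ F (u₂ y) :=
      hFa (by linarith [mul_nonneg hM (newtonPotential_nonneg hψ0 y)])
    have := hψ0 y
    have hmul : a * (ψ y * F (u₁ y)) ≤ a * (ψ y * F (u₂ y)) := by gcongr
    linarith [hle y]

/-- Solvability of the integral equation `u = G (a ψ F(u) + h)`, where `G` is the Newtonian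
potential, for every continuous compactly supported `h`; the parameter `a` is the one along which
the continuity method runs. -/
def IsSolvableAt (ψ : E → ℝ) (F : ℝ → ℝ) (a : ℝ) : Prop :=
  ∀ h : E → ℝ, Continuous h → HasCompactSupport h → ∃ u : E → ℝ, Continuous u ∧
    ∀ x, u x = newtonPotential (fun y => a * (ψ y * F (u y)) + h y) x

theorem isSolvableAt_zero (hE : 3 ≤ Module.finrank ℝ E) (ψ : E → ℝ) (F : ℝ → ℝ) :
    IsSolvableAt ψ F 0 := fun h hh hhs =>
  ⟨newtonPotential h, continuous_newtonPotential hE hh hhs, fun x => by simp⟩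

theorem IsSolvableAt.exists_boundedContinuousFunction (hE : 3 ≤ Module.finrank ℝ E)
    (ha : IsSolvableAt ψ F a) (hψ : Continuous ψ) (hψs : HasCompactSupport ψ) (hF : Continuous F)
    (hh : Continuous h) (hhs : HasCompactSupport h) :
    ∃ u : BoundedContinuousFunction E ℝ,
      ∀ x, u x = newtonPotential (fun y => a * (ψ y * F (u y)) + h y) x := by
  obtain ⟨u, huc, hu⟩ := ha h hh hhs
  obtain ⟨B, hB⟩ := exists_abs_newtonPotential_le hE
    (f := fun y => a * (ψ y * F (u y)) + h y) (by fun_prop) ((hψs.mul_right.mul_left).add hhs)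
  exact ⟨BoundedContinuousFunction.ofNormedAddCommGroup u huc B fun x => by
    rw [hu x]; exact hB x, hu⟩

theorem IsSolvableAt.add (hE : 3 ≤ Module.finrank ℝ E) (hψ : Continuous ψ)
    (hψs : HasCompactSupport ψ) (hψ0 : ∀ x, 0 ≤ ψ x) (hFa : Antitone F) (hFL : LipschitzWith L F)
    (ha0 : 0 ≤ a) (hδ : 0 ≤ δ) (hδL : ∀ x, δ * L * newtonPotential ψ x ≤ 1 / 2)
    (ha : IsSolvableAt ψ F a) : IsSolvableAt ψ F (a + δ) := by
  intro h hh hhs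
  have hF := hFL.continuous
  have hs : ∀ v : BoundedContinuousFunction E ℝ,
      HasCompactSupport fun y => δ * (ψ y * F (v y)) + h y := fun v =>
    (hψs.mul_right.mul_left).add hhs
  have hc : ∀ v : BoundedContinuousFunction E ℝ,
      Continuous fun y => δ * (ψ y * F (v y)) + h y := fun v => by
    have := v.continuous
    fun_prop
  choose T hT using fun v => ha.exists_boundedContinuousFunction hE hψ hψs hF (hc v) (hs v)
  have hsource : ∀ v₁ v₂ : BoundedContinuousFunction E ℝ, ∀ x,
      δ * (ψ x * F (v₁ x)) + h x ≤ δ * (ψ x * F (v₂ x)) + h x + δ * L * dist v₁ v₂ * ψ x := by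
    intro v₁ v₂ x
    have hFv : F (v₁ x) ≤ F (v₂ x) + L * dist v₁ v₂ := by
      have hdist := (hFL.dist_le_mul (v₁ x) (v₂ x)).trans
        (mul_le_mul_of_nonneg_left (BoundedContinuousFunction.dist_coe_le_dist x) L.2)
      linarith [(le_abs_self _).trans hdist]
    have := hψ0 x
    have hmul : δ * (ψ x * F (v₁ x)) ≤ δ * (ψ x * (F (v₂ x) + L * dist v₁ v₂)) := by gcongr
    linarith
  have hsub : ∀ v₁ v₂ x, T v₁ x - T v₂ x ≤ 1 / 2 * dist v₁ v₂ := fun v₁ v₂ x =>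
    calc T v₁ x - T v₂ x ≤ δ * L * dist v₁ v₂ * newtonPotential ψ x :=
          sub_le_mul_newtonPotential hE hψ hψs hψ0 hF hFa ha0 (by positivity) (hc v₁) (hs v₁)
            (hc v₂) (hs v₂) (hsource v₁ v₂) (T v₁).continuous (T v₂).continuous (hT v₁) (hT v₂) x
      _ = δ * L * newtonPotential ψ x * dist v₁ v₂ := mul_right_comm _ _ _
      _ ≤ 1 / 2 * dist v₁ v₂ := mul_le_mul_of_nonneg_right (hδL x) dist_nonneg
  have hcontr : ContractingWith (1 / 2 : ℝ≥0) T := by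
    refine ⟨by rw [div_lt_one] <;> norm_num, LipschitzWith.of_dist_le_mul fun v₁ v₂ => ?_⟩
    refine (BoundedContinuousFunction.dist_le (by positivity)).2 fun x => ?_
    rw [Real.dist_eq, abs_sub_le_iff, NNReal.coe_div, NNReal.coe_one, NNReal.coe_ofNat]
    exact ⟨hsub v₁ v₂ x, by rw [dist_comm]; exact hsub v₂ v₁ x⟩
  obtain ⟨u, hfix⟩ : ∃ u, T u = u := ⟨_, hcontr.fixedPoint_isFixedPt⟩
  refine ⟨u, u.continuous, fun x => ?_⟩
  have hx := hT u x
  rw [hfix] at hx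
  simpa only [add_mul, add_assoc] using hx

theorem exists_eq_newtonPotential (hE : 3 ≤ Module.finrank ℝ E) (hψ : Continuous ψ)
    (hψs : HasCompactSupport ψ) (hψ0 : ∀ x, 0 ≤ ψ x) (hFa : Antitone F)
    (hFL : LipschitzWith L F) :
    ∃ u : E → ℝ, Continuous u ∧ ∀ x, u x = newtonPotential (fun y => ψ y * F (u y)) x := by
  obtain ⟨B, hB⟩ := exists_abs_newtonPotential_le hE hψ hψs
  obtain ⟨J, hJ⟩ := exists_nat_gt (2 * (L * B))
  have hJ0 : (0 : ℝ) < J + 1 := by positivity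
  have hsmall : ∀ x, ((J : ℝ) + 1)⁻¹ * L * newtonPotential ψ x ≤ 1 / 2 := fun x => by
    have hLB : L * newtonPotential ψ x ≤ L * B :=
      mul_le_mul_of_nonneg_left ((le_abs_self _).trans (hB x)) L.2
    rw [mul_assoc, inv_mul_le_iff₀ hJ0]
    linarith
  have hstep : ∀ j : ℕ, IsSolvableAt ψ F (j * ((J : ℝ) + 1)⁻¹) := by
    intro j
    induction j with
    | zero => simpa using isSolvableAt_zero hE ψ F
    | succ j ih =>
      rw [Nat.cast_succ, add_one_mul]
      exact ih.add hE hψ hψs hψ0 hFa hFL (by positivity) (by positivity) hsmall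
  have hone := hstep (J + 1)
  rw [Nat.cast_succ, mul_inv_cancel₀ hJ0.ne'] at hone
  simpa using hone (fun _ => 0) continuous_const HasCompactSupport.zero

end SemilinearEquation

section Regularization

theorem abs_rpow_neg_sub_rpow_neg_le {p c a b : ℝ} (hp : 0 ≤ p) (hc : 0 < c) (ha : c ≤ a)
    (hb : c ≤ b) : |a ^ (-p) - b ^ (-p)| ≤ p * c ^ (-p - 1) * |a - b| := by
  refine (convex_Ici c).norm_image_sub_le_of_norm_hasDerivWithin_le
    (f := fun t : ℝ => t ^ (-p)) (f' := fun t => -p * t ^ (-p - 1))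
    (fun t ht => (Real.hasDerivAt_rpow_const (Or.inl (hc.trans_le ht).ne')).hasDerivWithinAt)
    (fun t ht => ?_) hb ha
  have ht0 : 0 < t := hc.trans_le ht
  rw [norm_mul, norm_neg, Real.norm_of_nonneg hp, Real.norm_of_nonneg (by positivity)]
  exact mul_le_mul_of_nonneg_left (Real.rpow_le_rpow_of_nonpos hc ht (by linarith)) hp

/-- The function `u ↦ u ^ (-p)`, shifted by `ε` and extended to `ℝ` by freezing it on the negative
half-line, so that it becomes bounded and Lipschitz. -/
noncomputable def regularizedRpow (p ε u : ℝ) : ℝ := (max u 0 + ε) ^ (-p)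

variable {p ε : ℝ}

theorem regularizedRpow_pos (p : ℝ) (hε : 0 < ε) (u : ℝ) : 0 < regularizedRpow p ε u :=
  Real.rpow_pos_of_pos (by positivity) _

theorem antitone_regularizedRpow (hp : 0 ≤ p) (hε : 0 < ε) : Antitone (regularizedRpow p ε) :=
  fun _ _ hab => Real.rpow_le_rpow_of_nonpos (by positivity) (by gcongr) (by linarith)

theorem exists_lipschitzWith_regularizedRpow (hp : 0 ≤ p) (hε : 0 < ε) :
    ∃ L, LipschitzWith L (regularizedRpow p ε) := by
  refine ⟨⟨p * ε ^ (-p - 1), by positivity⟩, LipschitzWith.of_dist_le_mul fun a b => ?_⟩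
  calc |regularizedRpow p ε a - regularizedRpow p ε b|
      ≤ p * ε ^ (-p - 1) * |max a 0 + ε - (max b 0 + ε)| :=
        abs_rpow_neg_sub_rpow_neg_le hp hε (by simp) (by simp)
    _ ≤ p * ε ^ (-p - 1) * |a - b| := by
        rw [add_sub_add_right_eq_sub]
        exact mul_le_mul_of_nonneg_left (abs_max_sub_max_le_abs a b 0) (by positivity)

/-- A continuous cutoff on the half-line, supported in `[1 / (n + 1), n + 2]` and increasing to `1`
on `(0, ∞)` as `n → ∞`. -/
noncomputable def annularCutoff (n : ℕ) (t : ℝ) : ℝ :=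
  max 0 (min 1 (min ((n + 1) * t - 1) (n + 2 - t)))

variable {n : ℕ} {t : ℝ}

theorem continuous_annularCutoff (n : ℕ) : Continuous (annularCutoff n) := by
  unfold annularCutoff
  fun_prop

theorem annularCutoff_nonneg (n : ℕ) (t : ℝ) : 0 ≤ annularCutoff n t := le_max_left _ _

theorem annularCutoff_le_one (n : ℕ) (t : ℝ) : annularCutoff n t ≤ 1 :=
  max_le zero_le_one (min_le_left _ _)

theorem annularCutoff_of_mul_le_one (h : ((n : ℝ) + 1) * t ≤ 1) : annularCutoff n t = 0 :=
  max_eq_left ((min_le_right _ _).trans ((min_le_left _ _).trans (by linarith)))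

theorem annularCutoff_of_ge (h : (n : ℝ) + 2 ≤ t) : annularCutoff n t = 0 :=
  max_eq_left ((min_le_right _ _).trans ((min_le_right _ _).trans (by linarith)))

theorem annularCutoff_of_nonpos (h : t ≤ 0) : annularCutoff n t = 0 :=
  annularCutoff_of_mul_le_one
    ((mul_nonpos_of_nonneg_of_nonpos (by positivity) h).trans zero_le_one)

theorem annularCutoff_le_succ (n : ℕ) (t : ℝ) : annularCutoff n t ≤ annularCutoff (n + 1) t := by
  rcases le_or_gt t 0 with ht | ht
  · rw [annularCutoff_of_nonpos ht, annularCutoff_of_nonpos ht]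
  · unfold annularCutoff
    push_cast
    gcongr <;> linarith

theorem annularCutoff_eq_one (h : 2 ≤ ((n : ℝ) + 1) * t) (h' : t ≤ n + 1) :
    annularCutoff n t = 1 := by
  rw [annularCutoff, min_eq_left (le_min (by linarith) (by linarith)), max_eq_right zero_le_one]

theorem eventually_annularCutoff_eq_one (ht : 0 < t) :
    ∀ᶠ n : ℕ in atTop, annularCutoff n t = 1 := by
  have hlarge : ∀ c : ℝ, ∀ᶠ n : ℕ in atTop, c ≤ n := fun c =>
    tendsto_natCast_atTop_atTop.eventually (eventually_ge_atTop c)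
  filter_upwards [hlarge (2 / t), hlarge t] with n hn hn'
  rw [div_le_iff₀ ht] at hn
  exact annularCutoff_eq_one (by linarith) (by linarith)

/-- The truncation of the weight `φ` to `[1 / (n + 1), n + 2]`. -/
noncomputable def cutoffWeight (φ : ℝ → ℝ) (n : ℕ) (t : ℝ) : ℝ := φ t * annularCutoff n t

variable {φ : ℝ → ℝ}

theorem continuous_cutoffWeight (hφ : ContinuousOn φ (Ioi 0)) (n : ℕ) :
    Continuous (cutoffWeight φ n) := by
  refine continuous_iff_continuousAt.2 fun t => ?_
  rcases lt_or_ge 0 t with ht | ht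
  · exact (hφ.continuousAt (Ioi_mem_nhds ht)).mul (continuous_annularCutoff n).continuousAt
  · have hzero : cutoffWeight φ n =ᶠ[𝓝 t] fun _ => 0 := by
      filter_upwards [Iio_mem_nhds (ht.trans_lt (by positivity : (0 : ℝ) < 1 / (n + 1)))]
        with s hs
      rw [mem_Iio, lt_div_iff₀ (by positivity)] at hs
      rw [cutoffWeight, annularCutoff_of_mul_le_one (by linarith), mul_zero]
    exact hzero.continuousAt

theorem cutoffWeight_of_nonpos (ht : t ≤ 0) : cutoffWeight φ n t = 0 := by
  rw [cutoffWeight, annularCutoff_of_nonpos ht, mul_zero]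

theorem cutoffWeight_nonneg (hφ : ∀ r, 0 < r → 0 < φ r) (n : ℕ) (t : ℝ) :
    0 ≤ cutoffWeight φ n t := by
  rcases lt_or_ge 0 t with ht | ht
  · exact mul_nonneg (hφ t ht).le (annularCutoff_nonneg n t)
  · exact (cutoffWeight_of_nonpos ht).ge

theorem cutoffWeight_le_succ (hφ : ∀ r, 0 < r → 0 < φ r) (n : ℕ) (t : ℝ) :
    cutoffWeight φ n t ≤ cutoffWeight φ (n + 1) t := by
  rcases lt_or_ge 0 t with ht | ht
  · exact mul_le_mul_of_nonneg_left (annularCutoff_le_succ n t) (hφ t ht).le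
  · rw [cutoffWeight_of_nonpos ht, cutoffWeight_of_nonpos ht]

theorem cutoffWeight_le (hφ : ∀ r, 0 < r → 0 < φ r) (n : ℕ) (ht : 0 < t) :
    cutoffWeight φ n t ≤ φ t :=
  mul_le_of_le_one_right (hφ t ht).le (annularCutoff_le_one n t)

end Regularization

section InfDist

variable {E : Type*} [NormedAddCommGroup E] {K : Set E}

theorem infDist_pos_of_finite (hK : K.Finite) (hne : K.Nonempty) {x : E} (hx : x ∈ Kᶜ) :
    0 < infDist x K :=
  (hK.isClosed.notMem_iff_infDist_pos hne).1 hx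

theorem continuousOn_comp_infDist (hK : K.Finite) (hne : K.Nonempty) {φ : ℝ → ℝ}
    (hφc : ContinuousOn φ (Ioi 0)) : ContinuousOn (fun x => φ (infDist x K)) Kᶜ :=
  hφc.comp (continuous_infDist_pt K).continuousOn fun _ hx => infDist_pos_of_finite hK hne hx

theorem exists_norm_le_infDist_add (hK : K.Finite) (hne : K.Nonempty) :
    ∃ R, ∀ x, ‖x‖ ≤ infDist x K + R := by
  obtain ⟨R, hR⟩ := hK.isBounded.subset_closedBall (0 : E)
  refine ⟨R, fun x => ?_⟩
  obtain ⟨y, hy, hxy⟩ := hK.isCompact.exists_infDist_eq_dist hne x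
  rw [hxy, dist_eq_norm]
  linarith [mem_closedBall_zero_iff.1 (hR hy), norm_sub_norm_le x y]

theorem exists_infDist_eq [NormedSpace ℝ E] [Nontrivial E] (hK : K.Finite) (hne : K.Nonempty)
    {t : ℝ} (ht : 0 ≤ t) : ∃ x, infDist x K = t := by
  obtain ⟨R, hR⟩ := exists_norm_le_infDist_add hK hne
  obtain ⟨y, hy⟩ := NormedSpace.exists_lt_norm ℝ E (t + R)
  obtain ⟨k, hk⟩ := hne
  refine mem_range_of_exists_le_of_exists_ge (continuous_infDist_pt K)
    ⟨k, (infDist_zero_of_mem hk).trans_le ht⟩ ⟨y, ?_⟩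
  linarith [hR y]

theorem hasCompactSupport_cutoffWeight_infDist [ProperSpace E] (hK : K.Finite) (hne : K.Nonempty)
    (φ : ℝ → ℝ) (n : ℕ) : HasCompactSupport fun x => cutoffWeight φ n (infDist x K) := by
  obtain ⟨R, hR⟩ := exists_norm_le_infDist_add hK hne
  refine HasCompactSupport.intro (isCompact_closedBall 0 (n + 2 + R)) fun x hx => ?_
  rw [mem_closedBall_zero_iff, not_le] at hx
  rw [cutoffWeight, annularCutoff_of_ge (by linarith [hR x]), mul_zero]

end InfDist

section Comparison

variable {E : Type*} [NormedAddCommGroup E] [InnerProductSpace ℝ E] [FiniteDimensional ℝ E]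
  [MeasurableSpace E] [BorelSpace E] {K : Set E} {u v f g : E → ℝ}

theorem eventually_eq_mean_add_green {Ω : Set E} (hΩ : IsOpen Ω) (hu : ContDiffOn ℝ 2 u Ω) {x : E}
    (hx : x ∈ Ω) : ∀ᶠ r in 𝓝[>] 0, u x = 𝓜[r] u x + 𝓠[r] (fun y => -Δ u y) x := by
  filter_upwards [self_mem_nhdsWithin,
    nhdsWithin_le_nhds (eventually_closedBall_subset (hΩ.mem_nhds hx))] with r hr hball
  exact eq_mean_add_green hΩ hu hr hball

theorem le_of_eq_mean_add_green (hE : 3 ≤ Module.finrank ℝ E) (hK : K.Finite) (hne : K.Nonempty)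
    (hu : ContinuousOn u Kᶜ) (hv : ContinuousOn v Kᶜ) (hf : ContinuousOn f Kᶜ)
    (hg : ContinuousOn g Kᶜ)
    (huf : ∀ x ∈ Kᶜ, ∀ᶠ r in 𝓝[>] 0, u x = 𝓜[r] u x + 𝓠[r] f x)
    (hvg : ∀ x ∈ Kᶜ, ∀ᶠ r in 𝓝[>] 0, v x = 𝓜[r] v x + 𝓠[r] g x)
    (hfg : ∀ x ∈ Kᶜ, v x < u x → f x ≤ g x) {B : ℝ} (hB : ∀ x ∈ Kᶜ, u x - v x ≤ B)
    (hinf : ∀ η > 0, ∀ᶠ x in cocompact E, u x - v x < η) : ∀ x ∈ Kᶜ, u x ≤ v x := by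
  have := FiniteDimensional.proper_real E
  have hopen : IsOpen Kᶜ := hK.isClosed.isOpen_compl
  suffices hmean : ∀ x ∈ Kᶜ, 0 < u x - v x →
      ∀ᶠ r in 𝓝[>] 0, u x - v x ≤ 𝓜[r] (fun y => u y - v y) x from fun x hx =>
    sub_nonpos.1 (nonpos_of_le_mean hE hK hne (hu.sub hv) hB hinf hmean x hx)
  intro x hx hpos
  have hnhds : {y ∈ Kᶜ | 0 < u y - v y} ∈ 𝓝 x :=
    ((hu.sub hv).isOpen_inter_preimage hopen isOpen_Ioi).mem_nhds ⟨hx, hpos⟩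
  filter_upwards [huf x hx, hvg x hx, self_mem_nhdsWithin,
    nhdsWithin_le_nhds (eventually_closedBall_subset hnhds)] with r hur hvr hr hball
  have hballK : closedBall x r ⊆ Kᶜ := fun y hy => (hball hy).1
  have hgreen : 𝓠[r] f x ≤ 𝓠[r] g x :=
    (isBallMeasure_greenMeasure r).shiftIntegral_mono (hf.mono hballK) (hg.mono hballK)
      fun y hy => hfg y (hballK hy) (sub_pos.1 (hball hy).2)
  rw [(isBallMeasure_meanMeasure hr).shiftIntegral_sub (hu.mono hballK) (hv.mono hballK)]
  linarith

theorem le_of_laplacian_le (hE : 3 ≤ Module.finrank ℝ E) (hK : K.Finite) (hne : K.Nonempty)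
    (hu : ContDiffOn ℝ 2 u Kᶜ) (hv : ContDiffOn ℝ 2 v Kᶜ)
    (hΔ : ∀ x ∈ Kᶜ, v x < u x → Δ v x ≤ Δ u x) {B : ℝ} (hB : ∀ x ∈ Kᶜ, u x - v x ≤ B)
    (hinf : ∀ η > 0, ∀ᶠ x in cocompact E, u x - v x < η) : ∀ x ∈ Kᶜ, u x ≤ v x := by
  have hopen : IsOpen Kᶜ := hK.isClosed.isOpen_compl
  exact le_of_eq_mean_add_green hE hK hne hu.continuousOn hv.continuousOn
    (continuousOn_laplacian hopen hu).neg (continuousOn_laplacian hopen hv).neg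
    (fun x hx => eventually_eq_mean_add_green hopen hu hx)
    (fun x hx => eventually_eq_mean_add_green hopen hv hx)
    (fun x hx hlt => neg_le_neg (hΔ x hx hlt)) hB hinf

theorem newtonPotential_pos (hE : 3 ≤ Module.finrank ℝ E) (hf : Continuous f)
    (hfs : HasCompactSupport f) (hf0 : ∀ x, 0 ≤ f x) {y : E} (hy : 0 < f y) (x : E) :
    0 < newtonPotential f x := by
  have hgreen : ∀ r x, 0 ≤ 𝓠[r] f x := fun r x => integral_nonneg fun z => hf0 (x + z)
  have hmean : ∀ r x, 0 ≤ 𝓜[r] (newtonPotential f) x := fun r x =>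
    integral_nonneg fun z => newtonPotential_nonneg hf0 (x + z)
  have hposy : 0 < newtonPotential f y := by
    obtain ⟨r, hr, hball⟩ := nhds_basis_closedBall.mem_iff.1 (hf.continuousAt.eventually
      (lt_mem_nhds hy))
    rw [newtonPotential_eq_mean_add_green hE hf hfs hr]
    exact add_pos_of_nonneg_of_pos (hmean r y) (green_pos hr hf.continuousOn hball)
  have hr : 0 < ‖y - x‖ + 1 := by positivity
  rw [newtonPotential_eq_mean_add_green hE hf hfs hr]
  exact add_pos_of_pos_of_nonneg (mean_pos hr (continuous_newtonPotential hE hf hfs)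
    (newtonPotential_nonneg hf0) hposy (lt_add_one _)) (hgreen _ x)

end Comparison

section RegularizedSource

variable {E : Type*} [NormedAddCommGroup E] {K : Set E} {φ : ℝ → ℝ}

/-- The right-hand side of the `n`-th regularized problem: `φ` is cut off near `0` and `∞`, and
`u ^ (-p)` is regularized at scale `1 / (n + 1)`. -/
noncomputable def regularizedSource (K : Set E) (p : ℝ) (φ : ℝ → ℝ) (n : ℕ) (w : E → ℝ) (x : E) :
    ℝ :=
  cutoffWeight φ n (infDist x K) * regularizedRpow p (1 / (n + 1)) (w x)

theorem regularizedSource_nonneg (hφ : ∀ r, 0 < r → 0 < φ r) (K : Set E) (p : ℝ) (n : ℕ)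
    (w : E → ℝ) (x : E) : 0 ≤ regularizedSource K p φ n w x :=
  mul_nonneg (cutoffWeight_nonneg hφ n _) (regularizedRpow_pos p (by positivity) _).le

theorem hasCompactSupport_regularizedSource [ProperSpace E] (hK : K.Finite) (hne : K.Nonempty)
    (p : ℝ) (φ : ℝ → ℝ) (n : ℕ) (w : E → ℝ) : HasCompactSupport (regularizedSource K p φ n w) :=
  (hasCompactSupport_cutoffWeight_infDist hK hne φ n).mul_right

theorem continuous_regularizedSource {p : ℝ} (hp : 0 ≤ p) (hφc : ContinuousOn φ (Ioi 0)) (n : ℕ)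
    {w : E → ℝ} (hw : Continuous w) : Continuous (regularizedSource K p φ n w) := by
  obtain ⟨L, hL⟩ := exists_lipschitzWith_regularizedRpow hp (by positivity : (0 : ℝ) < 1 / (n + 1))
  exact ((continuous_cutoffWeight hφc n).comp (continuous_infDist_pt K)).mul
    (hL.continuous.comp hw)

end RegularizedSource

section RegularizedProblem

variable {E : Type*} [NormedAddCommGroup E] [InnerProductSpace ℝ E] [FiniteDimensional ℝ E]

/-- A positive `C²` supersolution of `-Δ u = φ(dist(x, K)) u ^ (-p)` off `K`. -/
structure IsSupersolution (K : Set E) (p : ℝ) (φ : ℝ → ℝ) (u : E → ℝ) : Prop where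
  contDiffOn : ContDiffOn ℝ 2 u Kᶜ
  pos : ∀ x ∈ Kᶜ, 0 < u x
  le_neg_laplacian : ∀ x ∈ Kᶜ, φ (infDist x K) * u x ^ (-p) ≤ -Δ u x

variable [MeasurableSpace E] [BorelSpace E]

/-- A continuous solution of the `n`-th regularized problem, in the integral form that does not
presuppose any differentiability. -/
structure IsRegularizedSolution (K : Set E) (p : ℝ) (φ : ℝ → ℝ) (n : ℕ) (w : E → ℝ) : Prop where
  continuous : Continuous w
  eq_newtonPotential : w = newtonPotential (regularizedSource K p φ n w)

variable {K : Set E} {p : ℝ} {φ : ℝ → ℝ} {n : ℕ} {w w' u : E → ℝ}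

theorem exists_isRegularizedSolution (hE : 3 ≤ Module.finrank ℝ E) (hK : K.Finite)
    (hne : K.Nonempty) (hp : 0 ≤ p) (hφ : ∀ r, 0 < r → 0 < φ r) (hφc : ContinuousOn φ (Ioi 0))
    (n : ℕ) : ∃ w : E → ℝ, IsRegularizedSolution K p φ n w := by
  have := FiniteDimensional.proper_real E
  have hε : (0 : ℝ) < 1 / (n + 1) := by positivity
  obtain ⟨L, hL⟩ := exists_lipschitzWith_regularizedRpow hp hε
  obtain ⟨w, hwc, hw⟩ := exists_eq_newtonPotential hE
    ((continuous_cutoffWeight hφc n).comp (continuous_infDist_pt K))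
    (hasCompactSupport_cutoffWeight_infDist hK hne φ n) (fun x => cutoffWeight_nonneg hφ n _)
    (antitone_regularizedRpow hp hε) hL
  exact ⟨w, hwc, funext hw⟩

namespace IsRegularizedSolution

theorem nonneg (hw : IsRegularizedSolution K p φ n w) (hφ : ∀ r, 0 < r → 0 < φ r) (x : E) :
    0 ≤ w x := by
  rw [hw.eq_newtonPotential]
  exact newtonPotential_nonneg (regularizedSource_nonneg hφ K p n w) x

theorem source_eq (hw : IsRegularizedSolution K p φ n w) (hφ : ∀ r, 0 < r → 0 < φ r) (x : E) :
    regularizedSource K p φ n w x =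
      cutoffWeight φ n (infDist x K) * (w x + 1 / (n + 1)) ^ (-p) := by
  rw [regularizedSource, regularizedRpow, max_eq_left (hw.nonneg hφ x)]

theorem eq_mean_add_green (hw : IsRegularizedSolution K p φ n w) (hE : 3 ≤ Module.finrank ℝ E)
    (hK : K.Finite) (hne : K.Nonempty) (hp : 0 ≤ p) (hφc : ContinuousOn φ (Ioi 0)) {r : ℝ}
    (hr : 0 < r) (x : E) : w x = 𝓜[r] w x + 𝓠[r] (regularizedSource K p φ n w) x := by
  have hmv := newtonPotential_eq_mean_add_green hE
    (continuous_regularizedSource hp hφc _ hw.continuous)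
    (hasCompactSupport_regularizedSource hK hne p φ n w) hr x
  rwa [← hw.eq_newtonPotential] at hmv

theorem pos (hw : IsRegularizedSolution K p φ n w) (hE : 3 ≤ Module.finrank ℝ E) (hK : K.Finite)
    (hne : K.Nonempty) (hp : 0 ≤ p) (hφ : ∀ r, 0 < r → 0 < φ r) (hφc : ContinuousOn φ (Ioi 0))
    (x : E) : 0 < w x := by
  have : Nontrivial E := Module.nontrivial_of_finrank_pos (R := ℝ) (by lia)
  have ht : (0 : ℝ) ≤ 3 / 2 := by norm_num
  obtain ⟨y, hy⟩ := exists_infDist_eq hK hne ht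
  have hcut : 0 < annularCutoff n (3 / 2) := by
    have := Nat.cast_nonneg (α := ℝ) n
    exact lt_max_of_lt_right (lt_min one_pos (lt_min (by linarith) (by linarith)))
  have hsource : 0 < regularizedSource K p φ n w y := by
    rw [regularizedSource, hy]
    exact mul_pos (mul_pos (hφ _ (by norm_num)) hcut) (regularizedRpow_pos p (by positivity) _)
  rw [hw.eq_newtonPotential]
  exact newtonPotential_pos hE (continuous_regularizedSource hp hφc _ hw.continuous)
    (hasCompactSupport_regularizedSource hK hne p φ n w) (regularizedSource_nonneg hφ K p n w)
    hsource x

theorem le_succ (hw : IsRegularizedSolution K p φ n w)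
    (hw' : IsRegularizedSolution K p φ (n + 1) w')
    (hE : 3 ≤ Module.finrank ℝ E) (hK : K.Finite) (hne : K.Nonempty) (hp : 0 ≤ p)
    (hφ : ∀ r, 0 < r → 0 < φ r) (hφc : ContinuousOn φ (Ioi 0)) (x : E) : w x ≤ w' x := by
  have hle := newtonPotential_le hE (continuous_regularizedSource hp hφc _ hw.continuous)
    (hasCompactSupport_regularizedSource hK hne p φ n w)
    (continuous_regularizedSource hp hφc _ hw'.continuous)
    (hasCompactSupport_regularizedSource hK hne p φ (n + 1) w') (fun y hy => ?_) x
  · rwa [← hw.eq_newtonPotential, ← hw'.eq_newtonPotential] at hle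
  · rw [← hw.eq_newtonPotential, ← hw'.eq_newtonPotential] at hy
    have hw'0 := hw'.nonneg hφ y
    have hn : 1 / (((n + 1 : ℕ) : ℝ) + 1) ≤ 1 / ((n : ℝ) + 1) :=
      one_div_le_one_div_of_le (by positivity) (by push_cast; linarith)
    rw [hw.source_eq hφ, hw'.source_eq hφ]
    exact mul_le_mul (cutoffWeight_le_succ hφ n _)
      (Real.rpow_le_rpow_of_nonpos (by positivity) (by linarith) (neg_nonpos.2 hp))
      (by have := hw.nonneg hφ y; positivity)
      (cutoffWeight_nonneg hφ _ _)

theorem le_of_isSupersolution (hw : IsRegularizedSolution K p φ n w)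
    (hu : IsSupersolution K p φ u) (hE : 3 ≤ Module.finrank ℝ E) (hK : K.Finite) (hne : K.Nonempty)
    (hp : 0 ≤ p) (hφ : ∀ r, 0 < r → 0 < φ r) (hφc : ContinuousOn φ (Ioi 0)) :
    ∀ x ∈ Kᶜ, w x ≤ u x := by
  have := FiniteDimensional.proper_real E
  have hopen : IsOpen Kᶜ := hK.isClosed.isOpen_compl
  have hsc := continuous_regularizedSource (K := K) hp hφc n hw.continuous
  have hss := hasCompactSupport_regularizedSource hK hne p φ n w
  obtain ⟨B, hB⟩ := exists_abs_newtonPotential_le hE hsc hss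
  have hlim := tendsto_newtonPotential_cocompact hE hsc hss
  rw [← hw.eq_newtonPotential] at hB hlim
  refine le_of_eq_mean_add_green hE hK hne hw.continuous.continuousOn hu.contDiffOn.continuousOn
    hsc.continuousOn (continuousOn_laplacian hopen hu.contDiffOn).neg
    (fun x _ => eventually_mem_nhdsWithin.mono fun r hr =>
      hw.eq_mean_add_green hE hK hne hp hφc hr x)
    (fun x hx => eventually_eq_mean_add_green hopen hu.contDiffOn hx) (fun x hx hlt => ?_)
    (B := B) (fun x hx => by linarith [(le_abs_self _).trans (hB x), hu.pos x hx])
    (fun η hη => ?_)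
  · rw [hw.source_eq hφ]
    have hd := infDist_pos_of_finite hK hne hx
    have hn : (0 : ℝ) < 1 / (n + 1) := by positivity
    refine le_trans ?_ (hu.le_neg_laplacian x hx)
    exact mul_le_mul (cutoffWeight_le hφ n hd)
      (Real.rpow_le_rpow_of_nonpos (hu.pos x hx) (by linarith) (neg_nonpos.2 hp))
      (by have := hw.nonneg hφ x; positivity) (hφ _ hd).le
  · filter_upwards [hlim.eventually (gt_mem_nhds hη), hK.isCompact.compl_mem_cocompact]
      with x hxη hxK
    linarith [hu.pos x hxK]

end IsRegularizedSolution

end RegularizedProblem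

/-! ### The radial Newtonian potential -/

section RadialPotential

variable {m : ℕ} {g φ ψ : ℝ → ℝ} {r R : ℝ}

theorem integrableOn_Ioc_zero_of_Ioo (hg : ContinuousOn g (Ioi 0)) (h0 : IntegrableOn g (Ioo 0 1))
    (r : ℝ) : IntegrableOn g (Ioc 0 r) := by
  have h1 : IntegrableOn g (Icc (1 / 2) r) :=
    (hg.mono fun x hx => (by norm_num : (0 : ℝ) < 1 / 2).trans_le hx.1).integrableOn_compact
      isCompact_Icc
  refine (h0.union h1).mono_set fun x hx => ?_
  rcases lt_or_ge x 1 with h | h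
  · exact Or.inl ⟨hx.1, h⟩
  · exact Or.inr ⟨by linarith, hx.2⟩

theorem integrableOn_Ioi_of_Ioi_one (hg : ContinuousOn g (Ioi 0)) (h1 : IntegrableOn g (Ioi 1))
    (hr : 0 < r) : IntegrableOn g (Ioi r) := by
  have h0 : IntegrableOn g (Icc r 1) :=
    (hg.mono fun x hx => hr.trans_le hx.1).integrableOn_compact isCompact_Icc
  refine (h1.union h0).mono_set fun x hx => ?_
  rcases lt_or_ge 1 x with h | h
  · exact Or.inl h
  · exact Or.inr ⟨le_of_lt hx, h⟩

/-- `ψ` is a nonnegative radial density on `(0, ∞)`, for the dimension `m + 3`, which has finite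
mass near the origin and a finite Newtonian potential. -/
structure IsRadialDensity (m : ℕ) (ψ : ℝ → ℝ) : Prop where
  continuousOn : ContinuousOn ψ (Ioi 0)
  nonneg : ∀ σ, 0 < σ → 0 ≤ ψ σ
  integrableOn_Ioo : IntegrableOn (fun σ => σ ^ (m + 2) * ψ σ) (Ioo 0 1)
  integrableOn_Ioi_one : IntegrableOn (fun σ => σ * ψ σ) (Ioi 1)

/-- The mass of the radial density `ψ` in the ball of radius `r` of the `(m + 3)`-dimensional space,
up to the area of the unit sphere. -/
noncomputable def innerMoment (m : ℕ) (ψ : ℝ → ℝ) (r : ℝ) : ℝ :=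
  ∫ σ in (0)..r, σ ^ (m + 2) * ψ σ

/-- The contribution of the radial density `ψ` outside the ball of radius `r` to its Newtonian
potential, up to a factor. -/
noncomputable def outerMoment (ψ : ℝ → ℝ) (r : ℝ) : ℝ := ∫ σ in Ioi r, σ * ψ σ

/-- The profile of the Newtonian potential of the radial density `ψ` in dimension `m + 3`, computed
by Newton's shell theorem. -/
noncomputable def radialPotential (m : ℕ) (ψ : ℝ → ℝ) (r : ℝ) : ℝ :=
  1 / ((m : ℝ) + 1) * ((r ^ (m + 1))⁻¹ * innerMoment m ψ r + outerMoment ψ r)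

/-- The derivative of `radialPotential m ψ`. -/
noncomputable def radialPotentialDeriv (m : ℕ) (ψ : ℝ → ℝ) (r : ℝ) : ℝ :=
  -((r ^ (m + 2))⁻¹ * innerMoment m ψ r)

theorem radialPotential_zero (m : ℕ) (ψ : ℝ → ℝ) :
    radialPotential m ψ 0 = 1 / ((m : ℝ) + 1) * outerMoment ψ 0 := by
  simp [radialPotential]

theorem tendsto_outerMoment (ψ : ℝ → ℝ) : Tendsto (outerMoment ψ) atTop (𝓝 0) :=
  tendsto_integral_Ioi_zero tendsto_id

theorem hasDerivAt_inv_pow_succ (n : ℕ) (hr : r ≠ 0) :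
    HasDerivAt (fun r : ℝ => (r ^ (n + 1))⁻¹) (-((n : ℝ) + 1) * (r ^ (n + 2))⁻¹) r := by
  refine ((hasDerivAt_pow (n + 1) r).fun_inv (pow_ne_zero _ hr)).congr_deriv ?_
  push_cast
  field_simp
  ring

namespace IsRadialDensity

theorem continuousOn_id_mul (h : IsRadialDensity m ψ) : ContinuousOn (fun σ => σ * ψ σ) (Ioi 0) :=
  continuousOn_id.mul h.continuousOn

theorem continuousOn_pow_mul (h : IsRadialDensity m ψ) :
    ContinuousOn (fun σ => σ ^ (m + 2) * ψ σ) (Ioi 0) :=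
  (continuousOn_pow _).mul h.continuousOn

theorem integrableOn_Ioc (h : IsRadialDensity m ψ) (r : ℝ) :
    IntegrableOn (fun σ => σ ^ (m + 2) * ψ σ) (Ioc 0 r) :=
  integrableOn_Ioc_zero_of_Ioo h.continuousOn_pow_mul h.integrableOn_Ioo r

theorem intervalIntegrable (h : IsRadialDensity m ψ) {a b : ℝ} (ha : 0 ≤ a) (hab : a ≤ b) :
    IntervalIntegrable (fun σ => σ ^ (m + 2) * ψ σ) volume a b :=
  (intervalIntegrable_iff_integrableOn_Ioc_of_le hab).2
    ((h.integrableOn_Ioc b).mono_set (Ioc_subset_Ioc_left ha))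

theorem integrableOn_Ioi (h : IsRadialDensity m ψ) (hr : 0 < r) :
    IntegrableOn (fun σ => σ * ψ σ) (Ioi r) :=
  integrableOn_Ioi_of_Ioi_one h.continuousOn_id_mul h.integrableOn_Ioi_one hr

theorem integrableOn_Ioi_zero (h : IsRadialDensity m ψ)
    (h0 : IntegrableOn (fun σ => σ * ψ σ) (Ioo 0 1)) : IntegrableOn (fun σ => σ * ψ σ) (Ioi 0) := by
  have := (integrableOn_Ioc_zero_of_Ioo h.continuousOn_id_mul h0 1).union h.integrableOn_Ioi_one
  rwa [Ioc_union_Ioi_eq_Ioi zero_le_one] at this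

theorem hasDerivAt_innerMoment (h : IsRadialDensity m ψ) (hr : 0 < r) :
    HasDerivAt (innerMoment m ψ) (r ^ (m + 2) * ψ r) r :=
  intervalIntegral.integral_hasDerivAt_right (h.intervalIntegrable le_rfl hr.le)
    (h.continuousOn_pow_mul.stronglyMeasurableAtFilter isOpen_Ioi r hr)
    (h.continuousOn_pow_mul.continuousAt (Ioi_mem_nhds hr))

theorem hasDerivAt_outerMoment (h : IsRadialDensity m ψ) (hr : 0 < r) :
    HasDerivAt (outerMoment ψ) (-(r * ψ r)) r := by
  have hint := h.integrableOn_Ioi (half_pos hr)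
  have hderiv : HasDerivAt (fun u => ∫ σ in (r / 2)..u, σ * ψ σ) (r * ψ r) r :=
    intervalIntegral.integral_hasDerivAt_right
      ((intervalIntegrable_iff_integrableOn_Ioc_of_le (by linarith)).2
        (hint.mono_set Ioc_subset_Ioi_self))
      (h.continuousOn_id_mul.stronglyMeasurableAtFilter isOpen_Ioi r hr)
      (h.continuousOn_id_mul.continuousAt (Ioi_mem_nhds hr))
  refine (hderiv.const_sub (outerMoment ψ (r / 2))).congr_of_eventuallyEq ?_
  filter_upwards [Ioi_mem_nhds (half_lt_self hr)] with u hu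
  rw [outerMoment, outerMoment, ← intervalIntegral.integral_Ioi_sub_Ioi hint (le_of_lt hu),
    sub_sub_cancel]

theorem hasDerivAt_radialPotential (h : IsRadialDensity m ψ) (hr : 0 < r) :
    HasDerivAt (radialPotential m ψ) (radialPotentialDeriv m ψ r) r := by
  refine ((((hasDerivAt_inv_pow_succ m hr.ne').fun_mul (h.hasDerivAt_innerMoment hr)).fun_add
    (h.hasDerivAt_outerMoment hr)).const_mul (1 / ((m : ℝ) + 1))).congr_deriv ?_
  rw [radialPotentialDeriv]
  field_simp
  ring

theorem hasDerivAt_radialPotentialDeriv (h : IsRadialDensity m ψ) (hr : 0 < r) :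
    HasDerivAt (radialPotentialDeriv m ψ)
      (((m : ℝ) + 2) / r * ((r ^ (m + 2))⁻¹ * innerMoment m ψ r) - ψ r) r := by
  refine ((hasDerivAt_inv_pow_succ (m + 1) hr.ne').fun_mul
    (h.hasDerivAt_innerMoment hr)).fun_neg.congr_deriv ?_
  push_cast
  field_simp
  ring

theorem isRadialProfile (h : IsRadialDensity m ψ) :
    IsRadialProfile (radialPotential m ψ) (radialPotentialDeriv m ψ)
      (fun r => ((m : ℝ) + 2) / r * ((r ^ (m + 2))⁻¹ * innerMoment m ψ r) - ψ r) where
  hasDerivAt _ := h.hasDerivAt_radialPotential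
  hasDerivAt' _ := h.hasDerivAt_radialPotentialDeriv
  continuousOn := by
    have hne : ∀ r ∈ Ioi (0 : ℝ), r ≠ 0 := fun r hr => ne_of_gt hr
    have hinner : ContinuousOn (innerMoment m ψ) (Ioi 0) :=
      HasDerivAt.continuousOn fun r hr => h.hasDerivAt_innerMoment hr
    exact ((continuousOn_const.div continuousOn_id hne).mul (((continuousOn_pow _).inv₀
      fun r hr => pow_ne_zero _ (hne r hr)).mul hinner)).sub h.continuousOn

theorem innerMoment_nonneg (h : IsRadialDensity m ψ) (hr : 0 ≤ r) : 0 ≤ innerMoment m ψ r := by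
  rw [innerMoment, intervalIntegral.integral_of_le hr]
  exact setIntegral_nonneg measurableSet_Ioc fun σ hσ =>
    mul_nonneg (pow_nonneg hσ.1.le _) (h.nonneg σ hσ.1)

theorem outerMoment_nonneg (h : IsRadialDensity m ψ) (hr : 0 ≤ r) : 0 ≤ outerMoment ψ r :=
  setIntegral_nonneg measurableSet_Ioi fun σ hσ =>
    mul_nonneg (hr.trans (le_of_lt hσ)) (h.nonneg σ (hr.trans_lt hσ))

theorem radialPotential_nonneg (h : IsRadialDensity m ψ) (hr : 0 ≤ r) :
    0 ≤ radialPotential m ψ r := by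
  have := h.innerMoment_nonneg hr
  have := h.outerMoment_nonneg hr
  unfold radialPotential
  positivity

theorem radialPotential_pos (h : IsRadialDensity m ψ) (hpos : ∀ r, 0 < r → 0 < ψ r) (hr : 0 < r) :
    0 < radialPotential m ψ r := by
  have : 0 < innerMoment m ψ r :=
    intervalIntegral.intervalIntegral_pos_of_pos_on (h.intervalIntegrable le_rfl hr.le)
      (fun σ hσ => mul_pos (pow_pos hσ.1 _) (hpos σ hσ.1)) hr
  have := h.outerMoment_nonneg hr.le
  unfold radialPotential
  positivity

theorem integral_pow_mul_le (h : IsRadialDensity m ψ) {a b : ℝ} (ha : 0 ≤ a) (hab : a ≤ b)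
    (hint : IntegrableOn (fun σ => σ * ψ σ) (Ioc a b)) :
    ∫ σ in a..b, σ ^ (m + 2) * ψ σ ≤ b ^ (m + 1) * ∫ σ in a..b, σ * ψ σ := by
  rw [← intervalIntegral.integral_const_mul, intervalIntegral.integral_of_le hab,
    intervalIntegral.integral_of_le hab]
  refine setIntegral_mono_on ((h.integrableOn_Ioc b).mono_set (Ioc_subset_Ioc_left ha))
    (hint.const_mul _) measurableSet_Ioc fun σ hσ => ?_
  have hσ0 := ha.trans_lt hσ.1
  calc σ ^ (m + 2) * ψ σ = σ ^ (m + 1) * (σ * ψ σ) := by ring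
    _ ≤ b ^ (m + 1) * (σ * ψ σ) := mul_le_mul_of_nonneg_right (pow_le_pow_left₀ hσ0.le hσ.2 _)
      (mul_nonneg hσ0.le (h.nonneg σ hσ0))

theorem innerMoment_le (h : IsRadialDensity m ψ) (hR : 0 < R) (hRr : R ≤ r) :
    innerMoment m ψ r ≤ innerMoment m ψ R + r ^ (m + 1) * outerMoment ψ R := by
  have hint := h.integrableOn_Ioi hR
  have htail : ∫ σ in R..r, σ * ψ σ ≤ outerMoment ψ R := by
    rw [← intervalIntegral.integral_Ioi_sub_Ioi hint hRr]
    exact sub_le_self _ (h.outerMoment_nonneg (hR.le.trans hRr))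
  rw [innerMoment, ← intervalIntegral.integral_add_adjacent_intervals
    (h.intervalIntegrable le_rfl hR.le) (h.intervalIntegrable hR.le hRr)]
  have hmid := h.integral_pow_mul_le hR.le hRr (hint.mono_set Ioc_subset_Ioi_self)
  exact add_le_add_right (hmid.trans
    (mul_le_mul_of_nonneg_left htail (pow_nonneg (hR.le.trans hRr) _))) _

theorem tendsto_radialPotential (h : IsRadialDensity m ψ) :
    Tendsto (radialPotential m ψ) atTop (𝓝 0) := by
  have hinv : Tendsto (fun r : ℝ => (r ^ (m + 1))⁻¹) atTop (𝓝 0) :=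
    tendsto_inv_atTop_zero.comp (tendsto_pow_atTop (by omega))
  have hinner : Tendsto (fun r => (r ^ (m + 1))⁻¹ * innerMoment m ψ r) atTop (𝓝 0) := by
    refine tendsto_order.2 ⟨fun a ha => ?_, fun ε hε => ?_⟩
    · filter_upwards [eventually_ge_atTop 0] with r hr
      exact ha.trans_le (mul_nonneg (inv_nonneg.2 (pow_nonneg hr _)) (h.innerMoment_nonneg hr))
    obtain ⟨R, hRε, hR⟩ := (((tendsto_outerMoment ψ).eventually (gt_mem_nhds (half_pos hε))).and
      (eventually_gt_atTop 0)).exists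
    have hfar : Tendsto (fun r : ℝ => (r ^ (m + 1))⁻¹ * innerMoment m ψ R) atTop (𝓝 0) := by
      simpa using hinv.mul_const (innerMoment m ψ R)
    filter_upwards [hfar.eventually (gt_mem_nhds (half_pos hε)),
      eventually_ge_atTop R] with r hr hRr
    have hr0 := hR.trans_le hRr
    calc (r ^ (m + 1))⁻¹ * innerMoment m ψ r
        ≤ (r ^ (m + 1))⁻¹ * (innerMoment m ψ R + r ^ (m + 1) * outerMoment ψ R) :=
          mul_le_mul_of_nonneg_left (h.innerMoment_le hR hRr) (by positivity)
      _ = (r ^ (m + 1))⁻¹ * innerMoment m ψ R + outerMoment ψ R := by field_simp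
      _ < ε := by linarith
  have := (hinner.add (tendsto_outerMoment ψ)).const_mul (1 / ((m : ℝ) + 1))
  rwa [add_zero, mul_zero] at this

theorem radialPotential_zero_sub_mem_Icc (h : IsRadialDensity m ψ)
    (h0 : IntegrableOn (fun σ => σ * ψ σ) (Ioo 0 1)) (hr : 0 ≤ r) :
    radialPotential m ψ 0 - radialPotential m ψ r ∈
      Icc 0 (1 / ((m : ℝ) + 1) * ∫ σ in (0)..r, σ * ψ σ) := by
  rcases hr.eq_or_lt with rfl | hr
  · simp
  have hint := h.integrableOn_Ioi_zero h0
  have houter : outerMoment ψ 0 - outerMoment ψ r = ∫ σ in (0)..r, σ * ψ σ :=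
    intervalIntegral.integral_Ioi_sub_Ioi hint hr.le
  have hinner : (r ^ (m + 1))⁻¹ * innerMoment m ψ r ≤ ∫ σ in (0)..r, σ * ψ σ :=
    (inv_mul_le_iff₀ (by positivity)).2
      (h.integral_pow_mul_le le_rfl hr.le (hint.mono_set Ioc_subset_Ioi_self))
  have hinner0 : 0 ≤ (r ^ (m + 1))⁻¹ * innerMoment m ψ r :=
    mul_nonneg (by positivity) (h.innerMoment_nonneg hr.le)
  have hdiff : radialPotential m ψ 0 - radialPotential m ψ r = 1 / ((m : ℝ) + 1) *
      ((∫ σ in (0)..r, σ * ψ σ) - (r ^ (m + 1))⁻¹ * innerMoment m ψ r) := by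
    rw [radialPotential_zero, radialPotential, ← houter]
    ring
  rw [hdiff]
  exact ⟨mul_nonneg (by positivity) (by linarith),
    mul_le_mul_of_nonneg_left (by linarith) (by positivity)⟩

theorem radialPotential_le_zero (h : IsRadialDensity m ψ)
    (h0 : IntegrableOn (fun σ => σ * ψ σ) (Ioo 0 1)) (hr : 0 ≤ r) :
    radialPotential m ψ r ≤ radialPotential m ψ 0 :=
  sub_nonneg.1 (h.radialPotential_zero_sub_mem_Icc h0 hr).1

end IsRadialDensity

end RadialPotential

/-! ### Explicit supersolutions -/

section Supersolution

variable {m : ℕ} {p r : ℝ} {φ ψ g g' g'' : ℝ → ℝ}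

theorem isRadialProfile_inv_pow_succ (m : ℕ) :
    IsRadialProfile (fun r => (r ^ (m + 1))⁻¹) (fun r => -((m : ℝ) + 1) * (r ^ (m + 2))⁻¹)
      (fun r => ((m : ℝ) + 1) * (m + 2) * (r ^ (m + 3))⁻¹) where
  hasDerivAt _ hr := hasDerivAt_inv_pow_succ m hr.ne'
  hasDerivAt' _ hr := by
    refine ((hasDerivAt_inv_pow_succ (m + 1) hr.ne').const_mul (-((m : ℝ) + 1))).congr_deriv ?_
    push_cast
    ring
  continuousOn := continuousOn_const.mul
    ((continuousOn_pow _).inv₀ fun _ hr => pow_ne_zero _ (ne_of_gt hr))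

/-- The profile `((1 + p) U) ^ (1 / (1 + p))`, where `U` is the radial potential of `ψ`; the power
turns the potential into a supersolution of `-Δ u = ψ u ^ (-p)`. -/
noncomputable def powerPotential (m : ℕ) (p : ℝ) (ψ : ℝ → ℝ) (r : ℝ) : ℝ :=
  ((1 + p) * radialPotential m ψ r) ^ (1 / (1 + p))

namespace IsRadialDensity

theorem powerPotential_pos (h : IsRadialDensity m ψ) (hpos : ∀ r, 0 < r → 0 < ψ r) (hp : 0 ≤ p)
    (hr : 0 < r) : 0 < powerPotential m p ψ r :=
  Real.rpow_pos_of_pos (mul_pos (by positivity) (h.radialPotential_pos hpos hr)) _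

theorem powerPotential_le_zero (h : IsRadialDensity m ψ)
    (h0 : IntegrableOn (fun σ => σ * ψ σ) (Ioo 0 1)) (hp : 0 ≤ p) (hr : 0 ≤ r) :
    powerPotential m p ψ r ≤ powerPotential m p ψ 0 :=
  Real.rpow_le_rpow (mul_nonneg (by positivity) (h.radialPotential_nonneg hr))
    (mul_le_mul_of_nonneg_left (h.radialPotential_le_zero h0 hr) (by positivity)) (by positivity)

theorem tendsto_powerPotential (h : IsRadialDensity m ψ) (hp : 0 ≤ p) :
    Tendsto (powerPotential m p ψ) atTop (𝓝 0) := by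
  have := (h.tendsto_radialPotential.const_mul (1 + p)).rpow_const (p := 1 / (1 + p))
    (Or.inr (by positivity))
  rwa [mul_zero, Real.zero_rpow (by positivity)] at this

theorem exists_isRadialProfile_powerPotential (h : IsRadialDensity m ψ)
    (hpos : ∀ r, 0 < r → 0 < ψ r) (hp : 0 ≤ p) :
    ∃ g' g'' : ℝ → ℝ, IsRadialProfile (powerPotential m p ψ) g' g'' ∧
      ∀ r, 0 < r →
        ψ r * powerPotential m p ψ r ^ (-p) ≤ -(g'' r + ((m : ℝ) + 2) / r * g' r) := by
  have hU : ∀ r, 0 < r → 0 < (1 + p) * radialPotential m ψ r := fun r hr =>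
    mul_pos (by positivity) (h.radialPotential_pos hpos hr)
  refine ⟨_, _, (h.isRadialProfile.const_mul (1 + p)).rpow_const hU (1 / (1 + p)),
    fun r hr => ?_⟩
  have hUr := hU r hr
  rw [powerPotential]
  set a := 1 / (1 + p) with ha
  set U := (1 + p) * radialPotential m ψ r
  set U' := radialPotentialDeriv m ψ r
  have : 0 ≤ a := by positivity
  have hap : a * (1 + p) = 1 := by rw [ha]; field_simp
  have ha1 : 0 ≤ 1 - a := by rw [ha, sub_nonneg, div_le_one (by positivity)]; linarith
  have hpow : (U ^ a) ^ (-p) = U ^ (a - 1) := by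
    rw [← Real.rpow_mul hUr.le]
    congr 1
    linarith
  have hsq : 0 ≤ (1 - a) * a * U ^ (a - 2) * ((1 + p) * U') ^ 2 := by positivity
  calc ψ r * (U ^ a) ^ (-p)
      ≤ (a * (1 + p)) * (ψ r * U ^ (a - 1)) + (1 - a) * a * U ^ (a - 2) * ((1 + p) * U') ^ 2 := by
        rw [hpow, hap, one_mul]
        exact le_add_of_nonneg_right hsq
    _ = _ := by
      rw [show innerMoment m ψ r = r ^ (m + 2) * -U' by
        simp only [U', radialPotentialDeriv]; field_simp]
      field_simp
      ring

end IsRadialDensity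

theorem isRadialDensity_of_integrableOn (hφ : ∀ r, 0 < r → 0 < φ r) (hφc : ContinuousOn φ (Ioi 0))
    (hinf : IntegrableOn (fun r => r * φ r) (Ioi 1))
    (hzero : IntegrableOn (fun r => r * φ r) (Ioo 0 1)) (m : ℕ) : IsRadialDensity m φ where
  continuousOn := hφc
  nonneg r hr := (hφ r hr).le
  integrableOn_Ioi_one := hinf
  integrableOn_Ioo := by
    refine hzero.mono'
      ((((continuousOn_pow _).mul hφc).mono fun r hr => hr.1).aestronglyMeasurable
        measurableSet_Ioo)
      ((ae_restrict_iff' measurableSet_Ioo).2 (ae_of_all _ fun r hr => ?_))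
    have hr0 : 0 < r := hr.1
    have hφr := hφ r hr0
    rw [Real.norm_of_nonneg (by positivity)]
    exact mul_le_mul_of_nonneg_right (pow_le_of_le_one hr0.le hr.2.le (by omega)) hφr.le

/-- The weight `φ` damped near the origin so that it becomes a radial density. -/
noncomputable def dampedWeight (m : ℕ) (p : ℝ) (φ : ℝ → ℝ) (r : ℝ) : ℝ :=
  φ r * min 1 (r ^ (p * (m + 1)))

theorem dampedWeight_pos (hφ : ∀ r, 0 < r → 0 < φ r) (hr : 0 < r) : 0 < dampedWeight m p φ r :=
  mul_pos (hφ r hr) (lt_min one_pos (Real.rpow_pos_of_pos hr _))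

theorem dampedWeight_of_le_one (hp : 0 ≤ p) (hr : 0 < r) (hr1 : r ≤ 1) :
    dampedWeight m p φ r = φ r * r ^ (p * (m + 1)) := by
  rw [dampedWeight, min_eq_right (Real.rpow_le_one hr.le hr1 (by positivity))]

theorem dampedWeight_of_one_le (hp : 0 ≤ p) (hr : 1 ≤ r) : dampedWeight m p φ r = φ r := by
  rw [dampedWeight, min_eq_left (Real.one_le_rpow hr (by positivity)), mul_one]

theorem isRadialDensity_dampedWeight (hp : 0 ≤ p) (hφ : ∀ r, 0 < r → 0 < φ r)
    (hφc : ContinuousOn φ (Ioi 0)) (hinf : IntegrableOn (fun r => r * φ r) (Ioi 1))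
    (hzero : IntegrableOn (fun r => r ^ ((1 + p) * ((m : ℝ) + 1) + 1) * φ r) (Ioo 0 1)) :
    IsRadialDensity m (dampedWeight m p φ) where
  continuousOn := hφc.mul (continuousOn_const.inf
    (continuousOn_id.rpow_const fun _ hr => Or.inl (ne_of_gt hr)))
  nonneg _ hr := (dampedWeight_pos hφ hr).le
  integrableOn_Ioo := by
    refine hzero.congr_fun (fun r hr => ?_) measurableSet_Ioo
    have hr0 : 0 < r := hr.1
    simp only [dampedWeight_of_le_one hp hr0 hr.2.le]
    rw [show (1 + p) * ((m : ℝ) + 1) + 1 = ((m + 2 : ℕ) : ℝ) + p * (m + 1) by push_cast; ring,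
      Real.rpow_add hr0, Real.rpow_natCast]
    ring
  integrableOn_Ioi_one :=
    hinf.congr_fun (fun r hr => by simp only [dampedWeight_of_one_le hp (le_of_lt hr)])
      measurableSet_Ioi

theorem mul_rpow_neg_le_dampedWeight (hp : 0 ≤ p) (hφ : ∀ r, 0 < r → 0 < φ r) (hr : 0 < r)
    {c G : ℝ} (hc : 0 ≤ c) (hG : 0 < G) :
    φ r * ((r ^ (m + 1))⁻¹ + c + G) ^ (-p) ≤
      dampedWeight m p φ r + dampedWeight m p φ r * G ^ (-p) := by
  have hanti : ∀ {a : ℝ}, 0 < a → a ≤ (r ^ (m + 1))⁻¹ + c + G →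
      φ r * ((r ^ (m + 1))⁻¹ + c + G) ^ (-p) ≤ φ r * a ^ (-p) := fun ha hle =>
    mul_le_mul_of_nonneg_left (Real.rpow_le_rpow_of_nonpos ha hle (neg_nonpos.2 hp)) (hφ r hr).le
  have hinv : 0 < (r ^ (m + 1))⁻¹ := by positivity
  have hD := dampedWeight_pos (m := m) (p := p) hφ hr
  rcases le_or_gt r 1 with hr1 | hr1
  · have hpow : ((r ^ (m + 1))⁻¹) ^ (-p) = r ^ (p * (m + 1)) := by
      rw [Real.rpow_neg hinv.le, ← Real.inv_rpow hinv.le, inv_inv, ← Real.rpow_natCast,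
        ← Real.rpow_mul hr.le, mul_comm, Nat.cast_succ]
    calc φ r * ((r ^ (m + 1))⁻¹ + c + G) ^ (-p) ≤ φ r * ((r ^ (m + 1))⁻¹) ^ (-p) :=
          hanti hinv (by linarith)
      _ = dampedWeight m p φ r := by rw [hpow, dampedWeight_of_le_one hp hr hr1]
      _ ≤ _ := le_add_of_nonneg_right (by positivity)
  · calc φ r * ((r ^ (m + 1))⁻¹ + c + G) ^ (-p) ≤ φ r * G ^ (-p) := hanti hG (by linarith)
      _ = dampedWeight m p φ r * G ^ (-p) := by rw [dampedWeight_of_one_le hp hr1.le]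
      _ ≤ _ := le_add_of_nonneg_left hD.le

theorem tendsto_comp_norm_sub_cocompact {E : Type*} [NormedAddCommGroup E] [ProperSpace E]
    (hg : Tendsto g atTop (𝓝 0)) (k : E) : Tendsto (fun x => g ‖x - k‖) (cocompact E) (𝓝 0) :=
  hg.comp (tendsto_atTop_mono (fun x => norm_sub_norm_le x k)
    (tendsto_atTop_add_const_right _ _ tendsto_norm_cocompact_atTop))

section InnerProduct

variable {E : Type*} [NormedAddCommGroup E] [InnerProductSpace ℝ E] [FiniteDimensional ℝ E]
  {K : Set E}

theorem laplacian_finset_sum {ι : Type*} {f : ι → E → ℝ} {x : E} (s : Finset ι)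
    (hf : ∀ i ∈ s, ContDiffAt ℝ 2 (f i) x) :
    Δ (fun y => ∑ i ∈ s, f i y) x = ∑ i ∈ s, Δ (f i) x := by
  classical
  induction s using Finset.induction_on with
  | empty => simp
  | insert i s hi ih =>
    rw [Finset.forall_mem_insert] at hf
    simp only [Finset.sum_insert hi, ← ih hf.2]
    exact hf.1.laplacian_add (ContDiffAt.sum hf.2)

theorem isSupersolution_sum_norm_sub (hK : K.Finite) (hne : K.Nonempty) (hp : 0 ≤ p)
    (hφ : ∀ r, 0 < r → 0 < φ r) (hg : IsRadialProfile g g' g'') (hpos : ∀ r, 0 < r → 0 < g r)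
    (hsup : ∀ r, 0 < r →
      φ r * g r ^ (-p) ≤ -(g'' r + ((Module.finrank ℝ E : ℝ) - 1) / r * g' r)) :
    IsSupersolution K p φ fun x => ∑ k ∈ hK.toFinset, g ‖x - k‖ := by
  have hxk : ∀ x ∈ Kᶜ, ∀ k ∈ hK.toFinset, x ≠ k := by
    rintro x hx k hk rfl
    exact hx (hK.mem_toFinset.1 hk)
  have hgpos : ∀ x ∈ Kᶜ, ∀ k ∈ hK.toFinset, 0 < g ‖x - k‖ := fun x hx k hk =>
    hpos _ (norm_pos_iff.2 (sub_ne_zero.2 (hxk x hx k hk)))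
  refine ⟨fun x hx => (ContDiffAt.sum fun k hk =>
    hg.contDiffAt_norm_sub (hxk x hx k hk)).contDiffWithinAt, fun x hx =>
    Finset.sum_pos (hgpos x hx) ((hK.toFinset_nonempty).2 hne), fun x hx => ?_⟩
  have hterm : ∀ k ∈ hK.toFinset, φ ‖x - k‖ * g ‖x - k‖ ^ (-p) ≤ -(Δ fun y => g ‖y - k‖) x :=
    fun k hk => by
      rw [hg.laplacian_norm_sub (hxk x hx k hk)]
      exact hsup _ (norm_pos_iff.2 (sub_ne_zero.2 (hxk x hx k hk)))
  obtain ⟨k, hkK, hdist⟩ := hK.isCompact.exists_infDist_eq_dist hne x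
  have hk := hK.mem_toFinset.2 hkK
  have hφk := hφ _ (norm_pos_iff.2 (sub_ne_zero.2 (hxk x hx k hk)))
  rw [laplacian_finset_sum _ fun k hk => hg.contDiffAt_norm_sub (hxk x hx k hk),
    ← Finset.sum_neg_distrib, hdist, dist_eq_norm]
  calc φ ‖x - k‖ * (∑ k ∈ hK.toFinset, g ‖x - k‖) ^ (-p) ≤ φ ‖x - k‖ * g ‖x - k‖ ^ (-p) :=
        mul_le_mul_of_nonneg_left (Real.rpow_le_rpow_of_nonpos (hgpos x hx k hk)
          (Finset.single_le_sum (f := fun k => g ‖x - k‖) (fun k hk => (hgpos x hx k hk).le) hk)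
          (neg_nonpos.2 hp)) hφk.le
    _ ≤ -(Δ fun y => g ‖y - k‖) x := hterm k hk
    _ ≤ _ := Finset.single_le_sum (f := fun k => -(Δ fun y => g ‖y - k‖) x) (fun k hk =>
      (mul_nonneg (hφ _ (norm_pos_iff.2 (sub_ne_zero.2 (hxk x hx k hk)))).le
        (Real.rpow_nonneg (hgpos x hx k hk).le _)).trans (hterm k hk)) hk

theorem exists_isSupersolution_tendsto (hE : Module.finrank ℝ E = m + 3) (hK : K.Finite)
    (hne : K.Nonempty) (hp : 0 ≤ p) (hφ : ∀ r, 0 < r → 0 < φ r) (hφc : ContinuousOn φ (Ioi 0))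
    (hinf : IntegrableOn (fun r => r * φ r) (Ioi 1))
    (hzero : IntegrableOn (fun r => r ^ ((1 + p) * ((m : ℝ) + 1) + 1) * φ r) (Ioo 0 1)) :
    ∃ V : E → ℝ, IsSupersolution K p φ V ∧ Tendsto V (cocompact E) (𝓝 0) := by
  have := FiniteDimensional.proper_real E
  have hψ : ∀ r, 0 < r → 0 < dampedWeight m p φ r := fun _ => dampedWeight_pos hφ
  have h := isRadialDensity_dampedWeight hp hφ hφc hinf hzero
  obtain ⟨g', g'', hg, hsup⟩ := h.exists_isRadialProfile_powerPotential hψ hp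
  have hpot : ∀ r, 0 < r → 0 < radialPotential m (dampedWeight m p φ) r := fun _ =>
    h.radialPotential_pos hψ
  refine ⟨_, isSupersolution_sum_norm_sub hK hne hp hφ
    (((isRadialProfile_inv_pow_succ m).add h.isRadialProfile).add hg)
    (fun r hr => ?_) (fun r hr => ?_), ?_⟩
  · have := hpot r hr
    have := h.powerPotential_pos hψ hp hr
    positivity
  · refine (mul_rpow_neg_le_dampedWeight hp hφ hr (hpot r hr).le
      (h.powerPotential_pos hψ hp hr)).trans ?_
    have hharm : ((m : ℝ) + 1) * (m + 2) * (r ^ (m + 3))⁻¹ =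
        -(((m : ℝ) + 2) / r * (-((m : ℝ) + 1) * (r ^ (m + 2))⁻¹)) := by
      field_simp
      ring
    rw [hE, hharm, radialPotentialDeriv]
    push_cast
    linear_combination hsup r hr
  · have htendsto := (((tendsto_inv_atTop_zero.comp (tendsto_pow_atTop (by omega : m + 1 ≠ 0))).add
      h.tendsto_radialPotential).add (h.tendsto_powerPotential hp))
    rw [add_zero, add_zero] at htendsto
    simpa using tendsto_finsetSum hK.toFinset fun k _ => tendsto_comp_norm_sub_cocompact htendsto k

theorem exists_isSupersolution_le (hE : Module.finrank ℝ E = m + 3) (hK : K.Finite)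
    (hne : K.Nonempty) (hp : 0 ≤ p) (hφ : ∀ r, 0 < r → 0 < φ r) (hφc : ContinuousOn φ (Ioi 0))
    (hinf : IntegrableOn (fun r => r * φ r) (Ioi 1))
    (hzero : IntegrableOn (fun r => r * φ r) (Ioo 0 1)) :
    ∃ V : E → ℝ, IsSupersolution K p φ V ∧ ∃ B, ∀ x, V x ≤ B := by
  have h := isRadialDensity_of_integrableOn hφ hφc hinf hzero m
  obtain ⟨g', g'', hg, hsup⟩ := h.exists_isRadialProfile_powerPotential hφ hp
  refine ⟨_, isSupersolution_sum_norm_sub hK hne hp hφ hg (fun r => h.powerPotential_pos hφ hp)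
    fun r hr => ?_, ∑ _ ∈ hK.toFinset, powerPotential m p φ 0,
    fun x => Finset.sum_le_sum fun _ _ => h.powerPotential_le_zero hzero hp (norm_nonneg _)⟩
  rw [hE]
  push_cast
  linear_combination hsup r hr

end InnerProduct

end Supersolution

/-! ### Differentiability of averages -/

section KernelAverageDeriv

variable {E F : Type*} [NormedAddCommGroup E] [NormedAddCommGroup F]

theorem IsUnitBallKernel.fderiv [NormedSpace ℝ E] [NormedSpace ℝ F] {κ : E → F}
    (hκ : IsUnitBallKernel κ) (hd : ContDiff ℝ 1 κ) : IsUnitBallKernel (_root_.fderiv ℝ κ) where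
  continuous := hd.continuous_fderiv one_ne_zero
  eq_zero z hz := by
    have hsub : Function.support (_root_.fderiv ℝ κ) ⊆ ball 0 1 := by
      rw [← interior_closedBall (0 : E) one_ne_zero]
      exact interior_maximal ((support_fderiv_subset ℝ).trans (closure_minimal
        (fun z hz => not_imp_comm.1 hκ.eq_zero_of_notMem_closedBall hz) isClosed_closedBall))
        (hd.continuous_fderiv one_ne_zero).isOpen_support
    by_contra h
    exact (mem_ball_zero_iff.1 (hsub h)).not_ge hz

variable [InnerProductSpace ℝ E] [FiniteDimensional ℝ E] [MeasurableSpace E] [BorelSpace E]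
  [NormedSpace ℝ F] {κ : E → F} {f : E → ℝ} {s : ℝ}

theorem kernelAverage_eq_comp_smul (κ : E → F) (f : E → ℝ) (hs : s ≠ 0) :
    kernelAverage κ f s = fun x => kernelAverage κ (fun y => f (s • y)) 1 (s⁻¹ • x) := by
  ext x
  simp only [kernelAverage, smul_add, smul_inv_smul₀ hs, one_smul]

theorem kernelAverage_one_eq_convolution (κ : E → F) (f : E → ℝ) :
    kernelAverage κ f 1 =
      convolution f (fun z => κ (-z)) (ContinuousLinearMap.lsmul ℝ ℝ) volume := by
  ext x
  rw [convolution_eq_swap, kernelAverage, ← integral_neg_eq_self]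
  simp only [one_smul, ← sub_eq_add_neg, ContinuousLinearMap.lsmul_apply]

theorem contDiff_kernelAverage (hκ : IsUnitBallKernel κ) {n : ℕ∞} (hd : ContDiff ℝ n κ)
    (hf : Continuous f) (hs : s ≠ 0) : ContDiff ℝ n (kernelAverage κ f s) := by
  have := FiniteDimensional.proper_real E
  have hcont : Continuous fun y => f (s • y) := by fun_prop
  rw [kernelAverage_eq_comp_smul κ f hs, kernelAverage_one_eq_convolution]
  exact ((hκ.hasCompactSupport.comp_homeomorph (.neg E)).contDiff_convolution_right _
    hcont.locallyIntegrable (hd.comp contDiff_neg)).comp (contDiff_const_smul _)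

theorem hasFDerivAt_kernelAverage_one (hκ : IsUnitBallKernel κ) (hd : ContDiff ℝ 1 κ)
    (hf : Continuous f) (x : E) :
    HasFDerivAt (kernelAverage κ f 1) (-kernelAverage (fderiv ℝ κ) f 1 x) x := by
  have := FiniteDimensional.proper_real E
  rw [kernelAverage_one_eq_convolution]
  refine ((hκ.hasCompactSupport.comp_homeomorph (.neg E)).hasFDerivAt_convolution_right
    (ContinuousLinearMap.lsmul ℝ ℝ) hf.locallyIntegrable (hd.comp contDiff_neg) x).congr_fderiv ?_
  have hderiv (z : E) : fderiv ℝ (κ ∘ Neg.neg) z = -fderiv ℝ κ (-z) := by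
    rw [((hd.differentiable one_ne_zero (-z)).hasFDerivAt.comp z (hasFDerivAt_id z).neg).fderiv]
    ext v
    simp
  rw [convolution_eq_swap, kernelAverage, ← integral_neg, ← integral_neg_eq_self]
  refine integral_congr_ae (ae_of_all _ fun z => ?_)
  ext v
  simp [hderiv, ContinuousLinearMap.precompR_apply]

theorem hasFDerivAt_kernelAverage (hκ : IsUnitBallKernel κ) (hd : ContDiff ℝ 1 κ)
    (hf : Continuous f) (hs : s ≠ 0) (x : E) :
    HasFDerivAt (kernelAverage κ f s) (-(s⁻¹ • kernelAverage (fderiv ℝ κ) f s x)) x := by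
  have hcont : Continuous fun y => f (s • y) := by fun_prop
  rw [kernelAverage_eq_comp_smul κ f hs, kernelAverage_eq_comp_smul _ f hs]
  refine ((hasFDerivAt_kernelAverage_one hκ hd hcont (s⁻¹ • x)).comp x
    ((hasFDerivAt_id x).const_smul s⁻¹)).congr_fderiv ?_
  ext v
  simp

theorem integral_fderiv_eq_zero (hκ : IsUnitBallKernel κ) (hd : ContDiff ℝ 1 κ) :
    ∫ z, fderiv ℝ κ z = 0 := by
  have h := hasFDerivAt_kernelAverage_one hκ hd (f := fun _ => 1) continuous_const 0
  simp only [kernelAverage, one_smul] at h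
  exact neg_eq_zero.1 (h.unique (hasFDerivAt_const _ _))

theorem norm_kernelAverage_le_of_holderOnWith (hκ : IsUnitBallKernel κ) (h0 : ∫ z, κ z = 0)
    (hf : Continuous f) {C γ : ℝ≥0} {t : Set E} (hC : HolderOnWith C γ f t) {x : E} (hs : 0 < s)
    (hx : closedBall x s ⊆ t) :
    ‖kernelAverage κ f s x‖ ≤ C * s ^ (γ : ℝ) * ∫ z, ‖κ z‖ := by
  have hsub : kernelAverage κ f s x = kernelAverage κ (fun y => f y - f x) s x := by
    simp only [kernelAverage, sub_smul]
    rw [integral_sub (f := fun z => f (x + s • z) • κ z) (g := fun z => f x • κ z)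
      (hκ.smul (f := fun z => f (x + s • z)) (by fun_prop)).integrable
      (hκ.integrable.smul (f x)), integral_smul, h0, smul_zero, sub_zero]
  rw [hsub]
  refine norm_kernelAverage_le hκ fun z hz => ?_
  have hsz : dist (x + s • z) x ≤ s := by
    rw [dist_self_add_left, norm_smul, Real.norm_of_nonneg hs.le]
    exact mul_le_of_le_one_right hs.le hz.le
  calc |f (x + s • z) - f x| ≤ C * dist (x + s • z) x ^ (γ : ℝ) :=
        hC.dist_le (hx hsz) (hx (mem_closedBall_self hs.le))
    _ ≤ C * s ^ (γ : ℝ) := by gcongr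

end KernelAverageDeriv

section LipschitzAverages

variable {E F : Type*} [NormedAddCommGroup E] [InnerProductSpace ℝ E] [FiniteDimensional ℝ E]
  [MeasurableSpace E] [BorelSpace E] [NormedAddCommGroup F] [NormedSpace ℝ F]
  {f : E → ℝ} {x₀ x y : E} {B R r s : ℝ}

theorem norm_kernelAverage_sub_le {κ : E → F} (hκ : IsUnitBallKernel κ) (hd : ContDiff ℝ 1 κ)
    (hf : Continuous f) (hs : 0 < s) (hB : ∀ y ∈ ball x₀ (R + s), |f y| ≤ B)
    (hx : x ∈ ball x₀ R) (hy : y ∈ ball x₀ R) :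
    ‖kernelAverage κ f s x - kernelAverage κ f s y‖ ≤
      s⁻¹ * (B * ∫ z, ‖fderiv ℝ κ z‖) * ‖x - y‖ := by
  refine Convex.norm_image_sub_le_of_norm_hasFDerivWithin_le (𝕜 := ℝ)
    (fun w _ => (hasFDerivAt_kernelAverage hκ hd hf hs.ne' w).hasFDerivWithinAt)
    (fun w hw => ?_) (convex_ball x₀ R) hy hx
  rw [norm_neg, norm_smul, Real.norm_of_nonneg (inv_nonneg.2 hs.le)]
  refine mul_le_mul_of_nonneg_left (norm_kernelAverage_le (hκ.fderiv hd) fun z hz => hB _ ?_)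
    (inv_nonneg.2 hs.le)
  have hsz : ‖s • z‖ < s := by
    rw [norm_smul, Real.norm_of_nonneg hs.le]
    exact mul_lt_of_lt_one_right hs hz
  rw [mem_ball_iff_norm, add_sub_right_comm]
  exact (norm_add_le _ _).trans_lt (add_lt_add (mem_ball_iff_norm.1 hw) hsz)

theorem mean_eq_kernelAverage (hr : 0 < r) (f : E → ℝ) :
    𝓜[r] f = kernelAverage meanKernel f r := by
  ext x
  simp only [mean_eq_integral hr, kernelAverage, smul_eq_mul, mul_comm]

theorem green_eq_integral_kernelAverage (hr : 0 < r) (hf : Continuous f) :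
    𝓠[r] f = fun x => ∫ s in (0)..r, s * kernelAverage greenKernel f s x := by
  ext x
  simp only [green_eq_integral hr hf, kernelAverage, smul_eq_mul, mul_comm]

theorem abs_mean_sub_mean_le (hf : Continuous f) (hr : 0 < r)
    (hB : ∀ y ∈ ball x₀ (R + r), |f y| ≤ B) (hx : x ∈ ball x₀ R) (hy : y ∈ ball x₀ R) :
    |𝓜[r] f x - 𝓜[r] f y| ≤ r⁻¹ * (B * ∫ z : E, ‖fderiv ℝ meanKernel z‖) * ‖x - y‖ := by
  rw [mean_eq_kernelAverage hr]
  exact norm_kernelAverage_sub_le isUnitBallKernel_meanKernel contDiff_meanKernel hf hr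
    hB hx hy

theorem abs_green_sub_green_le (hf : Continuous f) (hr : 0 < r)
    (hB : ∀ y ∈ ball x₀ (R + r), |f y| ≤ B) (hx : x ∈ ball x₀ R) (hy : y ∈ ball x₀ R) :
    |𝓠[r] f x - 𝓠[r] f y| ≤ B * (∫ z : E, ‖fderiv ℝ greenKernel z‖) * ‖x - y‖ * r := by
  have hcont (w : E) : Continuous fun s => s * kernelAverage greenKernel f s w :=
    continuous_id.mul ((continuous_uncurry_kernelAverage isUnitBallKernel_greenKernel hf).comp
      (Continuous.prodMk_left w))
  rw [green_eq_integral_kernelAverage hr hf,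
    ← intervalIntegral.integral_sub ((hcont x).intervalIntegrable _ _)
      ((hcont y).intervalIntegrable _ _), ← Real.norm_eq_abs]
  refine (intervalIntegral.norm_integral_le_of_norm_le_const fun s hs => ?_).trans_eq
    (by rw [sub_zero, abs_of_pos hr])
  rw [uIoc_of_le hr.le] at hs
  have hBs : ∀ y ∈ ball x₀ (R + s), |f y| ≤ B := fun y hy =>
    hB y (ball_subset_ball (by linarith [hs.2]) hy)
  rw [← mul_sub, norm_mul, Real.norm_of_nonneg hs.1.le]
  calc s * ‖kernelAverage greenKernel f s x - kernelAverage greenKernel f s y‖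
      ≤ s * (s⁻¹ * (B * ∫ z : E, ‖fderiv ℝ greenKernel z‖) * ‖x - y‖) :=
        mul_le_mul_of_nonneg_left (norm_kernelAverage_sub_le isUnitBallKernel_greenKernel
          contDiff_greenKernel hf hs.1 hBs hx hy) hs.1.le
    _ = B * (∫ z : E, ‖fderiv ℝ greenKernel z‖) * ‖x - y‖ := by
        rw [mul_assoc, mul_inv_cancel_left₀ hs.1.ne']

end LipschitzAverages

/-! ### Regularity of the Green operator -/

section ContDiffSucc

variable {E F : Type*} [NormedAddCommGroup E] [NormedSpace ℝ E] [NormedAddCommGroup F]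
  [NormedSpace ℝ F]

theorem contDiffOn_succ_of_hasFDerivAt {n : ℕ} {Ω : Set E} (hΩ : IsOpen Ω) {f : E → F}
    {f' : E → E →L[ℝ] F} (hf : ∀ x ∈ Ω, HasFDerivAt f (f' x) x) (hf' : ContDiffOn ℝ n f' Ω) :
    ContDiffOn ℝ (n + 1) f Ω :=
  (contDiffOn_succ_iff_fderiv_of_isOpen hΩ).2
    ⟨fun x hx => (hf x hx).differentiableAt.differentiableWithinAt, by simp,
      hf'.congr fun x hx => (hf x hx).fderiv⟩

end ContDiffSucc

section GreenRegularity

variable {E F : Type*} [NormedAddCommGroup E] [InnerProductSpace ℝ E] [FiniteDimensional ℝ E]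
  [MeasurableSpace E] [BorelSpace E] [NormedAddCommGroup F] [NormedSpace ℝ F]
  {f : E → ℝ} {x x₀ : E} {C γ : ℝ≥0} {r s : ℝ}

theorem continuous_kernelAverage_left {κ : E → F} (hκ : IsUnitBallKernel κ) (hf : Continuous f)
    (x : E) : Continuous fun s => kernelAverage κ f s x :=
  (continuous_uncurry_kernelAverage hκ hf).comp (Continuous.prodMk_left x)

theorem hasFDerivAt_green (hr : 0 < r) (hf : Continuous f) (x : E) :
    HasFDerivAt (𝓠[r] f) (∫ s in (0)..r, -kernelAverage (fderiv ℝ greenKernel) f s x) x := by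
  have := FiniteDimensional.proper_real E
  have hκ := (isUnitBallKernel_greenKernel (E := E)).fderiv contDiff_greenKernel
  obtain ⟨B, hB⟩ := (isCompact_Icc.prod (isCompact_closedBall x 1)).exists_bound_of_continuousOn
    ((continuous_uncurry_kernelAverage hκ hf).neg.continuousOn (s := Icc 0 r ×ˢ closedBall x 1))
  have hcont (y : E) : Continuous fun s => s * kernelAverage greenKernel f s y :=
    continuous_id.mul (continuous_kernelAverage_left isUnitBallKernel_greenKernel hf y)
  rw [green_eq_integral_kernelAverage hr hf]
  refine intervalIntegral.hasFDerivAt_integral_of_dominated_of_fderiv_le (𝕜 := ℝ)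
    (F' := fun y s => -kernelAverage (fderiv ℝ greenKernel) f s y)
    (closedBall_mem_nhds x one_pos) (Eventually.of_forall fun y => (hcont y).aestronglyMeasurable)
    ((hcont x).intervalIntegrable _ _)
    (continuous_kernelAverage_left hκ hf x).neg.aestronglyMeasurable
    (ae_of_all _ fun s hs y hy => ?_) (intervalIntegrable_const (c := B))
    (ae_of_all _ fun s hs y _ => ?_) <;> rw [uIoc_of_le hr.le] at hs
  · exact hB (s, y) ⟨⟨hs.1.le, hs.2⟩, hy⟩
  · refine ((hasFDerivAt_kernelAverage isUnitBallKernel_greenKernel contDiff_greenKernel hf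
      hs.1.ne' y).const_smul s).congr_fderiv ?_
    rw [smul_neg, smul_inv_smul₀ hs.1.ne']

theorem norm_inv_smul_kernelAverage_le {κ : E → F} (hκ : IsUnitBallKernel κ)
    (h0 : ∫ z, κ z = 0) (hf : Continuous f) (hC : HolderOnWith C γ f (ball x₀ (2 * r)))
    (hs : s ∈ Ioc 0 r) (hx : x ∈ ball x₀ r) :
    ‖s⁻¹ • kernelAverage κ f s x‖ ≤ C * (∫ z, ‖κ z‖) * s ^ ((γ : ℝ) - 1) := by
  have hsub : closedBall x s ⊆ ball x₀ (2 * r) := fun y hy => by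
    rw [mem_closedBall] at hy
    rw [mem_ball] at hx ⊢
    linarith [dist_triangle y x x₀, hs.2]
  rw [norm_smul, Real.norm_of_nonneg (inv_nonneg.2 hs.1.le), Real.rpow_sub_one hs.1.ne']
  calc s⁻¹ * ‖kernelAverage κ f s x‖ ≤ s⁻¹ * (C * s ^ (γ : ℝ) * ∫ z, ‖κ z‖) :=
        mul_le_mul_of_nonneg_left (norm_kernelAverage_le_of_holderOnWith hκ h0 hf hC hs.1 hsub)
          (inv_nonneg.2 hs.1.le)
    _ = C * (∫ z, ‖κ z‖) * (s ^ (γ : ℝ) / s) := by ring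

theorem intervalIntegrable_const_mul_rpow_sub_one (hγ : 0 < γ) (c : ℝ) :
    IntervalIntegrable (fun s : ℝ => c * s ^ ((γ : ℝ) - 1)) volume 0 r :=
  (intervalIntegral.intervalIntegrable_rpow' (by simpa using hγ)).const_mul c

theorem aestronglyMeasurable_inv_smul_kernelAverage {κ : E → F} (hκ : IsUnitBallKernel κ)
    (hf : Continuous f) (hr : 0 < r) (x : E) :
    AEStronglyMeasurable (fun s => s⁻¹ • kernelAverage κ f s x)
      (volume.restrict (uIoc 0 r)) := by
  rw [uIoc_of_le hr.le]
  exact ((continuousOn_id.inv₀ fun s hs => hs.1.ne').smul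
    (continuous_kernelAverage_left hκ hf x).continuousOn).aestronglyMeasurable measurableSet_Ioc

theorem continuousOn_integral_inv_smul_kernelAverage {κ : E → F} (hκ : IsUnitBallKernel κ)
    (h0 : ∫ z, κ z = 0) (hf : Continuous f) (hr : 0 < r) (hγ : 0 < γ)
    (hC : HolderOnWith C γ f (ball x₀ (2 * r))) :
    ContinuousOn (fun x => ∫ s in (0)..r, s⁻¹ • kernelAverage κ f s x) (ball x₀ r) := by
  refine fun x hx => ContinuousAt.continuousWithinAt ?_
  refine intervalIntegral.continuousAt_of_dominated_interval
    (Eventually.of_forall fun y => aestronglyMeasurable_inv_smul_kernelAverage hκ hf hr y) ?_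
    (intervalIntegrable_const_mul_rpow_sub_one hγ (C * ∫ z, ‖κ z‖))
    (ae_of_all _ fun s _ => (((continuous_uncurry_kernelAverage hκ hf).comp
      (Continuous.prodMk_right s)).const_smul s⁻¹).continuousAt)
  filter_upwards [isOpen_ball.mem_nhds hx] with y hy
  refine ae_of_all _ fun s hs => ?_
  rw [uIoc_of_le hr.le] at hs
  exact norm_inv_smul_kernelAverage_le hκ h0 hf hC hs hy

theorem hasFDerivAt_integral_kernelAverage {κ : E → F} (hκ : IsUnitBallKernel κ)
    (hd : ContDiff ℝ 1 κ) (hf : Continuous f) (hr : 0 < r) (hγ : 0 < γ)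
    (hC : HolderOnWith C γ f (ball x₀ (2 * r))) (hx : x ∈ ball x₀ r) :
    HasFDerivAt (fun y => ∫ s in (0)..r, -kernelAverage κ f s y)
      (∫ s in (0)..r, s⁻¹ • kernelAverage (fderiv ℝ κ) f s x) x := by
  have hκ' := hκ.fderiv hd
  have hcont (y : E) : Continuous fun s => -kernelAverage κ f s y :=
    (continuous_kernelAverage_left hκ hf y).neg
  refine intervalIntegral.hasFDerivAt_integral_of_dominated_of_fderiv_le (𝕜 := ℝ)
    (F' := fun y s => s⁻¹ • kernelAverage (fderiv ℝ κ) f s y)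
    (isOpen_ball.mem_nhds hx) (Eventually.of_forall fun y => (hcont y).aestronglyMeasurable)
    ((hcont x).intervalIntegrable _ _)
    (aestronglyMeasurable_inv_smul_kernelAverage hκ' hf hr x)
    (ae_of_all _ fun s hs y hy => ?_)
    (intervalIntegrable_const_mul_rpow_sub_one hγ (C * ∫ z, ‖fderiv ℝ κ z‖))
    (ae_of_all _ fun s hs y _ => ?_) <;> rw [uIoc_of_le hr.le] at hs
  · exact norm_inv_smul_kernelAverage_le hκ' (integral_fderiv_eq_zero hκ hd) hf hC hs hy
  · exact (hasFDerivAt_kernelAverage hκ hd hf hs.1.ne' y).neg.congr_fderiv (neg_neg _)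

-- The second derivative of the kernel has mean zero, so the Hölder bound turns the singular
-- factor `s⁻¹` into the integrable `s ^ (γ - 1)`.
theorem contDiffOn_green (hf : Continuous f) (hr : 0 < r) (hγ : 0 < γ)
    (hC : HolderOnWith C γ f (ball x₀ (2 * r))) : ContDiffOn ℝ 2 (𝓠[r] f) (ball x₀ r) := by
  have hκ := (isUnitBallKernel_greenKernel (E := E)).fderiv contDiff_greenKernel
  have hd : ContDiff ℝ 1 (fderiv ℝ (greenKernel : E → ℝ)) :=
    contDiff_greenKernel.fderiv_right (m := 1) (n := 2) (by norm_num)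
  refine contDiffOn_succ_of_hasFDerivAt (n := 1) isOpen_ball
    (fun x _ => hasFDerivAt_green hr hf x) ?_
  refine contDiffOn_succ_of_hasFDerivAt (n := 0) isOpen_ball
    (fun x hx => hasFDerivAt_integral_kernelAverage hκ hd hf hr hγ hC hx) ?_
  exact contDiffOn_zero.2 (continuousOn_integral_inv_smul_kernelAverage (hκ.fderiv hd)
    (integral_fderiv_eq_zero hκ hd) hf hr hγ hC)

end GreenRegularity

section LocallyHolder

variable {X Y Z : Type*} [PseudoMetricSpace X] [PseudoMetricSpace Y] [PseudoMetricSpace Z]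
  {γ γ' : ℝ≥0} {s : Set X} {f : X → Y}

/-- `f` is locally Hölder continuous on `s` with exponent `γ`: every point of `s` has a
neighbourhood within `s` on which `f` is `γ`-Hölder. This is the Hölder counterpart of
`LocallyLipschitzOn`. -/
def LocallyHolderOn (γ : ℝ≥0) (s : Set X) (f : X → Y) : Prop :=
  ∀ ⦃x⦄, x ∈ s → ∃ C, ∃ t ∈ 𝓝[s] x, HolderOnWith C γ f t

theorem locallyHolderOn_of_forall_isCompact [LocallyCompactSpace X] (hs : IsOpen s)
    (h : ∀ t, IsCompact t → t ⊆ s → ∃ C, HolderOnWith C γ f t) : LocallyHolderOn γ s f := by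
  intro x hx
  obtain ⟨t, ht, hts, htc⟩ := local_compact_nhds (hs.mem_nhds hx)
  obtain ⟨C, hC⟩ := h t htc hts
  exact ⟨C, t, mem_nhdsWithin_of_mem_nhds ht, hC⟩

theorem locallyHolderOn_one : LocallyHolderOn 1 s f ↔ LocallyLipschitzOn s f := by
  simp only [LocallyHolderOn, LocallyLipschitzOn, holderOnWith_one]

namespace LocallyHolderOn

theorem continuousOn (hf : LocallyHolderOn γ s f) (hγ : 0 < γ) : ContinuousOn f s := fun x hx => by
  obtain ⟨C, t, ht, hC⟩ := hf hx
  exact ((hC.continuousOn hγ) x (mem_of_mem_nhdsWithin hx ht)).mono_of_mem_nhdsWithin ht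

theorem of_le (hf : LocallyHolderOn γ s f) (hγ : γ' ≤ γ) : LocallyHolderOn γ' s f := fun x hx => by
  obtain ⟨C, t, ht, hC⟩ := hf hx
  have hdiam : ∀ y ∈ ball x 1 ∩ t, ∀ z ∈ ball x 1 ∩ t, edist y z ≤ (2 : ℝ≥0) := by
    intro y hy z hz
    rw [edist_le_coe, ← NNReal.coe_le_coe, coe_nndist, NNReal.coe_ofNat]
    linarith [dist_triangle_right y z x, mem_ball.1 hy.1, mem_ball.1 hz.1]
  exact ⟨_, _, inter_mem (mem_nhdsWithin_of_mem_nhds (ball_mem_nhds x one_pos)) ht,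
    (hC.mono inter_subset_right).of_le hdiam hγ⟩

theorem comp {g : Y → Z} {t : Set Y} (hg : LocallyHolderOn γ t g) (hf : LocallyLipschitzOn s f)
    (hst : MapsTo f s t) : LocallyHolderOn γ s (g ∘ f) := fun x hx => by
  obtain ⟨C, u, hu, hC⟩ := hg (hst hx)
  obtain ⟨L, v, hv, hL⟩ := hf hx
  have hgf := hC.comp (holderOnWith_one.2 (hL.mono (inter_subset_right (s := f ⁻¹' u))))
    inter_subset_left
  rw [mul_one] at hgf
  exact ⟨_, _, inter_mem ((hf.continuousOn x hx).tendsto_nhdsWithin hst hu) hv, hgf⟩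

theorem mul {f g : X → ℝ} (hf : LocallyHolderOn γ s f) (hg : LocallyHolderOn γ s g) (hγ : 0 < γ) :
    LocallyHolderOn γ s fun x => f x * g x := fun x hx => by
  obtain ⟨C, t, ht, hC⟩ := hf hx
  obtain ⟨D, u, hu, hD⟩ := hg hx
  have hbdd {h : X → ℝ} (hh : LocallyHolderOn γ s h) : {y | ‖h y‖₊ ≤ ‖h x‖₊ + 1} ∈ 𝓝[s] x :=
    ((hh.continuousOn hγ).nnnorm x hx).eventually (Iic_mem_nhds (lt_add_one _))
  refine ⟨(‖f x‖₊ + 1) * D + C * (‖g x‖₊ + 1), t ∩ u ∩ ({y | ‖f y‖₊ ≤ ‖f x‖₊ + 1} ∩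
    {y | ‖g y‖₊ ≤ ‖g x‖₊ + 1}), inter_mem (inter_mem ht hu) (inter_mem (hbdd hf) (hbdd hg)), ?_⟩
  rintro y ⟨⟨hyt, hyu⟩, hyf, -⟩ z ⟨⟨hzt, hzu⟩, -, hzg⟩
  have hCyz := hC y hyt z hzt
  have hDyz := hD y hyu z hzu
  rw [edist_eq_enorm_sub] at hCyz hDyz ⊢
  calc ‖f y * g y - f z * g z‖ₑ
      = ‖f y * (g y - g z) + (f y - f z) * g z‖ₑ := by congr 1; ring
    _ ≤ ‖f y‖ₑ * ‖g y - g z‖ₑ + ‖f y - f z‖ₑ * ‖g z‖ₑ := by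
        simpa only [enorm_mul] using enorm_add_le (f y * (g y - g z)) ((f y - f z) * g z)
    _ ≤ (‖f x‖₊ + 1 : ℝ≥0) * (D * edist y z ^ (γ : ℝ)) +
          C * edist y z ^ (γ : ℝ) * (‖g x‖₊ + 1 : ℝ≥0) := by
        gcongr
        · exact ENNReal.coe_le_coe.2 hyf
        · exact ENNReal.coe_le_coe.2 hzg
    _ = _ := by push_cast; ring

end LocallyHolderOn

end LocallyHolder

theorem locallyHolderOn_rpow_const {γ : ℝ≥0} (hγ : γ ≤ 1) (a : ℝ) :
    LocallyHolderOn γ (Ioi 0) fun t : ℝ => t ^ a := by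
  refine (locallyHolderOn_one.2 (ContDiffOn.locallyLipschitzOn (convex_Ioi 0) ?_)).of_le hγ
  exact contDiffOn_id.rpow_const_of_ne fun t ht => (mem_Ioi.1 ht).ne'

/-! ### The mean value form of Poisson's equation -/

section DoubleBall

variable {E : Type*} [SeminormedAddCommGroup E] {x x₀ : E} {R : ℝ}

theorem closedBall_subset_closedBall_two_mul (hx : x ∈ ball x₀ R) :
    closedBall x R ⊆ closedBall x₀ (2 * R) :=
  closedBall_subset_closedBall' (by linarith [mem_ball.1 hx])

theorem exists_closedBall_two_mul_subset {Ω : Set E} (hΩ : Ω ∈ 𝓝 x) :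
    ∃ R > 0, closedBall x (2 * R) ⊆ Ω := by
  obtain ⟨R, hR, hball⟩ := nhds_basis_closedBall.mem_iff.1 hΩ
  exact ⟨R / 2, half_pos hR, by rwa [mul_div_cancel₀ R two_ne_zero]⟩

end DoubleBall

section MeanValueSolution

variable {E : Type*} [NormedAddCommGroup E] [InnerProductSpace ℝ E] [FiniteDimensional ℝ E]
  [MeasurableSpace E] [BorelSpace E] {Ω : Set E} {w g : E → ℝ} {x x₀ : E} {γ : ℝ≥0} {R : ℝ}

/-- `w` solves Poisson's equation `-Δ w = g` on `Ω` in mean value form. Unlike the differential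
equation, this makes sense for merely continuous `w` and passes to locally bounded pointwise
limits. -/
def IsMeanValueSolution (Ω : Set E) (w g : E → ℝ) : Prop :=
  ∀ ⦃x : E⦄ ⦃r : ℝ⦄, 0 < r → closedBall x r ⊆ Ω → w x = 𝓜[r] w x + 𝓠[r] g x

theorem le_of_eventually_green_le {f : E → ℝ} (hΩ : Ω ∈ 𝓝 x) (hf : ContinuousOn f Ω)
    (hg : ContinuousOn g Ω) (hQ : ∀ᶠ r in 𝓝[>] 0, 𝓠[r] f x ≤ 𝓠[r] g x) : f x ≤ g x := by
  by_contra! hlt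
  have hpos := ((hf.sub hg).continuousAt hΩ).eventually (lt_mem_nhds (sub_pos.2 hlt))
  obtain ⟨r, hr, hQr, hball⟩ := (eventually_mem_nhdsWithin.and (hQ.and (nhdsWithin_le_nhds
    (eventually_closedBall_subset (inter_mem hΩ hpos))))).exists
  have hfr := hf.mono (hball.trans inter_subset_left)
  have hgr := hg.mono (hball.trans inter_subset_left)
  have hgreen : 0 < 𝓠[r] (fun y => f y - g y) x :=
    green_pos hr (hfr.sub hgr) fun y hy => (hball hy).2
  rw [(isBallMeasure_greenMeasure r).shiftIntegral_sub hfr hgr] at hgreen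
  exact hQr.not_gt (sub_pos.1 hgreen)

namespace IsMeanValueSolution

theorem exists_abs_sub_le_of_bounded (x₀ : E) (hR : 0 < R) (B : ℝ) :
    ∃ L : ℝ≥0, ∀ W f : E → ℝ, Continuous W → Continuous f →
      IsMeanValueSolution (closedBall x₀ (2 * R)) W f →
      (∀ y ∈ closedBall x₀ (2 * R), |W y| ≤ B ∧ |f y| ≤ B) →
      ∀ x ∈ ball x₀ R, ∀ y ∈ ball x₀ R, |W x - W y| ≤ L * ‖x - y‖ := by
  set c := R⁻¹ * ∫ z : E, ‖fderiv ℝ meanKernel z‖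
  set d := R * ∫ z : E, ‖fderiv ℝ greenKernel z‖
  refine ⟨(B * (c + d)).toNNReal, fun W f hW hf hsol hB x hx y hy => ?_⟩
  have hsub : ball x₀ (R + R) ⊆ closedBall x₀ (2 * R) := by
    rw [← two_mul]; exact ball_subset_closedBall
  have hM := abs_mean_sub_mean_le hW hR (fun z hz => (hB z (hsub hz)).1) hx hy
  have hQ := abs_green_sub_green_le hf hR (fun z hz => (hB z (hsub hz)).2) hx hy
  rw [hsol hR (closedBall_subset_closedBall_two_mul hx),
    hsol hR (closedBall_subset_closedBall_two_mul hy), add_sub_add_comm]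
  calc |𝓜[R] W x - 𝓜[R] W y + (𝓠[R] f x - 𝓠[R] f y)|
      ≤ |𝓜[R] W x - 𝓜[R] W y| + |𝓠[R] f x - 𝓠[R] f y| := abs_add_le _ _
    _ ≤ B * (c + d) * ‖x - y‖ := (add_le_add hM hQ).trans_eq (by ring)
    _ ≤ (B * (c + d)).toNNReal * ‖x - y‖ := by
        gcongr
        exact Real.le_coe_toNNReal _

theorem of_tendsto {W f : ℕ → E → ℝ} (hW : ∀ n, Continuous (W n)) (hf : ∀ n, Continuous (f n))
    (hsol : ∀ n, IsMeanValueSolution Ω (W n) (f n))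
    (hB : ∀ s ⊆ Ω, IsCompact s → ∃ B, ∀ n, ∀ x ∈ s, |W n x| ≤ B ∧ |f n x| ≤ B)
    (hWw : ∀ x ∈ Ω, Tendsto (fun n => W n x) atTop (𝓝 (w x)))
    (hfg : ∀ x ∈ Ω, Tendsto (fun n => f n x) atTop (𝓝 (g x))) : IsMeanValueSolution Ω w g := by
  have := FiniteDimensional.proper_real E
  intro x r hr hball
  obtain ⟨B, hB⟩ := hB _ hball (isCompact_closedBall x r)
  have hM := (isBallMeasure_meanMeasure hr).tendsto_shiftIntegral (x := x)
    (fun n => (hW n).continuousOn) (fun n y hy => (hB n y hy).1) fun y hy => hWw y (hball hy)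
  have hQ := (isBallMeasure_greenMeasure r).tendsto_shiftIntegral (x := x)
    (fun n => (hf n).continuousOn) (fun n y hy => (hB n y hy).2) fun y hy => hfg y (hball hy)
  refine tendsto_nhds_unique (hWw x (hball (mem_closedBall_self hr.le))) ?_
  simpa only [fun n => hsol n hr hball] using hM.add hQ

theorem locallyLipschitzOn_of_tendsto {W f : ℕ → E → ℝ} (hΩ : IsOpen Ω)
    (hW : ∀ n, Continuous (W n)) (hf : ∀ n, Continuous (f n))
    (hsol : ∀ n, IsMeanValueSolution Ω (W n) (f n))
    (hB : ∀ s ⊆ Ω, IsCompact s → ∃ B, ∀ n, ∀ x ∈ s, |W n x| ≤ B ∧ |f n x| ≤ B)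
    (hWw : ∀ x ∈ Ω, Tendsto (fun n => W n x) atTop (𝓝 (w x))) : LocallyLipschitzOn Ω w := by
  have := FiniteDimensional.proper_real E
  intro x₀ hx₀
  obtain ⟨R, hR, hball⟩ := exists_closedBall_two_mul_subset (hΩ.mem_nhds hx₀)
  obtain ⟨B, hB⟩ := hB _ hball (isCompact_closedBall x₀ (2 * R))
  obtain ⟨L, hL⟩ := exists_abs_sub_le_of_bounded x₀ hR B
  have hsub : ball x₀ R ⊆ Ω :=
    (ball_subset_closedBall.trans (closedBall_subset_closedBall (by linarith))).trans hball
  refine ⟨L, ball x₀ R, mem_nhdsWithin_of_mem_nhds (ball_mem_nhds x₀ hR),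
    LipschitzOnWith.of_dist_le_mul fun x hx y hy => ?_⟩
  rw [Real.dist_eq, dist_eq_norm]
  refine le_of_tendsto ((hWw x (hsub hx)).sub (hWw y (hsub hy))).abs (Eventually.of_forall
    fun n => hL (W n) (f n) (hW n) (hf n) (fun z r hr hz => hsol n hr (hz.trans hball)) (hB n)
      x hx y hy)

theorem contDiffOn (h : IsMeanValueSolution Ω w g) (hΩ : IsOpen Ω) (hw : ContinuousOn w Ω)
    (hγ : 0 < γ) (hg : LocallyHolderOn γ Ω g) : ContDiffOn ℝ 2 w Ω := by
  intro x₀ hx₀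
  obtain ⟨C, U, hU, hC⟩ := hg hx₀
  rw [hΩ.nhdsWithin_eq hx₀] at hU
  obtain ⟨R, hR, hball⟩ := exists_closedBall_two_mul_subset (inter_mem (hΩ.mem_nhds hx₀) hU)
  have hgR := hC.mono (hball.trans inter_subset_right)
  obtain ⟨v, hv⟩ := ContinuousMap.exists_restrict_eq (Y := ℝ) isClosed_closedBall
    ⟨_, (hw.mono (hball.trans inter_subset_left)).domRestrict⟩
  obtain ⟨f, hf⟩ := ContinuousMap.exists_restrict_eq (Y := ℝ) isClosed_closedBall
    ⟨_, (hgR.continuousOn hγ).domRestrict⟩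
  have hvw (y) (hy : y ∈ closedBall x₀ (2 * R)) : w y = v y := (DFunLike.congr_fun hv ⟨y, hy⟩).symm
  have hfg (y) (hy : y ∈ closedBall x₀ (2 * R)) : g y = f y := (DFunLike.congr_fun hf ⟨y, hy⟩).symm
  have heq : EqOn w (𝓜[R] v + 𝓠[R] f) (ball x₀ R) := fun x hx => by
    have hsub := closedBall_subset_closedBall_two_mul hx
    rw [h hR (hsub.trans (hball.trans inter_subset_left)), Pi.add_apply,
      (isBallMeasure_meanMeasure hR).shiftIntegral_congr fun y hy => hvw y (hsub hy),
      (isBallMeasure_greenMeasure R).shiftIntegral_congr fun y hy => hfg y (hsub hy)]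
  have hfC : HolderOnWith C γ f (ball x₀ (2 * R)) := fun y hy z hz => by
    rw [← hfg y (ball_subset_closedBall hy), ← hfg z (ball_subset_closedBall hz)]
    exact hgR y (ball_subset_closedBall hy) z (ball_subset_closedBall hz)
  have hM : ContDiff ℝ 2 (𝓜[R] v) := by
    rw [mean_eq_kernelAverage hR]
    exact contDiff_kernelAverage isUnitBallKernel_meanKernel (n := 2) contDiff_meanKernel
      v.continuous hR.ne'
  exact ((hM.contDiffOn.add (contDiffOn_green f.continuous hR hγ hfC)).congr heq).contDiffAt
    (ball_mem_nhds x₀ hR) |>.contDiffWithinAt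

theorem neg_laplacian_eq (h : IsMeanValueSolution Ω w g) (hΩ : IsOpen Ω) (hw : ContDiffOn ℝ 2 w Ω)
    (hg : ContinuousOn g Ω) (hx : x ∈ Ω) : -Δ w x = g x := by
  have hΔ : ContinuousOn (fun y => -Δ w y) Ω := (continuousOn_laplacian hΩ hw).neg
  have hnhds := hΩ.mem_nhds hx
  have hQ : ∀ᶠ r in 𝓝[>] 0, 𝓠[r] (fun y => -Δ w y) x = 𝓠[r] g x := by
    filter_upwards [eventually_mem_nhdsWithin,
      nhdsWithin_le_nhds (eventually_closedBall_subset hnhds)] with r hr hball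
    exact add_left_cancel ((eq_mean_add_green hΩ hw hr hball).symm.trans (h hr hball))
  exact le_antisymm (le_of_eventually_green_le hnhds hΔ hg (hQ.mono fun _ => Eq.le))
    (le_of_eventually_green_le hnhds hg hΔ (hQ.mono fun _ => Eq.ge))

end IsMeanValueSolution

end MeanValueSolution

section RegularizedLimit

variable {E : Type*} [NormedAddCommGroup E] [InnerProductSpace ℝ E] [FiniteDimensional ℝ E]
  {K : Set E} {p : ℝ} {φ : ℝ → ℝ} {γ : ℝ≥0} {n : ℕ} {w u : E → ℝ} {W : ℕ → E → ℝ} {x : E}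

/-- A positive `C²` solution of `-Δ w = φ(dist(x, K)) w ^ (-p)` off `K`. -/
structure IsSolution (K : Set E) (p : ℝ) (φ : ℝ → ℝ) (w : E → ℝ) : Prop where
  contDiffOn : ContDiffOn ℝ 2 w Kᶜ
  pos : ∀ x ∈ Kᶜ, 0 < w x
  neg_laplacian_eq : ∀ x ∈ Kᶜ, -Δ w x = φ (infDist x K) * w x ^ (-p)

variable [MeasurableSpace E] [BorelSpace E]

namespace IsRegularizedSolution

theorem source_le (hw : IsRegularizedSolution K p φ n w) (hp : 0 ≤ p)
    (hφ : ∀ r, 0 < r → 0 < φ r) {c : ℝ} (hc : 0 < c) (hcw : c ≤ w x) :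
    regularizedSource K p φ n w x ≤ cutoffWeight φ n (infDist x K) * c ^ (-p) := by
  have hn : (0 : ℝ) < 1 / (n + 1) := by positivity
  rw [hw.source_eq hφ]
  exact mul_le_mul_of_nonneg_left
    (Real.rpow_le_rpow_of_nonpos hc (by linarith) (neg_nonpos.2 hp)) (cutoffWeight_nonneg hφ n _)

theorem monotone (hW : ∀ n, IsRegularizedSolution K p φ n (W n)) (hE : 3 ≤ Module.finrank ℝ E)
    (hK : K.Finite) (hne : K.Nonempty) (hp : 0 ≤ p) (hφ : ∀ r, 0 < r → 0 < φ r)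
    (hφc : ContinuousOn φ (Ioi 0)) (x : E) : Monotone fun n => W n x :=
  monotone_nat_of_le_succ fun n => (hW n).le_succ (hW (n + 1)) hE hK hne hp hφ hφc x

theorem exists_abs_le (hW : ∀ n, IsRegularizedSolution K p φ n (W n))
    (hu : IsSupersolution K p φ u) (hE : 3 ≤ Module.finrank ℝ E) (hK : K.Finite)
    (hne : K.Nonempty) (hp : 0 ≤ p) (hφ : ∀ r, 0 < r → 0 < φ r) (hφc : ContinuousOn φ (Ioi 0))
    {s : Set E} (hs : s ⊆ Kᶜ) (hsc : IsCompact s) :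
    ∃ B, ∀ n, ∀ x ∈ s, |W n x| ≤ B ∧ |regularizedSource K p φ n (W n) x| ≤ B := by
  have hpos := (hW 0).pos hE hK hne hp hφ hφc
  have hcont : ContinuousOn (fun x => φ (infDist x K) * W 0 x ^ (-p)) s :=
    ((continuousOn_comp_infDist hK hne hφc).mono hs).mul
      ((hW 0).continuous.continuousOn.rpow_const fun x _ => Or.inl (hpos x).ne')
  obtain ⟨B₁, hB₁⟩ := hsc.bddAbove_image (hu.contDiffOn.continuousOn.mono hs)
  obtain ⟨B₂, hB₂⟩ := hsc.bddAbove_image hcont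
  rw [mem_upperBounds, forall_mem_image] at hB₁ hB₂
  refine ⟨max B₁ B₂, fun n x hx => ⟨le_max_of_le_left ?_, le_max_of_le_right ?_⟩⟩
  · rw [abs_of_nonneg ((hW n).nonneg hφ x)]
    exact ((hW n).le_of_isSupersolution hu hE hK hne hp hφ hφc x (hs hx)).trans (hB₁ hx)
  · rw [abs_of_nonneg (regularizedSource_nonneg hφ K p n (W n) x)]
    have hmono := monotone hW hE hK hne hp hφ hφc x (Nat.zero_le n)
    exact ((hW n).source_le hp hφ (hpos x) hmono).trans ((mul_le_mul_of_nonneg_right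
      (cutoffWeight_le hφ n (infDist_pos_of_finite hK hne (hs hx)))
      (Real.rpow_nonneg (hpos x).le _)).trans (hB₂ hx))

theorem tendsto_source (hW : ∀ n, IsRegularizedSolution K p φ n (W n)) (hK : K.Finite)
    (hne : K.Nonempty) (hφ : ∀ r, 0 < r → 0 < φ r) (hx : x ∈ Kᶜ) (hpos : 0 < w x)
    (hlim : Tendsto (fun n => W n x) atTop (𝓝 (w x))) :
    Tendsto (fun n => regularizedSource K p φ n (W n) x) atTop
      (𝓝 (φ (infDist x K) * w x ^ (-p))) := by
  have hweight : Tendsto (fun n => cutoffWeight φ n (infDist x K)) atTop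
      (𝓝 (φ (infDist x K))) := by
    refine tendsto_const_nhds.congr' ?_
    filter_upwards [eventually_annularCutoff_eq_one (infDist_pos_of_finite hK hne hx)] with n hn
    rw [cutoffWeight, hn, mul_one]
  have hshift := hlim.add (tendsto_one_div_add_atTop_nhds_zero_nat (𝕜 := ℝ))
  rw [add_zero] at hshift
  simpa only [(hW _).source_eq hφ] using hweight.mul (hshift.rpow_const (Or.inl hpos.ne'))

theorem isSolution_of_tendsto (hW : ∀ n, IsRegularizedSolution K p φ n (W n))
    (hu : IsSupersolution K p φ u) (hE : 3 ≤ Module.finrank ℝ E) (hK : K.Finite)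
    (hne : K.Nonempty) (hp : 0 ≤ p) (hφ : ∀ r, 0 < r → 0 < φ r) (hγ : 0 < γ)
    (hφγ : LocallyHolderOn γ (Ioi 0) φ) (hpos : ∀ x ∈ Kᶜ, 0 < w x)
    (hlim : ∀ x ∈ Kᶜ, Tendsto (fun n => W n x) atTop (𝓝 (w x))) : IsSolution K p φ w := by
  have hopen : IsOpen Kᶜ := hK.isClosed.isOpen_compl
  have hφc := hφγ.continuousOn hγ
  have hfc n := continuous_regularizedSource (K := K) hp hφc n (hW n).continuous
  have hsol n : IsMeanValueSolution Kᶜ (W n) (regularizedSource K p φ n (W n)) :=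
    fun x r hr _ => (hW n).eq_mean_add_green hE hK hne hp hφc hr x
  have hB (s) := exists_abs_le (s := s) hW hu hE hK hne hp hφ hφc
  have hwL : LocallyLipschitzOn Kᶜ w := IsMeanValueSolution.locallyLipschitzOn_of_tendsto hopen
    (fun n => (hW n).continuous) hfc hsol hB hlim
  have hw : IsMeanValueSolution Kᶜ w fun x => φ (infDist x K) * w x ^ (-p) :=
    .of_tendsto (fun n => (hW n).continuous) hfc hsol hB hlim
      fun x hx => tendsto_source hW hK hne hφ hx (hpos x hx) (hlim x hx)
  have hδ : 0 < min γ 1 := lt_min hγ one_pos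
  have hsource : LocallyHolderOn (min γ 1) Kᶜ fun x => φ (infDist x K) * w x ^ (-p) :=
    ((hφγ.of_le (min_le_left γ 1)).comp
      (lipschitz_infDist_pt K).locallyLipschitz.locallyLipschitzOn
      fun x hx => infDist_pos_of_finite hK hne hx).mul
      ((locallyHolderOn_rpow_const (min_le_right γ 1) (-p)).comp hwL hpos) hδ
  have hw2 := hw.contDiffOn hopen hwL.continuousOn hδ hsource
  exact ⟨hw2, hpos, fun x hx => hw.neg_laplacian_eq hopen hw2 (hsource.continuousOn hδ) hx⟩

end IsRegularizedSolution

end RegularizedLimit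

section AnnularDensity

variable {φ ψ : ℝ → ℝ}

/-- `ψ` is a continuous nonnegative radial density which is supported in an annulus. -/
structure IsAnnularDensity (ψ : ℝ → ℝ) : Prop where
  continuous : Continuous ψ
  nonneg : ∀ t, 0 ≤ ψ t
  hasCompactSupport : HasCompactSupport ψ
  tsupport_subset : tsupport ψ ⊆ Ioi 0

theorem isAnnularDensity_cutoffWeight (hφ : ∀ r, 0 < r → 0 < φ r) (hφc : ContinuousOn φ (Ioi 0))
    (n : ℕ) : IsAnnularDensity (cutoffWeight φ n) := by
  have hn : (0 : ℝ) < (n : ℝ) + 1 := by positivity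
  have hsupp : tsupport (cutoffWeight φ n) ⊆ Icc (1 / ((n : ℝ) + 1)) (n + 2) := by
    refine closure_minimal (fun t ht => ?_) isClosed_Icc
    contrapose! ht
    have hcut : annularCutoff n t = 0 := by
      rcases lt_or_ge t (1 / ((n : ℝ) + 1)) with h | h
      · exact annularCutoff_of_mul_le_one (by rw [mul_comm]; exact ((lt_div_iff₀ hn).1 h).le)
      · exact annularCutoff_of_ge (le_of_not_ge fun h' => ht ⟨h, h'⟩)
    simp [cutoffWeight, hcut]
  exact ⟨continuous_cutoffWeight hφc n, cutoffWeight_nonneg hφ n,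
    isCompact_Icc.of_isClosed_subset (isClosed_tsupport _) hsupp,
    hsupp.trans fun t ht => (one_div_pos.2 hn).trans_le ht.1⟩

namespace IsAnnularDensity

theorem mul (hψ : IsAnnularDensity ψ) {χ : ℝ → ℝ} (hχ : Continuous χ) (hχ0 : ∀ t, 0 ≤ χ t) :
    IsAnnularDensity fun t => ψ t * χ t where
  continuous := hψ.continuous.mul hχ
  nonneg t := mul_nonneg (hψ.nonneg t) (hχ0 t)
  hasCompactSupport := hψ.hasCompactSupport.mul_right
  tsupport_subset := (tsupport_mul_subset_left).trans hψ.tsupport_subset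

theorem zero_notMem_tsupport (hψ : IsAnnularDensity ψ) : (0 : ℝ) ∉ tsupport ψ := fun h =>
  lt_irrefl (0 : ℝ) (hψ.tsupport_subset h)

theorem integrable_id_mul (hψ : IsAnnularDensity ψ) : Integrable fun σ => σ * ψ σ :=
  (continuous_id.mul hψ.continuous).integrable_of_hasCompactSupport hψ.hasCompactSupport.mul_left

theorem isRadialDensity (hψ : IsAnnularDensity ψ) (m : ℕ) : IsRadialDensity m ψ where
  continuousOn := hψ.continuous.continuousOn
  nonneg σ _ := hψ.nonneg σ
  integrableOn_Ioo := (((continuous_pow (m + 2)).mul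
    hψ.continuous).integrable_of_hasCompactSupport hψ.hasCompactSupport.mul_left).integrableOn
  integrableOn_Ioi_one := hψ.integrable_id_mul.integrableOn

theorem radialPotential_norm_sub_eventuallyEq {E : Type*} [NormedAddCommGroup E]
    (hψ : IsAnnularDensity ψ) (m : ℕ) (k : E) :
    (fun x => radialPotential m ψ ‖x - k‖) =ᶠ[𝓝 k] fun _ => radialPotential m ψ 0 := by
  have hzero : ψ =ᶠ[𝓝 0] 0 :=
    notMem_tsupport_iff_eventuallyEq.1 hψ.zero_notMem_tsupport
  obtain ⟨δ, hδ, hball⟩ := Metric.eventually_nhds_iff.1 hzero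
  filter_upwards [ball_mem_nhds k hδ] with x hx
  have hint : ∫ σ in (0)..‖x - k‖, σ * ψ σ = 0 := by
    refine intervalIntegral.integral_zero_ae (Eventually.of_forall fun σ hσ => ?_)
    rw [uIoc_of_le (norm_nonneg _)] at hσ
    have : dist σ 0 < δ := by
      rw [Real.dist_0_eq_abs, abs_of_pos hσ.1]
      exact hσ.2.trans_lt (mem_ball_iff_norm.1 hx)
    rw [hball this, Pi.zero_apply, mul_zero]
  have hmem := (hψ.isRadialDensity m).radialPotential_zero_sub_mem_Icc
    hψ.integrable_id_mul.integrableOn (norm_nonneg (x - k))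
  rw [hint, mul_zero, Icc_self, mem_singleton_iff] at hmem
  exact (sub_eq_zero.1 hmem).symm

variable {E : Type*} [NormedAddCommGroup E] [InnerProductSpace ℝ E]

theorem contDiff_radialPotential_norm_sub (hψ : IsAnnularDensity ψ) (m : ℕ) (k : E) :
    ContDiff ℝ 2 fun x => radialPotential m ψ ‖x - k‖ := by
  refine contDiff_iff_contDiffAt.2 fun x => ?_
  rcases eq_or_ne x k with rfl | hx
  · exact contDiffAt_const.congr_of_eventuallyEq (hψ.radialPotential_norm_sub_eventuallyEq m x)
  · exact (hψ.isRadialDensity m).isRadialProfile.contDiffAt_norm_sub hx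

theorem neg_laplacian_radialPotential_norm_sub [FiniteDimensional ℝ E] {m : ℕ}
    (hψ : IsAnnularDensity ψ) (hE : Module.finrank ℝ E = m + 3) (k x : E) :
    -Δ (fun x => radialPotential m ψ ‖x - k‖) x = ψ ‖x - k‖ := by
  rcases eq_or_ne x k with rfl | hx
  · have hψ0 := image_eq_zero_of_notMem_tsupport hψ.zero_notMem_tsupport
    rw [(InnerProductSpace.laplacian_congr_nhds
      (hψ.radialPotential_norm_sub_eventuallyEq m x)).eq_of_nhds, sub_self, norm_zero, hψ0]
    simp
  · rw [(hψ.isRadialDensity m).isRadialProfile.laplacian_norm_sub hx, hE, radialPotentialDeriv]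
    push_cast
    ring

end IsAnnularDensity

end AnnularDensity

theorem eventually_infDist_eq_norm_sub {E : Type*} [NormedAddCommGroup E] {K : Set E}
    (hK : K.Finite) {k : E} (hk : k ∈ K) : ∀ᶠ x in 𝓝 k, infDist x K = ‖x - k‖ := by
  obtain ⟨ε, hε, hball⟩ := Metric.isOpen_iff.1
    (hK.subset sdiff_subset : (K \ {k}).Finite).isClosed.isOpen_compl k (by simp)
  filter_upwards [ball_mem_nhds k (half_pos hε)] with x hx
  rw [← dist_eq_norm]
  refine le_antisymm (infDist_le_dist_of_mem hk) ((le_infDist ⟨k, hk⟩).2 fun {y} hy => ?_)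
  rcases eq_or_ne y k with rfl | hne
  · exact le_rfl
  · have hfar : ε ≤ dist y k := not_lt.1 fun h => hball (mem_ball.2 h) ⟨hy, hne⟩
    have := dist_triangle_left y k x
    rw [mem_ball] at hx
    linarith

section Necessity

variable {m : ℕ} {p δ : ℝ} {φ ψ χ : ℝ → ℝ}

theorem integrableOn_Ioc_of_outerMoment_le (hφ : ∀ r, 0 < r → 0 < φ r)
    (hφc : ContinuousOn φ (Ioi 0)) (hχ : Continuous χ) (hχ0 : ∀ t, 0 ≤ χ t) (hδ1 : δ ≤ 1)
    (hχδ : ∀ t ∈ Ioc 0 δ, χ t = 1) {I : ℝ}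
    (hI : ∀ n, outerMoment (fun t => cutoffWeight φ n t * χ t) 0 ≤ I) :
    IntegrableOn (fun r => r * φ r) (Ioc 0 δ) := by
  have hc : ContinuousOn (fun r => r * φ r) (Ioi 0) := continuousOn_id.mul hφc
  have ha (n : ℕ) : 0 < 2 * (1 / ((n : ℝ) + 1)) := by positivity
  refine integrableOn_Ioc_of_intervalIntegral_norm_bounded_left
    (a := fun n : ℕ => 2 * (1 / ((n : ℝ) + 1))) (I := I) (fun n => ?_)
    (by simpa using (tendsto_one_div_add_atTop_nhds_zero_nat (𝕜 := ℝ)).const_mul 2)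
    (Eventually.of_forall fun n => le_trans ?_ (hI n))
  · exact ((hc.mono fun r hr => (ha n).trans_le hr.1).integrableOn_Icc).mono_set Ioc_subset_Icc_self
  have hψ := (isAnnularDensity_cutoffWeight hφ hφc n).mul hχ hχ0
  have heq : ∀ r ∈ Ioc (2 * (1 / ((n : ℝ) + 1))) δ,
      ‖r * φ r‖ = r * (cutoffWeight φ n r * χ r) := fun r hr => by
    have hr0 := (ha n).trans hr.1
    have hcut : annularCutoff n r = 1 := by
      refine annularCutoff_eq_one ?_ ((hr.2.trans hδ1).trans (by simp))
      have := hr.1.le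
      rwa [mul_one_div, div_le_iff₀' (by positivity)] at this
    rw [hχδ r ⟨hr0, hr.2⟩, mul_one, cutoffWeight, hcut, mul_one,
      Real.norm_of_nonneg (mul_pos hr0 (hφ r hr0)).le]
  rw [setIntegral_congr_fun measurableSet_Ioc heq]
  exact setIntegral_mono_set hψ.integrable_id_mul.integrableOn
    ((ae_restrict_mem measurableSet_Ioi).mono fun r hr => mul_nonneg (le_of_lt hr) (hψ.nonneg r))
    (LE.le.eventuallyLE fun r hr => (ha n).trans hr.1)

variable {E : Type*} [NormedAddCommGroup E] [InnerProductSpace ℝ E] [FiniteDimensional ℝ E]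
  {K : Set E} {k : E} {v : E → ℝ}

theorem IsSolution.exists_mul_le_neg_laplacian (hv : IsSolution K p φ v) (hp : 0 ≤ p)
    (hφ : ∀ r, 0 < r → 0 < φ r) (hK : K.Finite) (hk : k ∈ K) (hvk : ContinuousAt v k) :
    ∃ c > 0, ∀ᶠ x in 𝓝 k, x ∈ Kᶜ → c * φ ‖x - k‖ ≤ -Δ v x := by
  refine ⟨(|v k| + 1) ^ (-p), by positivity, ?_⟩
  filter_upwards [eventually_infDist_eq_norm_sub hK hk,
    hvk.eventually_le_const ((le_abs_self _).trans_lt (lt_add_one |v k|))] with x hdist hle hx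
  have hpos : 0 < infDist x K := infDist_pos_of_finite hK ⟨k, hk⟩ hx
  rw [hv.neg_laplacian_eq x hx, ← hdist, mul_comm]
  exact mul_le_mul_of_nonneg_left
    (Real.rpow_le_rpow_of_nonpos (hv.pos x hx) hle (neg_nonpos.2 hp)) (hφ _ hpos).le

variable [MeasurableSpace E] [BorelSpace E]

theorem IsAnnularDensity.radialPotential_norm_sub_le (hψ : IsAnnularDensity ψ)
    (hE : Module.finrank ℝ E = m + 3) (hK : K.Finite) (hne : K.Nonempty)
    (hv : ContDiffOn ℝ 2 v Kᶜ) (hv0 : ∀ x ∈ Kᶜ, 0 ≤ v x)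
    (hΔ : ∀ x ∈ Kᶜ, ψ ‖x - k‖ ≤ -Δ v x) : ∀ x ∈ Kᶜ, radialPotential m ψ ‖x - k‖ ≤ v x := by
  have := FiniteDimensional.proper_real E
  have hdens := hψ.isRadialDensity m
  refine le_of_laplacian_le (by omega) hK hne (hψ.contDiff_radialPotential_norm_sub m k).contDiffOn
    hv (fun x hx _ => ?_) (B := radialPotential m ψ 0) (fun x hx => ?_) fun η hη => ?_
  · have := hψ.neg_laplacian_radialPotential_norm_sub hE k x
    linarith [hΔ x hx]
  · have := hdens.radialPotential_le_zero hψ.integrable_id_mul.integrableOn (norm_nonneg (x - k))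
    linarith [hv0 x hx]
  · filter_upwards [(tendsto_comp_norm_sub_cocompact hdens.tendsto_radialPotential k).eventually
      (gt_mem_nhds hη), hK.isCompact.compl_mem_cocompact] with x hlt hx
    linarith [hv0 x hx]

theorem IsAnnularDensity.outerMoment_le (hψ : IsAnnularDensity ψ)
    (hE : Module.finrank ℝ E = m + 3) (hK : K.Finite) (hne : K.Nonempty) (hvc : Continuous v)
    (hv : ContDiffOn ℝ 2 v Kᶜ) (hv0 : ∀ x ∈ Kᶜ, 0 ≤ v x)
    (hΔ : ∀ x ∈ Kᶜ, ψ ‖x - k‖ ≤ -Δ v x) : outerMoment ψ 0 ≤ ((m : ℝ) + 1) * v k := by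
  have : Nontrivial E := Module.nontrivial_of_finrank_pos (R := ℝ) (by omega)
  have hdense : Dense Kᶜ := hK.countable.dense_compl ℝ
  have hclosed : IsClosed {x | radialPotential m ψ ‖x - k‖ ≤ v x} :=
    isClosed_le (hψ.contDiff_radialPotential_norm_sub m k).continuous hvc
  have hle := hclosed.closure_subset_iff.2 (hψ.radialPotential_norm_sub_le hE hK hne hv hv0 hΔ)
    (hdense k)
  rwa [mem_ofPred_eq, sub_self, norm_zero, radialPotential_zero, one_div,
    inv_mul_le_iff₀ (by positivity)] at hle

theorem outerMoment_cutoffWeight_mul_bump_le (hE : Module.finrank ℝ E = m + 3) (hK : K.Finite)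
    (hk : k ∈ K) (hφ : ∀ r, 0 < r → 0 < φ r) (hφc : ContinuousOn φ (Ioi 0))
    (χ : ContDiffBump (0 : ℝ)) (hvc : Continuous v) (hv : ContDiffOn ℝ 2 v Kᶜ)
    (hv0 : ∀ x ∈ Kᶜ, 0 ≤ v x) (hΔ0 : ∀ x ∈ Kᶜ, 0 ≤ -Δ v x)
    (hΔ : ∀ x ∈ Kᶜ, ‖x - k‖ < χ.rOut → φ ‖x - k‖ ≤ -Δ v x) (n : ℕ) :
    outerMoment (fun t => cutoffWeight φ n t * χ t) 0 ≤ ((m : ℝ) + 1) * v k := by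
  refine ((isAnnularDensity_cutoffWeight hφ hφc n).mul χ.continuous
    fun _ => χ.nonneg).outerMoment_le hE hK ⟨k, hk⟩ hvc hv hv0 fun x hx => ?_
  have hxk : 0 < ‖x - k‖ := norm_sub_pos_iff.2 fun h => hx (h ▸ hk)
  rcases lt_or_ge ‖x - k‖ χ.rOut with hlt | hge
  · calc cutoffWeight φ n ‖x - k‖ * χ ‖x - k‖
        ≤ cutoffWeight φ n ‖x - k‖ :=
          mul_le_of_le_one_right (cutoffWeight_nonneg hφ n _) χ.le_one
      _ ≤ φ ‖x - k‖ := cutoffWeight_le hφ n hxk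
      _ ≤ -Δ v x := hΔ x hx hlt
  · have hχ : χ ‖x - k‖ = 0 := χ.zero_of_le_dist (by rwa [dist_zero_right, norm_norm])
    rw [hχ, mul_zero]
    exact hΔ0 x hx

theorem IsSolution.integrableOn_of_continuous (hv : IsSolution K p φ v) (hvc : Continuous v)
    (hE : 3 ≤ Module.finrank ℝ E) (hK : K.Finite) (hne : K.Nonempty) (hp : 0 ≤ p)
    (hφ : ∀ r, 0 < r → 0 < φ r) (hφc : ContinuousOn φ (Ioi 0)) :
    IntegrableOn (fun r => r * φ r) (Ioo 0 1) := by
  obtain ⟨m, hm⟩ := Nat.exists_eq_add_of_le' hE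
  obtain ⟨k, hk⟩ := hne
  obtain ⟨c, hc, hev⟩ := hv.exists_mul_le_neg_laplacian hp hφ hK hk hvc.continuousAt
  obtain ⟨δ, hδ, hball⟩ := Metric.eventually_nhds_iff.1 hev
  have hδ' : 0 < min δ 1 := lt_min hδ one_pos
  let χ : ContDiffBump (0 : ℝ) := ⟨min δ 1 / 2, min δ 1, half_pos hδ', half_lt_self hδ'⟩
  have hφ' : ∀ r, 0 < r → 0 < c * φ r := fun r hr => mul_pos hc (hφ r hr)
  have hφc' : ContinuousOn (fun r => c * φ r) (Ioi 0) := continuousOn_const.mul hφc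
  have hmoment := outerMoment_cutoffWeight_mul_bump_le hm hK hk hφ' hφc' χ hvc hv.contDiffOn
    (fun x hx => (hv.pos x hx).le)
    (fun x hx => hv.neg_laplacian_eq x hx ▸ mul_nonneg
      (hφ _ (infDist_pos_of_finite hK ⟨k, hk⟩ hx)).le (Real.rpow_nonneg (hv.pos x hx).le _))
    fun x hx hlt => hball (by rw [dist_eq_norm]; exact hlt.trans_le (min_le_left δ 1)) hx
  have hχ : ∀ t ∈ Ioc 0 (min δ 1 / 2), χ t = 1 := fun t ht => χ.one_of_mem_closedBall
    (mem_closedBall_zero_iff.2 ((Real.norm_of_nonneg ht.1.le).trans_le ht.2))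
  have hscaled := integrableOn_Ioc_of_outerMoment_le hφ' hφc' χ.continuous (fun _ => χ.nonneg)
    ((half_lt_self hδ').le.trans (min_le_right δ 1)) hχ hmoment
  simp_rw [mul_left_comm] at hscaled
  have hnear : IntegrableOn (fun r => r * φ r) (Ioc 0 (min δ 1 / 2)) :=
    (integrable_const_mul_iff hc.ne'.isUnit _).1 hscaled
  have hfar : IntegrableOn (fun r => r * φ r) (Icc (min δ 1 / 2) 1) :=
    ((continuousOn_id.mul hφc).mono fun r hr => (half_pos hδ').trans_le hr.1).integrableOn_Icc
  exact (hnear.union hfar).mono_set fun r hr =>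
    (le_or_gt r (min δ 1 / 2)).imp (fun h => ⟨hr.1, h⟩) fun h => ⟨h.le, hr.2.le⟩

end Necessity

theorem tendsto_integral_zero_nhdsGT {g : ℝ → ℝ} (hg : IntegrableOn g (Ioo 0 1)) :
    Tendsto (fun t => ∫ σ in (0)..t, g σ) (𝓝[>] 0) (𝓝 0) := by
  have hint := (intervalIntegrable_iff_integrableOn_Ioo_of_le zero_le_one).2 hg
  have hlim := (intervalIntegral.continuousOn_primitive_interval' hint left_mem_uIcc 0
    left_mem_uIcc).tendsto
  rw [intervalIntegral.integral_same, uIcc_of_le zero_le_one] at hlim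
  exact hlim.mono_left (nhdsWithin_Ioo_eq_nhdsGT (zero_lt_one' ℝ) ▸
    nhdsWithin_mono _ Ioo_subset_Icc_self)

section Sufficiency

variable {m n : ℕ} {p r ρ C B : ℝ} {φ ψ : ℝ → ℝ}
  {E : Type*} [NormedAddCommGroup E] [InnerProductSpace ℝ E] [FiniteDimensional ℝ E]
  [MeasurableSpace E] [BorelSpace E] {K : Set E} {k x : E} {w : E → ℝ} {W : ℕ → E → ℝ}

theorem IsAnnularDensity.green_norm_sub_le (hψ : IsAnnularDensity ψ)
    (hE : Module.finrank ℝ E = m + 3) (hr : 0 < r) (hρ : ‖x - k‖ + r ≤ ρ) :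
    𝓠[r] (fun y => ψ ‖y - k‖) x ≤ 1 / ((m : ℝ) + 1) * ∫ σ in (0)..ρ, σ * ψ σ := by
  have := FiniteDimensional.proper_real E
  have hdens := hψ.isRadialDensity m
  have hint := hψ.integrable_id_mul.integrableOn (s := Ioo 0 1)
  have hC2 := hψ.contDiff_radialPotential_norm_sub m k
  have hgreen := eq_mean_add_green_of_contDiff hC2 hr x
  simp_rw [hψ.neg_laplacian_radialPotential_norm_sub hE k] at hgreen
  have hlow : ∀ y ∈ closedBall x r, radialPotential m ψ 0 -
      1 / ((m : ℝ) + 1) * ∫ σ in (0)..ρ, σ * ψ σ ≤ radialPotential m ψ ‖y - k‖ := fun y hy => by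
    have hyρ : ‖y - k‖ ≤ ρ := by
      linarith [norm_sub_le_norm_sub_add_norm_sub y x k, mem_closedBall_iff_norm.1 hy]
    have hmono : ∫ σ in (0)..‖y - k‖, σ * ψ σ ≤ ∫ σ in (0)..ρ, σ * ψ σ :=
      intervalIntegral.integral_mono_interval le_rfl (norm_nonneg _) hyρ
        ((ae_restrict_mem measurableSet_Ioc).mono fun σ hσ => mul_nonneg hσ.1.le (hψ.nonneg σ))
        hψ.integrable_id_mul.intervalIntegrable
    have := (hdens.radialPotential_zero_sub_mem_Icc hint (norm_nonneg (y - k))).2.trans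
      (mul_le_mul_of_nonneg_left hmono (by positivity))
    linarith
  have hmean := (isBallMeasure_meanMeasure hr).shiftIntegral_mono continuousOn_const
    hC2.continuous.continuousOn hlow
  rw [mean_const hr] at hmean
  have := hdens.radialPotential_le_zero hint (norm_nonneg (x - k))
  linarith

theorem green_cutoffWeight_norm_sub_le (hE : Module.finrank ℝ E = m + 3)
    (hφ : ∀ r, 0 < r → 0 < φ r) (hφc : ContinuousOn φ (Ioi 0))
    (hzero : IntegrableOn (fun r => r * φ r) (Ioo 0 1)) (hr : 0 < r) (hρ : ‖x - k‖ + r ≤ ρ)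
    (n : ℕ) : 𝓠[r] (fun y => cutoffWeight φ n ‖y - k‖) x ≤
      1 / ((m : ℝ) + 1) * ∫ σ in (0)..ρ, σ * φ σ := by
  have hψ := isAnnularDensity_cutoffWeight hφ hφc n
  have hρ0 : 0 ≤ ρ := by linarith [norm_nonneg (x - k)]
  refine (hψ.green_norm_sub_le hE hr hρ).trans (mul_le_mul_of_nonneg_left ?_ (by positivity))
  rw [intervalIntegral.integral_of_le hρ0, intervalIntegral.integral_of_le hρ0]
  exact setIntegral_mono_on hψ.integrable_id_mul.integrableOn
    (integrableOn_Ioc_zero_of_Ioo (continuousOn_id.mul hφc) hzero ρ) measurableSet_Ioc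
    fun σ hσ => mul_le_mul_of_nonneg_left (cutoffWeight_le hφ n hσ.1) hσ.1.le

namespace IsRegularizedSolution

theorem exists_source_le (hW : ∀ n, IsRegularizedSolution K p φ n (W n))
    (hE : 3 ≤ Module.finrank ℝ E) (hK : K.Finite) (hp : 0 ≤ p) (hφ : ∀ r, 0 < r → 0 < φ r)
    (hφc : ContinuousOn φ (Ioi 0)) (hk : k ∈ K) :
    ∃ C > 0, ∀ᶠ x in 𝓝 k, ∀ n,
      regularizedSource K p φ n (W n) x ≤ C * cutoffWeight φ n ‖x - k‖ := by
  have hpos := (hW 0).pos hE hK ⟨k, hk⟩ hp hφ hφc k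
  refine ⟨(W 0 k / 2) ^ (-p), by positivity, ?_⟩
  filter_upwards [eventually_infDist_eq_norm_sub hK hk,
    (hW 0).continuous.continuousAt.eventually_const_le (half_lt_self hpos)] with x hdist hle n
  have hmono := monotone hW hE hK ⟨k, hk⟩ hp hφ hφc x (Nat.zero_le n)
  rw [mul_comm, ← hdist]
  exact (hW n).source_le hp hφ (half_pos hpos) (hle.trans hmono)

theorem exists_green_source_le (hW : ∀ n, IsRegularizedSolution K p φ n (W n))
    (hE : 3 ≤ Module.finrank ℝ E) (hK : K.Finite) (hp : 0 ≤ p) (hφ : ∀ r, 0 < r → 0 < φ r)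
    (hφc : ContinuousOn φ (Ioi 0)) (hzero : IntegrableOn (fun r => r * φ r) (Ioo 0 1))
    (hk : k ∈ K) {ε : ℝ} (hε : 0 < ε) :
    ∃ r > 0, ∀ᶠ x in 𝓝 k, ∀ n, 𝓠[r] (regularizedSource K p φ n (W n)) x ≤ ε := by
  obtain ⟨m, hm⟩ := Nat.exists_eq_add_of_le' hE
  obtain ⟨C, hC, hev⟩ := exists_source_le hW hE hK hp hφ hφc hk
  obtain ⟨η, hη, hsource⟩ := Metric.eventually_nhds_iff.1 hev
  have hlim := ((tendsto_integral_zero_nhdsGT hzero).const_mul (1 / ((m : ℝ) + 1))).const_mul C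
  rw [mul_zero, mul_zero] at hlim
  obtain ⟨ρ, hρε, hρ⟩ := ((hlim.eventually_le_const hε).and (Ioo_mem_nhdsGT hη)).exists
  refine ⟨ρ / 2, half_pos hρ.1, ?_⟩
  filter_upwards [ball_mem_nhds k (half_pos hρ.1)] with x hx n
  rw [mem_ball_iff_norm] at hx
  have hle : ∀ y ∈ closedBall x (ρ / 2),
      regularizedSource K p φ n (W n) y ≤ C * cutoffWeight φ n ‖y - k‖ := fun y hy => by
    refine hsource ?_ n
    rw [dist_eq_norm]
    linarith [norm_sub_le_norm_sub_add_norm_sub y x k, mem_closedBall_iff_norm.1 hy, hρ.2]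
  have hcont : Continuous fun y => cutoffWeight φ n ‖y - k‖ :=
    (continuous_cutoffWeight hφc n).comp (by fun_prop)
  calc 𝓠[ρ / 2] (regularizedSource K p φ n (W n)) x
      ≤ 𝓠[ρ / 2] (fun y => C * cutoffWeight φ n ‖y - k‖) x :=
        (isBallMeasure_greenMeasure _).shiftIntegral_mono
          (continuous_regularizedSource hp hφc n (hW n).continuous).continuousOn
          (continuous_const.mul hcont).continuousOn hle
    _ = C * 𝓠[ρ / 2] (fun y => cutoffWeight φ n ‖y - k‖) x := shiftIntegral_const_mul _ _ _ _
    _ ≤ C * (1 / ((m : ℝ) + 1) * ∫ σ in (0)..ρ, σ * φ σ) := mul_le_mul_of_nonneg_left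
        (green_cutoffWeight_norm_sub_le hm hφ hφc hzero (half_pos hρ.1) (by linarith) n) hC.le
    _ ≤ ε := hρε

theorem equicontinuousAt (hW : ∀ n, IsRegularizedSolution K p φ n (W n))
    (hE : 3 ≤ Module.finrank ℝ E) (hK : K.Finite) (hp : 0 ≤ p) (hφ : ∀ r, 0 < r → 0 < φ r)
    (hφc : ContinuousOn φ (Ioi 0)) (hzero : IntegrableOn (fun r => r * φ r) (Ioo 0 1))
    (hB : ∀ n x, W n x ≤ B) (hk : k ∈ K) : EquicontinuousAt W k := by
  refine Metric.equicontinuousAt_iff_right.2 fun ε hε => ?_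
  obtain ⟨r, hr, hgreen⟩ := exists_green_source_le hW hE hK hp hφ hφc hzero hk (half_pos hε)
  set L := r⁻¹ * (B * ∫ z : E, ‖fderiv ℝ meanKernel z‖)
  have hlim : Tendsto (fun x => L * ‖k - x‖) (𝓝 k) (𝓝 0) := by
    have : Continuous fun x => L * ‖k - x‖ := by fun_prop
    simpa using this.tendsto k
  filter_upwards [hgreen, hlim.eventually_lt_const (half_pos hε), ball_mem_nhds k one_pos]
    with x hx hLx hx1 n
  have hmean : |𝓜[r] (W n) k - 𝓜[r] (W n) x| ≤ L * ‖k - x‖ :=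
    abs_mean_sub_mean_le (hW n).continuous hr
      (fun y _ => (abs_of_nonneg ((hW n).nonneg hφ y)).trans_le (hB n y))
      (mem_ball_self one_pos) hx1
  have hgreen0 y : 0 ≤ 𝓠[r] (regularizedSource K p φ n (W n)) y :=
    integral_nonneg fun z => regularizedSource_nonneg hφ K p n (W n) (y + z)
  rw [Real.dist_eq, (hW n).eq_mean_add_green hE hK ⟨k, hk⟩ hp hφc hr x,
    (hW n).eq_mean_add_green hE hK ⟨k, hk⟩ hp hφc hr k, add_sub_add_comm]
  calc _ ≤ |𝓜[r] (W n) k - 𝓜[r] (W n) x| + |𝓠[r] (regularizedSource K p φ n (W n)) k -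
        𝓠[r] (regularizedSource K p φ n (W n)) x| := abs_add_le _ _
    _ < ε / 2 + ε / 2 := add_lt_add_of_lt_of_le (hmean.trans_lt hLx)
      (abs_sub_le_of_nonneg_of_le (hgreen0 k) (hgreen.self_of_nhds n) (hgreen0 x) (hx n))
    _ = ε := add_halves ε

end IsRegularizedSolution

end Sufficiency

/-! ### The minimal solution -/

section MinimalSolution

variable {p B : ℝ} {γ : ℝ≥0} {φ : ℝ → ℝ}
  {E : Type*} [NormedAddCommGroup E] [InnerProductSpace ℝ E] [FiniteDimensional ℝ E]
  {K : Set E} {n : ℕ} {v w u : E → ℝ} {W : ℕ → E → ℝ}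

theorem IsSolution.congr (hw : IsSolution K p φ w) (hK : K.Finite) (h : EqOn v w Kᶜ) :
    IsSolution K p φ v where
  contDiffOn := hw.contDiffOn.congr h
  pos x hx := (hw.pos x hx).trans_eq (h hx).symm
  neg_laplacian_eq x hx := by
    have hev : v =ᶠ[𝓝 x] w := h.eventuallyEq_of_mem (hK.isClosed.isOpen_compl.mem_nhds hx)
    rw [(InnerProductSpace.laplacian_congr_nhds hev).self_of_nhds, hw.neg_laplacian_eq x hx, h hx]

variable [MeasurableSpace E] [BorelSpace E]

namespace IsRegularizedSolution

theorem exists_tendsto (hW : ∀ n, IsRegularizedSolution K p φ n (W n))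
    (hE : 3 ≤ Module.finrank ℝ E) (hK : K.Finite) (hne : K.Nonempty) (hp : 0 ≤ p)
    (hφ : ∀ r, 0 < r → 0 < φ r) (hφc : ContinuousOn φ (Ioi 0)) :
    ∃ w : E → ℝ, ∀ x, BddAbove (range fun n => W n x) →
      0 < w x ∧ Tendsto (fun n => W n x) atTop (𝓝 (w x)) :=
  ⟨fun x => ⨆ n, W n x, fun x hx => ⟨((hW 0).pos hE hK hne hp hφ hφc x).trans_le (le_ciSup hx 0),
    tendsto_atTop_ciSup (monotone hW hE hK hne hp hφ hφc x) hx⟩⟩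

theorem exists_isSolution_tendsto (hW : ∀ n, IsRegularizedSolution K p φ n (W n))
    (hu : IsSupersolution K p φ u) (hE : 3 ≤ Module.finrank ℝ E) (hK : K.Finite)
    (hne : K.Nonempty) (hp : 0 ≤ p) (hφ : ∀ r, 0 < r → 0 < φ r) (hγ : 0 < γ)
    (hφγ : LocallyHolderOn γ (Ioi 0) φ) :
    ∃ w, IsSolution K p φ w ∧ ∀ x ∈ Kᶜ, Tendsto (fun n => W n x) atTop (𝓝 (w x)) := by
  have hφc := hφγ.continuousOn hγ
  obtain ⟨w, hw⟩ := exists_tendsto hW hE hK hne hp hφ hφc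
  have hbdd x (hx : x ∈ Kᶜ) : BddAbove (range fun n => W n x) := ⟨u x, forall_mem_range.2
    fun n => (hW n).le_of_isSupersolution hu hE hK hne hp hφ hφc x hx⟩
  have hlim x hx := (hw x (hbdd x hx)).2
  exact ⟨w, isSolution_of_tendsto hW hu hE hK hne hp hφ hγ hφγ (fun x hx => (hw x (hbdd x hx)).1)
    hlim, hlim⟩

theorem le_of_isSupersolution_of_le (hw : IsRegularizedSolution K p φ n w)
    (hu : IsSupersolution K p φ u) (hB : ∀ x, u x ≤ B) (hE : 3 ≤ Module.finrank ℝ E)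
    (hK : K.Finite) (hne : K.Nonempty) (hp : 0 ≤ p) (hφ : ∀ r, 0 < r → 0 < φ r)
    (hφc : ContinuousOn φ (Ioi 0)) (x : E) : w x ≤ B := by
  have : Nontrivial E := Module.nontrivial_of_finrank_pos (R := ℝ) (by lia)
  have hsub : Kᶜ ⊆ {x | w x ≤ B} := fun x hx =>
    (hw.le_of_isSupersolution hu hE hK hne hp hφ hφc x hx).trans (hB x)
  exact (isClosed_le hw.continuous continuous_const).closure_subset_iff.2 hsub
    (hK.countable.dense_compl ℝ x)

theorem exists_continuous_tendsto (hW : ∀ n, IsRegularizedSolution K p φ n (W n))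
    (hu : IsSupersolution K p φ u) (hB : ∀ x, u x ≤ B) (hE : 3 ≤ Module.finrank ℝ E)
    (hK : K.Finite) (hne : K.Nonempty) (hp : 0 ≤ p) (hφ : ∀ r, 0 < r → 0 < φ r) (hγ : 0 < γ)
    (hφγ : LocallyHolderOn γ (Ioi 0) φ) (hzero : IntegrableOn (fun r => r * φ r) (Ioo 0 1)) :
    ∃ v : E → ℝ, Continuous v ∧ (∀ x, 0 < v x) ∧
      ∀ x, Tendsto (fun n => W n x) atTop (𝓝 (v x)) := by
  have hφc := hφγ.continuousOn hγ
  have hWB n x : W n x ≤ B := (hW n).le_of_isSupersolution_of_le hu hB hE hK hne hp hφ hφc x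
  obtain ⟨v, hv⟩ := exists_tendsto hW hE hK hne hp hφ hφc
  have hvW x := hv x ⟨B, forall_mem_range.2 fun n => hWB n x⟩
  have hsol : IsSolution K p φ v := isSolution_of_tendsto hW hu hE hK hne hp hφ hγ hφγ
    (fun x _ => (hvW x).1) fun x _ => (hvW x).2
  refine ⟨v, continuous_iff_continuousAt.2 fun x => ?_, fun x => (hvW x).1, fun x => (hvW x).2⟩
  by_cases hx : x ∈ K
  · exact (tendsto_pi_nhds.2 fun y => (hvW y).2).continuousAt_of_equicontinuousAt
      (equicontinuousAt hW hE hK hp hφ hφc hzero hWB hx)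
  · exact hsol.contDiffOn.continuousOn.continuousAt (hK.isClosed.isOpen_compl.mem_nhds hx)

end IsRegularizedSolution

theorem statement_12_general (hE : 3 ≤ Module.finrank ℝ E) (hK : K.Finite) (hne : K.Nonempty)
    (hp : 0 ≤ p) (hγ : 0 < γ) (hφ : ∀ r, 0 < r → 0 < φ r)
    (hφγ : ∀ s, IsCompact s → s ⊆ Ioi 0 → ∃ C, HolderOnWith C γ φ s)
    (hinf : IntegrableOn (fun r => r * φ r) (Ioi 1))
    (hzero : IntegrableOn
      (fun r => r ^ ((1 + p) * ((Module.finrank ℝ E : ℝ) - 2) + 1) * φ r) (Ioo 0 1)) :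
    ∃ w : E → ℝ, ContDiffOn ℝ 2 w Kᶜ ∧
      (∀ x ∈ Kᶜ, 0 < w x ∧ -Δ w x = φ (infDist x K) * w x ^ (-p)) ∧
      Tendsto w (cocompact E) (𝓝 0) ∧
      (∀ u : E → ℝ, ContDiffOn ℝ 2 u Kᶜ →
        (∀ x ∈ Kᶜ, 0 < u x ∧ φ (infDist x K) * u x ^ (-p) ≤ -Δ u x) → ∀ x ∈ Kᶜ, w x ≤ u x) ∧
      ((∃ v : E → ℝ, Continuous v ∧ (∀ x, 0 < v x) ∧ ∀ x ∈ Kᶜ, v x = w x) ↔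
        IntegrableOn (fun r => r * φ r) (Ioo 0 1)) := by
  obtain ⟨m, hm⟩ := Nat.exists_eq_add_of_le' hE
  replace hφγ := locallyHolderOn_of_forall_isCompact isOpen_Ioi hφγ
  have hφc := hφγ.continuousOn hγ
  rw [hm, show ((m + 3 : ℕ) : ℝ) - 2 = m + 1 by push_cast; ring] at hzero
  choose W hW using exists_isRegularizedSolution hE hK hne hp hφ hφc
  obtain ⟨V, hV, hV0⟩ := exists_isSupersolution_tendsto hm hK hne hp hφ hφc hinf hzero
  obtain ⟨w, hw, hlim⟩ :=
    IsRegularizedSolution.exists_isSolution_tendsto hW hV hE hK hne hp hφ hγ hφγ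
  have hmin u (hu : IsSupersolution K p φ u) x (hx : x ∈ Kᶜ) : w x ≤ u x :=
    le_of_tendsto' (hlim x hx) fun n =>
      (hW n).le_of_isSupersolution hu hE hK hne hp hφ hφc x hx
  have hfar : ∀ᶠ x in cocompact E, x ∈ Kᶜ := hK.isCompact.compl_mem_cocompact
  refine ⟨w, hw.contDiffOn, fun x hx => ⟨hw.pos x hx, hw.neg_laplacian_eq x hx⟩,
    squeeze_zero' (hfar.mono fun x hx => (hw.pos x hx).le) (hfar.mono (hmin V hV)) hV0,
    fun u hu2 hu => hmin u ⟨hu2, fun x hx => (hu x hx).1, fun x hx => (hu x hx).2⟩,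
    fun ⟨v, hv, _, hvw⟩ =>
      (hw.congr hK hvw).integrableOn_of_continuous hv hE hK hne hp hφ hφc, fun hone => ?_⟩
  obtain ⟨V', hV', B, hB⟩ := exists_isSupersolution_le hm hK hne hp hφ hφc hinf hone
  obtain ⟨v, hv, hpos, hvlim⟩ :=
    IsRegularizedSolution.exists_continuous_tendsto hW hV' hB hE hK hne hp hφ hγ hφγ hone
  exact ⟨v, hv, hpos, fun x hx => tendsto_nhds_unique (hvlim x) (hlim x hx)⟩

end MinimalSolution

theorem laplacian_eq {N : ℕ} (u : EuclideanSpace ℝ (Fin N) → ℝ) : laplacian u = Δ u := by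
  ext x
  simp only [laplacian, EuclideanSpace.basisFun_apply,
    InnerProductSpace.laplacian_eq_iteratedFDeriv_orthonormalBasis u (EuclideanSpace.basisFun _ ℝ)]

end

/-- Theorem 4.1 (minimal solution part): under the integral conditions, there exists
a minimal ground-state solution, which extends continuously and positively to `ℝ^N`
iff `∫₀¹ r φ(r) dr < ∞`. -/
theorem statement_12 {N : ℕ} (hN : 3 ≤ N) (K : Set (EuclideanSpace ℝ (Fin N)))
    (hKfin : K.Finite) (hKne : K.Nonempty) (p : ℝ) (hp : 0 < p)
    (γ : NNReal) (hγ0 : 0 < γ) (hγ1 : γ < 1) (φ : ℝ → ℝ)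
    (hφpos : ∀ r : ℝ, 0 < r → 0 < φ r)
    (hφhold : ∀ s : Set ℝ, IsCompact s → s ⊆ Ioi (0:ℝ) → ∃ C : NNReal, HolderOnWith C γ φ s)
    (hmono : ∃ r₁ : ℝ, 0 < r₁ ∧ (MonotoneOn φ (Ici r₁) ∨ AntitoneOn φ (Ici r₁)))
    (hint1 : IntegrableOn (fun r : ℝ => r * φ r) (Ioi (1:ℝ)) volume)
    (hint2 : IntegrableOn (fun r : ℝ => r ^ ((1 + p) * ((N:ℝ) - 2) + 1) * φ r)
      (Ioo (0:ℝ) 1) volume) :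
    ∃ w : EuclideanSpace ℝ (Fin N) → ℝ,
      ContDiffOn ℝ 2 w Kᶜ ∧
      (∀ x ∈ Kᶜ, 0 < w x ∧ -laplacian w x = φ (infDist x K) * w x ^ (-p)) ∧
      Tendsto w (Filter.cocompact (EuclideanSpace ℝ (Fin N))) (nhds 0) ∧
      (∀ u : EuclideanSpace ℝ (Fin N) → ℝ,
        ContDiffOn ℝ 2 u Kᶜ →
        (∀ x ∈ Kᶜ, 0 < u x ∧ φ (infDist x K) * u x ^ (-p) ≤ -laplacian u x) →
        ∀ x ∈ Kᶜ, w x ≤ u x) ∧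
      ((∃ v : EuclideanSpace ℝ (Fin N) → ℝ, Continuous v ∧ (∀ x, 0 < v x) ∧
          ∀ x ∈ Kᶜ, v x = w x) ↔
        IntegrableOn (fun r : ℝ => r * φ r) (Ioo (0:ℝ) 1) volume) := by
  simpa only [laplacian_eq, finrank_euclideanSpace_fin] using
    statement_12_general (by rwa [finrank_euclideanSpace_fin]) hKfin hKne hp.le hγ0 hφpos hφhold
      hint1 (by rwa [finrank_euclideanSpace_fin])
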